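/- arXiv:0708.1711 — 8 statements merged into one kernel-verified Lean document; each statement's English description precedes it below -/
import Mathlib

section
/- Let F be an algebraically closed field of characteristic 0, let g be a finite-dimensional simple Lie algebra over F, let x ∈ g be a nonzero element, and let f_1, …, f_n be finitely many nonzero linear forms on g. Then there exists an automorphism σ of the Lie algebra g (an F-linear Lie algebra isomorphism g → g) such that f_i(σ(x)) ≠ 0 for all i ∈ {1, …, n}. -/
open Polynomial in
/-- `σ` is joined to the identity by a polynomial curve of automorphisms. -/
def Joined1 (F g : Type) [Field F] [LieRing g] [LieAlgebra F g] (σ : g ≃ₗ⁅F⁆ g) : Prop :=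
  ∃ (γ : F → (g ≃ₗ⁅F⁆ g)) (q : (Module.End F g)[X]),
    (∀ y, γ 0 y = y) ∧ (∀ y, γ 1 y = σ y) ∧
    ∀ t y, γ t y = q.eval (algebraMap F (Module.End F g) t) y

theorem Joined1.trans {F g : Type} [Field F] [LieRing g] [LieAlgebra F g] {σ τ : g ≃ₗ⁅F⁆ g}
    (hσ : Joined1 F g σ) (hτ : Joined1 F g τ) : Joined1 F g (σ.trans τ) := by
  obtain ⟨γ, q, h0, h1, h⟩ := hσ
  obtain ⟨γ', q', h0', h1', h'⟩ := hτ
  refine ⟨fun t => (γ t).trans (γ' t), q' * q, fun y => ?_, fun y => ?_, fun t y => ?_⟩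
  · simp [h0, h0']
  · simp [h1, h1']
  · have : (q' * q).eval (algebraMap F (Module.End F g) t)
        = q'.eval (algebraMap F (Module.End F g) t) * q.eval (algebraMap F (Module.End F g) t) :=
      Polynomial.eval₂_mul_noncomm _ _ fun k => (Algebra.commutes t _).symm
    rw [this]
    simp [h, h']

open Polynomial in
theorem eval_curve {F g : Type} [Field F] [AddCommGroup g] [Module F g]
    (q : (Module.End F g)[X]) (f : g →ₗ[F] F) (y : g) :
    ∃ p : F[X], (∀ t, p.eval t = f (q.eval (algebraMap F (Module.End F g) t) y)) ∧
      ∀ i, p.coeff i = f (q.coeff i y) := by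
  refine ⟨∑ i ∈ Finset.range (q.natDegree + 1), C (f (q.coeff i y)) * X ^ i, fun t => ?_, ?_⟩
  · rw [Polynomial.eval_eq_sum_range (p := q), Polynomial.eval_finsetSum, LinearMap.sum_apply, map_sum]
    refine Finset.sum_congr rfl fun i _ => ?_
    rw [← map_pow, Polynomial.eval_C_mul, Polynomial.eval_X_pow, Module.End.mul_apply,
      Module.algebraMap_end_apply, map_smul, map_smul, smul_eq_mul, mul_comm]
  · intro i
    simp only [finsetSum_coeff, coeff_C_mul, coeff_X_pow]
    simp only [mul_ite, mul_one, mul_zero, Finset.sum_ite_eq, Finset.mem_range]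
    split_ifs with h
    · rfl
    · rw [Polynomial.coeff_eq_zero_of_natDegree_lt (by omega)]; simp

open Polynomial in
theorem exp_curve {F g : Type} [Field F] [CharZero F] [LieRing g] [LieAlgebra F g] (n : g)
    (hn : IsNilpotent (LieAlgebra.ad F g n)) :
    ∃ (γ : F → (g ≃ₗ⁅F⁆ g)) (q : (Module.End F g)[X]),
      (∀ y, γ 0 y = y) ∧ (∀ t y, γ t y = q.eval (algebraMap F (Module.End F g) t) y) ∧
      (∀ y, q.coeff 1 y = ⁅n, y⁆) := by
  let _ : Algebra ℚ F := inferInstance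
  let _ : LieAlgebra ℚ g := LieAlgebra.RestrictScalars.lieAlgebra ℚ F g
  have hnt (t : F) : IsNilpotent (LieDerivation.ad F g (t • n)).toLinearMap := by
    have : (LieDerivation.ad F g (t • n)).toLinearMap = t • LieAlgebra.ad F g n := by
      ext y; simp
    rw [this]; exact hn.smul t
  have hD (t : F) : (LieDerivation.ad F g (t • n)).toLinearMap = t • LieAlgebra.ad F g n := by
    ext y; simp
  obtain ⟨m, hm⟩ := hn
  have hk : (LieAlgebra.ad F g n) ^ (m + 2) = 0 := pow_eq_zero_of_le (by omega) hm
  have key (t : F) (y : g) : LieDerivation.exp (LieDerivation.ad F g (t • n)) (hnt t) y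
      = ∑ i ∈ Finset.range (m + 2), (i.factorial : ℚ)⁻¹ • t ^ i • ((LieAlgebra.ad F g n) ^ i) y := by
    rw [LieDerivation.exp_map_apply, hD, IsNilpotent.exp_eq_sum (k := m + 2)
      (by rw [_root_.smul_pow, hk, smul_zero]), LinearMap.sum_apply]
    refine Finset.sum_congr rfl fun i _ => ?_
    rw [_root_.smul_pow]; rfl
  refine ⟨fun t => LieDerivation.exp (LieDerivation.ad F g (t • n)) (hnt t),
    ∑ i ∈ Finset.range (m + 2), C ((i.factorial : ℚ)⁻¹ • (LieAlgebra.ad F g n) ^ i) * X ^ i,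
    fun y => ?_, fun t y => ?_, fun y => ?_⟩
  · rw [key, Finset.sum_range_succ', Finset.sum_eq_zero (by intro i _; simp)]
    simp
  · rw [key, Polynomial.eval_finsetSum, LinearMap.sum_apply]
    refine Finset.sum_congr rfl fun i _ => ?_
    rw [Polynomial.eval_C_mul, Polynomial.eval_X_pow, ← map_pow (algebraMap F (Module.End F g)),
      Module.End.mul_apply,
      Module.algebraMap_end_apply, map_smul, LinearMap.smul_apply, smul_comm]
  · simp [finsetSum_coeff, coeff_X_pow]

theorem joined1_exp {F g : Type} [Field F] [CharZero F] [LieRing g] [LieAlgebra F g] (n : g)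
    (hn : IsNilpotent (LieAlgebra.ad F g n)) :
    ∃ (γ : F → (g ≃ₗ⁅F⁆ g)) (q : Polynomial (Module.End F g)),
      (∀ t, Joined1 F g (γ t)) ∧ (∀ t y, γ t y = q.eval (algebraMap F (Module.End F g) t) y) ∧
      (∀ y, q.coeff 1 y = ⁅n, y⁆) := by
  obtain ⟨γ, q, h0, h1, h2⟩ := exp_curve n hn
  refine ⟨γ, q, fun t => ?_, h1, h2⟩
  refine ⟨fun s => γ (s * t), ∑ i ∈ Finset.range (q.natDegree + 1),
    Polynomial.C (q.coeff i * (algebraMap F _ t) ^ i) * Polynomial.X ^ i, ?_, ?_, ?_⟩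
  · simp [h0]
  · simp
  · intro s y
    rw [h1]
    congr 1
    rw [Polynomial.eval_eq_sum_range (p := q), Polynomial.eval_finsetSum]
    refine Finset.sum_congr rfl fun i _ => ?_
    rw [Polynomial.eval_C_mul, Polynomial.eval_X_pow, mul_assoc, ← map_pow, ← map_pow, ← map_pow,
      ← map_mul, mul_pow, mul_comm]

theorem subalgebra_eq_top {F g : Type} [Field F] [IsAlgClosed F] [CharZero F]
    [LieRing g] [LieAlgebra F g] [FiniteDimensional F g] [LieAlgebra.IsSimple F g]
    (S : LieSubalgebra F g) (hS : ∀ n, IsNilpotent (LieAlgebra.ad F g n) → n ∈ S) : S = ⊤ := by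
  obtain ⟨x, hx⟩ := LieAlgebra.exists_isCartanSubalgebra_engel F g
  set H := LieSubalgebra.engel F x
  let s : Set g := {n | ∃ χ : H → F, χ ≠ 0 ∧ n ∈ LieAlgebra.rootSpace H χ}
  let T := LieSubalgebra.lieSpan F g s
  have hTS : T ≤ S := by
    refine LieSubalgebra.lieSpan_le.2 ?_
    rintro n ⟨χ, h0, h⟩
    exact hS n (LieAlgebra.isNilpotent_ad_of_mem_rootSpace H h0 h)
  have hHT : ∀ h ∈ H, ∀ y ∈ T, ⁅h, y⁆ ∈ T := by
    intro h hh y hy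
    induction hy using LieSubalgebra.lieSpan_induction with
    | mem y hy =>
      obtain ⟨χ, h0, hy⟩ := hy
      exact LieSubalgebra.subset_lieSpan ⟨χ, h0, LieSubmodule.lie_mem (x := (⟨h, hh⟩ : H)) _ hy⟩
    | zero => simp
    | add y z _ _ hy hz => rw [lie_add]; exact T.add_mem hy hz
    | smul c y _ hy => rw [lie_smul]; exact T.smul_mem c hy
    | lie y z hy' hz' hy hz =>
      rw [leibniz_lie]; exact T.add_mem (T.lie_mem hy hz') (T.lie_mem hy' hz)
  have hH0 : LieAlgebra.rootSpace H (0 : H → F) = H.toLieSubmodule :=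
    LieAlgebra.rootSpace_zero_eq F g H
  have htop := LieModule.iSup_genWeightSpace_eq_top F H g
  have hideal : ∀ z : g, ∀ y ∈ T, ⁅z, y⁆ ∈ T := by
    intro z y hy
    have hz : z ∈ ⨆ χ : H → F, LieModule.genWeightSpace g χ := by rw [htop]; trivial
    induction hz using LieSubmodule.iSup_induction' with
    | mem χ z hz =>
      by_cases h0 : χ = 0
      · subst h0
        have hz' : z ∈ H.toLieSubmodule := hH0 ▸ hz
        exact hHT z (by simpa using hz') y hy
      · exact T.lie_mem (LieSubalgebra.subset_lieSpan ⟨χ, h0, hz⟩) hy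
    | zero => simp
    | add a b _ _ ha hb => rw [add_lie]; exact T.add_mem ha hb
  let I : LieIdeal F g := { T.toSubmodule with lie_mem := fun {z y} hy => hideal z y hy }
  have hI : ∀ y, y ∈ I ↔ y ∈ T := fun y => Iff.rfl
  rcases LieAlgebra.IsSimple.eq_bot_or_eq_top (R := F) I with h | h
  · exfalso
    have hz : ∀ χ : H → F, χ ≠ 0 → LieModule.genWeightSpace g χ = ⊥ := by
      intro χ h0
      rw [eq_bot_iff]
      intro y hy
      have : y ∈ I := (hI y).2 (LieSubalgebra.subset_lieSpan ⟨χ, h0, hy⟩)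
      rw [h] at this
      simpa using this
    have hHtop : H = ⊤ := by
      rw [eq_top_iff]
      intro y _
      have : (⊤ : LieSubmodule F H g) ≤ H.toLieSubmodule := by
        rw [← htop]
        refine iSup_le fun χ => ?_
        by_cases h0 : χ = 0
        · subst h0; exact hH0.le
        · rw [hz χ h0]; exact bot_le
      simpa using this (LieSubmodule.mem_top y)
    have hnil : LieRing.IsNilpotent H := hx.nilpotent
    rw [hHtop] at hnil
    have : LieRing.IsNilpotent g :=
      (LieEquiv.nilpotent_iff_equiv_nilpotent (LieSubalgebra.topEquiv (R := F) (L := g))).1 hnil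
    have hsol : LieAlgebra.IsSolvable g := inferInstance
    apply LieAlgebra.IsSimple.non_abelian (R := F) (L := g)
    have hrad : (⊤ : LieIdeal F g) = ⊥ := LieAlgebra.HasTrivialRadical.eq_bot_of_isSolvable _
    refine ⟨fun a b => ?_⟩
    have ha : a ∈ (⊤ : LieIdeal F g) := LieSubmodule.mem_top a
    rw [hrad, LieSubmodule.mem_bot] at ha
    rw [ha, zero_lie]
  · rw [eq_top_iff]
    intro y _
    exact hTS ((hI y).1 (h ▸ LieSubmodule.mem_top y))

theorem exists_joined1_ne {F g : Type} [Field F] [IsAlgClosed F] [CharZero F]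
    [LieRing g] [LieAlgebra F g] [FiniteDimensional F g] [LieAlgebra.IsSimple F g]
    (x : g) (hx : x ≠ 0) (f : g →ₗ[F] F) (hf : f ≠ 0) :
    ∃ σ : g ≃ₗ⁅F⁆ g, Joined1 F g σ ∧ f (σ x) ≠ 0 := by
  by_contra! hcon
  let W : Submodule F g := Submodule.span F {y | ∃ σ : g ≃ₗ⁅F⁆ g, Joined1 F g σ ∧ y = σ x}
  have hone : Joined1 F g LieEquiv.refl :=
    ⟨fun _ => LieEquiv.refl, 1, by simp, by simp, by simp⟩
  have hxW : x ∈ W := Submodule.subset_span ⟨LieEquiv.refl, hone, by simp⟩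
  have hWf : W ≤ LinearMap.ker f := by
    refine Submodule.span_le.2 ?_
    rintro y ⟨σ, hσ, rfl⟩
    exact hcon σ hσ
  have hWσ : ∀ σ : g ≃ₗ⁅F⁆ g, Joined1 F g σ → ∀ w ∈ W, σ w ∈ W := by
    intro σ hσ w hw
    induction hw using Submodule.span_induction with
    | mem y hy =>
      obtain ⟨τ, hτ, rfl⟩ := hy
      exact Submodule.subset_span ⟨τ.trans σ, hτ.trans hσ, by simp⟩
    | zero => simp
    | add a b _ _ ha hb => rw [map_add]; exact W.add_mem ha hb
    | smul c a _ ha => rw [map_smul]; exact W.smul_mem c ha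
  have hWn : ∀ n, IsNilpotent (LieAlgebra.ad F g n) → ∀ w ∈ W, ⁅n, w⁆ ∈ W := by
    intro n hn w hw
    obtain ⟨γ, q, hγ, hq, hc⟩ := joined1_exp n hn
    by_contra hnot
    obtain ⟨φ, hφ, hφW⟩ := Submodule.exists_le_ker_of_notMem hnot
    obtain ⟨p, hp, hpc⟩ := eval_curve q φ w
    have hp0 : p = 0 := by
      refine Polynomial.funext fun t => ?_
      rw [hp, ← hq, Polynomial.eval_zero]
      exact hφW (hWσ _ (hγ t) w hw)
    apply hφ
    rw [← hc, ← hpc, hp0, Polynomial.coeff_zero]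
  let S : LieSubalgebra F g :=
    { carrier := {z | ∀ w ∈ W, ⁅z, w⁆ ∈ W}
      zero_mem' := by intro w _; simp
      add_mem' := by
        intro a b ha hb w hw
        rw [add_lie]; exact W.add_mem (ha w hw) (hb w hw)
      smul_mem' := by
        intro c a ha w hw
        rw [smul_lie]; exact W.smul_mem c (ha w hw)
      lie_mem' := by
        intro a b ha hb w hw
        rw [lie_lie]; exact W.sub_mem (ha _ (hb w hw)) (hb _ (ha w hw)) }
  have hStop : S = ⊤ := subalgebra_eq_top S hWn
  let I : LieIdeal F g := { W with
    lie_mem := fun {z y} hy => (show z ∈ S by rw [hStop]; trivial) y hy }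
  rcases LieAlgebra.IsSimple.eq_bot_or_eq_top (R := F) I with h | h
  · have : x ∈ I := hxW
    rw [h] at this
    exact hx (by simpa using this)
  · apply hf
    ext y
    have : y ∈ I := by rw [h]; trivial
    exact hWf this

theorem exists_joined1_all {F g : Type} [Field F] [IsAlgClosed F] [CharZero F]
    [LieRing g] [LieAlgebra F g] [FiniteDimensional F g] [LieAlgebra.IsSimple F g]
    (x : g) (hx : x ≠ 0) (n : ℕ) (f : Fin n → (g →ₗ[F] F)) (hf : ∀ i, f i ≠ 0) :
    ∃ σ : g ≃ₗ⁅F⁆ g, ∀ i, f i (σ x) ≠ 0 := by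
  induction n with
  | zero => exact ⟨LieEquiv.refl, fun i => i.elim0⟩
  | succ n ih =>
    obtain ⟨σ, hσ⟩ := ih (fun i => f i.succ) (fun i => hf _)
    have hσx : σ x ≠ 0 := by
      intro h; exact hx (σ.injective (by simpa using h))
    obtain ⟨τ, ⟨γ, q, h0, h1, hq⟩, hτ⟩ := exists_joined1_ne (σ x) hσx (f 0) (hf 0)
    choose p hp _ using fun i => eval_curve q (f i) (σ x)
    have hpne : ∀ i, p i ≠ 0 := by
      intro i
      refine Fin.cases ?_ (fun i => ?_) i
      · intro h
        apply hτ
        rw [← h1, hq, ← hp, h, Polynomial.eval_zero]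
      · intro h
        apply hσ i
        rw [← h0 (σ x), hq, ← hp, h, Polynomial.eval_zero]
    have hprod : ∏ i, p i ≠ 0 := Finset.prod_ne_zero_iff.2 fun i _ => hpne i
    obtain ⟨t, ht⟩ : ∃ t, (∏ i, p i).eval t ≠ 0 := by
      by_contra! h
      exact hprod (Polynomial.funext fun t => by simpa using h t)
    refine ⟨σ.trans (γ t), fun i => ?_⟩
    rw [Polynomial.eval_prod] at ht
    have := Finset.prod_ne_zero_iff.1 ht i (Finset.mem_univ i)
    rwa [hp, ← hq] at this


/-- Let `g` be a finite-dimensional simple Lie algebra over an algebraically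
closed field of characteristic 0, `x ≠ 0`, and `f₁, …, fₙ` nonzero linear forms on `g`.
Then some automorphism `σ` of `g` satisfies `fᵢ(σ x) ≠ 0` for all `i`. -/
theorem exists_automorphism_moving_off_kernels
    (F : Type) [Field F] [IsAlgClosed F] [CharZero F]
    (g : Type) [LieRing g] [LieAlgebra F g] [FiniteDimensional F g] [LieAlgebra.IsSimple F g]
    (x : g) (hx : x ≠ 0) (n : ℕ) (f : Fin n → (g →ₗ[F] F)) (hf : ∀ i, f i ≠ 0) :
    ∃ σ : g ≃ₗ⁅F⁆ g, ∀ i, f i (σ x) ≠ 0 := by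
  exact exists_joined1_all x hx n f hf
end

section
/- Let F be an algebraically closed field of characteristic 0 and let g be a finite-dimensional simple Lie algebra over F. Then g is generated by one and a half elements: for every nonzero x ∈ g there exists y ∈ g such that the smallest Lie subalgebra of g containing x and y is g itself. -/
set_option linter.unusedSectionVars false

namespace OneAndHalf

open LieAlgebra LieModule Module Polynomial

section Paths

variable {F : Type} [Field F] [CharZero F]
  {g : Type} [LieRing g] [LieAlgebra F g] [FiniteDimensional F g]

/-- A family of automorphisms whose matrix entries are polynomial in the parameter. -/
def PolyPath (u : F → (g ≃ₗ⁅F⁆ g)) : Prop :=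
  ∀ (f : Dual F g) (y : g), ∃ p : F[X], ∀ t, p.eval t = f (u t y)

/-- Automorphisms joined to the identity by a polynomial path. -/
def Good (σ : g ≃ₗ⁅F⁆ g) : Prop :=
  ∃ u : F → (g ≃ₗ⁅F⁆ g), PolyPath u ∧ (∀ y, u 0 y = y) ∧ (∀ y, u 1 y = σ y)

lemma PolyPath.comp {u v : F → (g ≃ₗ⁅F⁆ g)} (hu : PolyPath u) (hv : PolyPath v) :
    PolyPath (fun t => (v t).trans (u t)) := by
  intro f y
  let b := Module.finBasis F g
  choose p hp using fun i => hu f (b i)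
  choose q hq using fun i => hv (b.coord i) y
  refine ⟨∑ i, q i * p i, fun t => ?_⟩
  have h : v t y = ∑ i, (q i).eval t • b i := by
    conv_lhs => rw [← b.sum_repr (v t y)]
    refine Finset.sum_congr rfl fun i _ => ?_
    rw [hq]; rfl
  rw [LieEquiv.trans_apply, h, map_sum, map_sum, eval_finsetSum]
  refine Finset.sum_congr rfl fun i _ => ?_
  rw [map_smul, map_smul, eval_mul, hp, smul_eq_mul]

lemma PolyPath.reparam {u : F → (g ≃ₗ⁅F⁆ g)} (hu : PolyPath u) (r : F[X]) :
    PolyPath (fun t => u (r.eval t)) := by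
  intro f y
  obtain ⟨p, hp⟩ := hu f y
  exact ⟨p.comp r, fun t => by rw [eval_comp, hp]⟩

lemma Good.refl : Good (LieEquiv.refl : g ≃ₗ⁅F⁆ g) :=
  ⟨fun _ => LieEquiv.refl, fun f y => ⟨C (f y), fun t => by simp⟩, fun _ => rfl, fun _ => rfl⟩

lemma Good.trans {σ τ : g ≃ₗ⁅F⁆ g} (hσ : Good σ) (hτ : Good τ) : Good (σ.trans τ) := by
  obtain ⟨u, hu, hu0, hu1⟩ := hσ
  obtain ⟨v, hv, hv0, hv1⟩ := hτ
  refine ⟨_, hv.comp hu, fun y => ?_, fun y => ?_⟩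
  · simp [hu0, hv0]
  · simp [hu1, hv1]

/-- Simultaneous non-vanishing. -/
lemma exists_good_forall_ne_zero {ι : Type} (x : g) (f : ι → Dual F g)
    (h : ∀ i, ∃ σ : g ≃ₗ⁅F⁆ g, Good σ ∧ f i (σ x) ≠ 0) (s : Finset ι) :
    ∃ σ : g ≃ₗ⁅F⁆ g, Good σ ∧ ∀ i ∈ s, f i (σ x) ≠ 0 := by
  classical
  induction s using Finset.induction_on with
  | empty => exact ⟨_, Good.refl, by simp⟩
  | insert j s hj ih =>
    obtain ⟨σ, ⟨u, hu, hu0, hu1⟩, hσ⟩ := ih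
    obtain ⟨τ, ⟨v, hv, hv0, hv1⟩, hτ⟩ := h j
    have hw := (hu.reparam (1 - X)).comp (hv.reparam X)
    choose p hp using fun i => hw (f i) x
    have hne : ∀ i ∈ insert j s, p i ≠ 0 := by
      intro i hi h0
      rcases Finset.mem_insert.1 hi with rfl | hi
      · have := hp i 1
        rw [h0] at this
        simp [hu0, hv1] at this
        exact hτ this.symm
      · have := hp i 0
        rw [h0] at this
        simp [hu1, hv0] at this
        exact hσ i hi this.symm
    have hP : ∏ i ∈ insert j s, p i ≠ 0 := Finset.prod_ne_zero_iff.2 hne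
    obtain ⟨t, ht⟩ : ∃ t, (∏ i ∈ insert j s, p i).eval t ≠ 0 := by
      by_contra! hc
      exact hP (Polynomial.funext fun t => by simp [hc t])
    rw [eval_prod, Finset.prod_ne_zero_iff] at ht
    refine ⟨(v t).trans (u (1 - t)), ?_, fun i hi => ?_⟩
    · refine ⟨_, (hu.reparam (C (1 - t) * X)).comp (hv.reparam (C t * X)), fun y => ?_, fun y => ?_⟩
      · simp [hu0, hv0]
      · simp
    · have := ht i hi
      rw [hp] at this
      simpa using this

lemma exists_exp (e : g) (he : IsNilpotent (ad F g e)) :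
    ∃ (u : F → (g ≃ₗ⁅F⁆ g)) (k : ℕ), 1 < k ∧ ∀ t y,
      u t y = ∑ i ∈ Finset.range k, ((i.factorial : F)⁻¹ * t ^ i) • ((ad F g e) ^ i) y := by
  let : Module ℚ g := Module.compHom g (algebraMap ℚ F)
  have hsm : ∀ (q : ℚ) (y : g), q • y = (q : F) • y := fun q y => rfl
  let : LieAlgebra ℚ g := { lie_smul := fun q x y => by rw [hsm, hsm, lie_smul] }
  obtain ⟨k, hk⟩ := he
  have hD : ∀ t : F, (LieDerivation.ad F g (t • e)).toLinearMap = t • ad F g e := by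
    intro t; ext y; simp
  have hk2 : ∀ t : F, (t • ad F g e) ^ (k + 2) = 0 := by
    intro t; rw [_root_.smul_pow, pow_add (ad F g e), hk]; simp
  have hn : ∀ t : F, IsNilpotent (LieDerivation.ad F g (t • e)).toLinearMap := fun t =>
    ⟨k + 2, by rw [hD, hk2]⟩
  refine ⟨fun t => LieDerivation.exp _ (hn t), k + 2, by omega, fun t y => ?_⟩
  rw [LieDerivation.exp_map_apply, hD, IsNilpotent.exp_eq_sum (hk2 t), LinearMap.sum_apply]
  refine Finset.sum_congr rfl fun i _ => ?_
  rw [LinearMap.smul_apply, hsm, _root_.smul_pow, LinearMap.smul_apply, smul_smul]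
  simp

/-- The span of the orbit. -/
def orbitSpan (x : g) : Submodule F g := Submodule.span F {y | ∃ σ : g ≃ₗ⁅F⁆ g, Good σ ∧ σ x = y}

lemma orbitSpan_map (x : g) {σ : g ≃ₗ⁅F⁆ g} (hσ : Good σ) {w : g} (hw : w ∈ orbitSpan (F := F) x) :
    σ w ∈ orbitSpan (F := F) x := by
  unfold orbitSpan at hw
  induction hw using Submodule.span_induction with
  | mem y hy =>
    obtain ⟨τ, hτ, rfl⟩ := hy
    exact Submodule.subset_span ⟨τ.trans σ, hτ.trans hσ, rfl⟩
  | zero => rw [map_zero]; exact zero_mem _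
  | add a b _ _ ha hb => rw [map_add]; exact add_mem ha hb
  | smul c a _ ha => rw [map_smul]; exact Submodule.smul_mem _ _ ha

lemma lie_mem_orbitSpan (x : g) {e : g} (he : IsNilpotent (ad F g e)) {w : g}
    (hw : w ∈ orbitSpan (F := F) x) : ⁅e, w⁆ ∈ orbitSpan (F := F) x := by
  obtain ⟨u, k, hk, hu⟩ := exists_exp e he
  let P (f : Dual F g) (y : g) : F[X] :=
    ∑ i ∈ Finset.range k, C ((i.factorial : F)⁻¹ * f (((ad F g e) ^ i) y)) * X ^ i
  have hP : ∀ f y t, (P f y).eval t = f (u t y) := by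
    intro f y t
    rw [hu, map_sum, eval_finsetSum]
    refine Finset.sum_congr rfl fun i _ => ?_
    simp
    ring
  have hpath : PolyPath u := fun f y => ⟨P f y, hP f y⟩
  have hu0 : ∀ y, u 0 y = y := by
    intro y
    rw [hu, Finset.sum_eq_single_of_mem 0 (by simp; omega)]
    · simp
    · intro i _ hi; simp [hi]
  have hgood : ∀ t, Good (u t) := fun t =>
    ⟨_, hpath.reparam (C t * X), fun y => by simp [hu0], fun y => by simp⟩
  by_contra hc
  obtain ⟨f, hf1, hf2⟩ := Submodule.exists_le_ker_of_notMem hc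
  have h0 : P f w = 0 := Polynomial.funext fun t => by
    rw [hP, eval_zero]
    exact hf2 (orbitSpan_map x (hgood t) hw)
  have h1 : (P f w).coeff 1 = f ⁅e, w⁆ := by
    simp only [P, finsetSum_coeff, coeff_C_mul, coeff_X_pow]
    rw [Finset.sum_eq_single_of_mem 1 (by simpa using hk)]
    · simp
    · intro i _ hi; simp [hi.symm]
  rw [h0, coeff_zero] at h1
  exact hf1 h1.symm

end Paths

section Roots

variable {F : Type} [Field F] [IsAlgClosed F] [CharZero F]
  {g : Type} [LieRing g] [LieAlgebra F g] [FiniteDimensional F g] [IsKilling F g]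
  (H : LieSubalgebra F g) [H.IsCartanSubalgebra]

lemma exists_decomp (x : g) :
    ∃ v : Weight F H g → g, (∀ β : Weight F H g, v β ∈ rootSpace H β) ∧ ∑ β, v β = x := by
  classical
  have hx : x ∈ ⨆ β : Weight F H g, rootSpace H β := by
    simp [iSup_genWeightSpace_eq_top' F H g]
  induction hx using LieSubmodule.iSup_induction' with
  | mem β y hy =>
    refine ⟨Pi.single β y, fun γ => ?_, by simp⟩
    by_cases h : γ = β
    · subst h; simpa using hy
    · simp [h]
  | zero => exact ⟨0, by simp, by simp⟩
  | add a b _ _ ha hb =>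
    obtain ⟨v, hv, rfl⟩ := ha
    obtain ⟨w, hw, rfl⟩ := hb
    exact ⟨v + w, fun β => add_mem (hv β) (hw β), by simp [Finset.sum_add_distrib]⟩

lemma eq_top_of_rootSpace_le (K : LieSubalgebra F g)
    (h : ∀ α : Weight F H g, α.IsNonZero → ∀ z ∈ rootSpace H α, z ∈ K) : K = ⊤ := by
  have hH : ∀ z : H, (z : g) ∈ K := by
    intro z
    have hz : z ∈ Submodule.span F (Set.range (IsKilling.rootSystem H).coroot) := by
      rw [RootPairing.IsRootSystem.span_coroot_eq_top]; trivial
    induction hz using Submodule.span_induction with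
    | mem y hy =>
      obtain ⟨α, rfl⟩ := hy
      have hα : (α : Weight F H g).IsNonZero := LieSubalgebra.isNonZero_coe_root α
      obtain ⟨c, e, f, ht, he, hf⟩ := IsKilling.exists_isSl2Triple_of_weight_isNonZero hα
      have := ht.h_eq_coroot hα he hf
      change ((IsKilling.coroot (α : Weight F H g) : H) : g) ∈ K
      rw [← this, ← ht.lie_e_f]
      exact K.lie_mem (h _ hα _ he) (h (-α) (by simpa using hα) _ hf)
    | zero => exact K.zero_mem
    | add a b _ _ ha hb => exact K.add_mem ha hb
    | smul c a _ ha => exact K.smul_mem c ha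
  rw [eq_top_iff]
  intro x _
  obtain ⟨v, hv, rfl⟩ := exists_decomp H x
  refine sum_mem fun β _ => ?_
  by_cases hβ : β.IsZero
  · have := hv β
    rw [hβ] at this
    have h2 : v β ∈ H := by simpa using this
    exact hH ⟨_, h2⟩
  · exact h β hβ _ (hv β)

lemma exists_regular : ∃ h : H, ∀ α β : Weight F H g, α ≠ β → α h ≠ β h := by
  obtain ⟨h, hh⟩ := Module.Dual.exists_forall_ne_zero_of_forall_exists
    (K := F) (M := H) (ι := {p : Weight F H g × Weight F H g // p.1 ≠ p.2})
    (fun p => p.1.1.toLinear - p.1.2.toLinear) (by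
      rintro ⟨⟨α, β⟩, hne⟩
      by_contra! hc
      refine hne (Weight.ext fun y => ?_)
      simpa [sub_eq_zero] using hc y)
  refine ⟨h, fun α β hne heq => hh ⟨(α, β), hne⟩ ?_⟩
  simp [heq]

lemma component_mem (K : LieSubalgebra F g) (h : H) (hK : (h : g) ∈ K)
    (hreg : ∀ α β : Weight F H g, α ≠ β → α h ≠ β h)
    (v : Weight F H g → g) (hv : ∀ β : Weight F H g, v β ∈ rootSpace H β) (hx : ∑ β, v β ∈ K)
    (α : Weight F H g) : v α ∈ K := by
  classical
  let P : F[X] := ∏ β ∈ Finset.univ.erase α, (X - C (β h))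
  have hPK : ∀ (p : F[X]) (y : g), y ∈ K → aeval (ad F g h) p y ∈ K := by
    intro p
    induction p using Polynomial.induction_on' with
    | add p q hp hq => intro y hy; simpa using K.add_mem (hp y hy) (hq y hy)
    | monomial n a =>
      intro y hy
      rw [aeval_monomial]
      have : ∀ n, ((ad F g h) ^ n) y ∈ K := by
        intro n
        induction n with
        | zero => simpa using hy
        | succ n ih => rw [pow_succ', Module.End.mul_apply]; exact K.lie_mem hK ih
      simpa [Module.algebraMap_end_apply] using K.smul_mem a (this n)
  have hev : ∀ β, aeval (ad F g h) P (v β) = P.eval (β h) • v β := fun β =>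
    Module.End.aeval_apply_of_mem_apply_eq_smul
      (by simpa using IsKilling.lie_eq_smul_of_mem_rootSpace (hv β) h)
  have h1 := hPK P _ hx
  rw [map_sum, Finset.sum_eq_single_of_mem α (Finset.mem_univ _), hev] at h1
  · have h2 : P.eval (α h) ≠ 0 := by
      rw [eval_prod, Finset.prod_ne_zero_iff]
      intro β hβ
      simpa [sub_eq_zero] using hreg α β (Finset.ne_of_mem_erase hβ).symm
    have := K.smul_mem (P.eval (α h))⁻¹ h1
    rwa [smul_smul, inv_mul_cancel₀ h2, one_smul] at this
  · intro β _ hβ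
    rw [hev]
    have : P.eval (β h) = 0 := by
      rw [eval_prod]
      exact Finset.prod_eq_zero (Finset.mem_erase.2 ⟨hβ, Finset.mem_univ _⟩) (by simp)
    rw [this, zero_smul]

lemma exists_dual (α : Weight F H g) : ∃ f : Dual F g, f ≠ 0 ∧
    ∀ β : Weight F H g, β ≠ α → ∀ z ∈ rootSpace H β, f z = 0 := by
  obtain ⟨e, heα, he₀⟩ := (-α).exists_ne_zero
  refine ⟨killingForm F g e, fun h => he₀ ?_, fun β hβ z hz => ?_⟩
  · have : e ∈ LinearMap.ker (killingForm F g) := h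
    simpa using this
  · refine killingForm_apply_eq_zero_of_mem_rootSpace_of_add_ne_zero F g H heα hz ?_
    intro h
    apply hβ
    ext y
    have := congrFun h y
    simp at this
    linear_combination this

end Roots

end OneAndHalf

open OneAndHalf LieAlgebra LieModule in
/-- A finite-dimensional simple Lie algebra over an algebraically closed field of
characteristic 0 is generated by one and a half elements. -/
theorem simple_lieAlgebra_generated_by_one_and_a_half_elements
    (F : Type) [Field F] [IsAlgClosed F] [CharZero F]
    (g : Type) [LieRing g] [LieAlgebra F g] [FiniteDimensional F g] [LieAlgebra.IsSimple F g] :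
    ∀ x : g, x ≠ 0 → ∃ y : g, LieSubalgebra.lieSpan F g {x, y} = ⊤ := by
  intro x hx
  have : IsKilling F g := inferInstance
  obtain ⟨r, hr⟩ := LieAlgebra.exists_isCartanSubalgebra_engel F g
  set H : LieSubalgebra F g := LieSubalgebra.engel F r
  have hW : orbitSpan (F := F) x = ⊤ := by
    let N : LieSubalgebra F g :=
      { carrier := {z | ∀ w ∈ orbitSpan (F := F) x, ⁅z, w⁆ ∈ orbitSpan (F := F) x}
        add_mem' := fun {a b} ha hb w hw => by
          rw [add_lie]; exact add_mem (ha w hw) (hb w hw)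
        zero_mem' := fun w _ => by rw [zero_lie]; exact zero_mem _
        smul_mem' := fun c a ha w hw => by
          rw [smul_lie]; exact Submodule.smul_mem _ _ (ha w hw)
        lie_mem' := fun {a b} ha hb w hw => by
          rw [lie_lie]; exact sub_mem (ha _ (hb w hw)) (hb _ (ha w hw)) }
    have hN : N = ⊤ := eq_top_of_rootSpace_le H N fun α hα z hz w hw =>
      lie_mem_orbitSpan x
        (isNilpotent_ad_of_mem_rootSpace H (fun h => hα h) hz) hw
    let I : LieIdeal F g :=
      { orbitSpan (F := F) x with
        lie_mem := fun {z w} hw => by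
          have hz : z ∈ N := by rw [hN]; trivial
          exact hz w hw }
    have hxI : x ∈ I := Submodule.subset_span ⟨_, Good.refl, rfl⟩
    rcases LieAlgebra.IsSimple.eq_bot_or_eq_top (R := F) I with h | h
    · rw [h] at hxI
      exact absurd (by simpa using hxI) hx
    · rw [eq_top_iff]
      intro z _
      have : z ∈ I := by rw [h]; trivial
      exact this
  choose f hf0 hf using exists_dual H
  obtain ⟨σ, -, hσ⟩ := exists_good_forall_ne_zero x f (fun α => by
    by_contra! hc
    refine hf0 α (LinearMap.ker_eq_top.1 (eq_top_iff.2 (hW ▸ Submodule.span_le.2 ?_)))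
    rintro _ ⟨τ, hτ, rfl⟩
    exact hc τ hτ) Finset.univ
  obtain ⟨h, hh⟩ := exists_regular H
  refine ⟨σ.symm h, ?_⟩
  set K := LieSubalgebra.lieSpan F g {x, σ.symm (h : g)}
  have hxK : x ∈ K := LieSubalgebra.subset_lieSpan (by simp)
  have hyK : σ.symm (h : g) ∈ K := LieSubalgebra.subset_lieSpan (by simp)
  let K' : LieSubalgebra F g := K.comap (σ.symm : g →ₗ⁅F⁆ g)
  have hmem : ∀ z, z ∈ K' ↔ σ.symm z ∈ K := fun z => Iff.rfl
  have hK' : K' = ⊤ := by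
    refine eq_top_of_rootSpace_le H K' fun α hα z hz => ?_
    obtain ⟨v, hv, hvx⟩ := exists_decomp H (σ x)
    have hvα : v α ∈ K' := component_mem H K' h hyK hh v hv
      (by rw [hvx, hmem]; simpa using hxK) α
    have hne : v α ≠ 0 := by
      intro h0
      apply hσ α (Finset.mem_univ _)
      rw [← hvx, map_sum]
      refine Finset.sum_eq_zero fun β _ => ?_
      by_cases hβ : β = α
      · rw [hβ, h0, map_zero]
      · exact hf α β hβ _ (hv β)
    obtain ⟨c, hc⟩ := (finrank_eq_one_iff_of_nonzero' (⟨v α, hv α⟩ : rootSpace H α)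
      (by simpa using hne)).1 (IsKilling.finrank_rootSpace_eq_one α hα) ⟨z, hz⟩
    have hc' : c • v α = z := congrArg Subtype.val hc
    rw [← hc']
    exact K'.smul_mem c hvα
  rw [eq_top_iff]
  intro z _
  have : σ z ∈ K' := by rw [hK']; trivial
  simpa using (hmem _).1 this
end

section
/- Let F be an algebraically closed field of characteristic 0, let ι be a finite (nonempty) index type, and let (g_k)_{k ∈ ι} be a family of finite-dimensional simple Lie algebras over F. Let g = Π_{k ∈ ι} g_k be their direct product with componentwise bracket, and let π_k : g → g_k denote the projections. Then for every x ∈ g such that π_k(x) ≠ 0 for all k ∈ ι, there exists y ∈ g such that the smallest Lie subalgebra of g containing x and y is g itself. -/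
/-- The componentwise Lie ring structure on a direct product of Lie rings. -/
instance Pi.instLieRing {ι : Type} {g : ι → Type} [∀ i, LieRing (g i)] :
    LieRing (∀ i, g i) :=
  { (inferInstance : AddCommGroup (∀ i, g i)) with
    bracket := fun x y i => ⁅x i, y i⁆
    add_lie := fun x y z => funext fun i => add_lie (x i) (y i) (z i)
    lie_add := fun x y z => funext fun i => lie_add (x i) (y i) (z i)
    lie_self := fun x => funext fun i => lie_self (x i)
    leibniz_lie := fun x y z => funext fun i => leibniz_lie (x i) (y i) (z i) }

/-- The componentwise Lie algebra structure on a direct product of Lie algebras. -/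
instance Pi.instLieAlgebra {F : Type} [CommRing F] {ι : Type} {g : ι → Type}
    [∀ i, LieRing (g i)] [∀ i, LieAlgebra F (g i)] : LieAlgebra F (∀ i, g i) where
  lie_smul c x y := funext fun i => lie_smul c (x i) (y i)

section OneAndAHalf

open Polynomial LieAlgebra LieModule

/-- A polynomial one-parameter family of automorphisms with derivative `ad e` at zero. -/
def OneParam {F L : Type*} [Field F] [LieRing L] [LieAlgebra F L]
    (e : L) (Φ : F → (L ≃ₗ⁅F⁆ L)) : Prop :=
  (∀ w, Φ 0 w = w) ∧ ∀ (g : Module.Dual F L) (w : L), ∃ p : F[X],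
    (∀ s, g (Φ s w) = p.eval s) ∧ p.coeff 1 = g ⁅e, w⁆

lemma exists_oneParam {F L : Type*} [Field F] [CharZero F] [LieRing L] [LieAlgebra F L]
    (e : L) (he : _root_.IsNilpotent (ad F L e)) :
    ∃ Φ : F → (L ≃ₗ⁅F⁆ L), OneParam e Φ := by
  let _i1 : Module ℚ L := Module.compHom L (algebraMap ℚ F)
  let _i2 : LieAlgebra ℚ L := { lie_smul := fun c x y => lie_smul (algebraMap ℚ F c) x y }
  have hsm : ∀ (q : ℚ) (v : L), q • v = (q : F) • v := fun q v => rfl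
  obtain ⟨k, hk⟩ := he
  have hD : ∀ s : F, (LieDerivation.ad F L (s • e)).toLinearMap = s • ad F L e := by
    intro s
    ext w
    simp
  have hpow : ∀ s : F, (LieDerivation.ad F L (s • e)).toLinearMap ^ (k + 2) = 0 := by
    intro s
    rw [hD, _root_.smul_pow, pow_add (ad F L e), hk, zero_mul, smul_zero]
  have hnil : ∀ s : F, _root_.IsNilpotent (LieDerivation.ad F L (s • e)).toLinearMap :=
    fun s => ⟨k + 2, hpow s⟩
  have hexp : ∀ (s : F) (w : L),
      LieDerivation.exp (LieDerivation.ad F L (s • e)) (hnil s) w =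
        ∑ i ∈ Finset.range (k + 2), ((i.factorial : F)⁻¹ * s ^ i) • ((ad F L e ^ i) w) := by
    intro s w
    change IsNilpotent.exp (LieDerivation.ad F L (s • e)).toLinearMap w = _
    rw [IsNilpotent.exp_eq_sum (hpow s), LinearMap.sum_apply]
    refine Finset.sum_congr rfl fun i _ => ?_
    rw [LinearMap.smul_apply, hsm, hD, _root_.smul_pow, LinearMap.smul_apply, smul_smul]
    simp
  refine ⟨fun s => LieDerivation.exp (LieDerivation.ad F L (s • e)) (hnil s), ?_, ?_⟩
  · intro w
    rw [hexp, Finset.sum_eq_single 0]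
    · simp
    · intro b _ hb
      simp [hb]
    · simp
  · intro g w
    refine ⟨∑ i ∈ Finset.range (k + 2), C ((i.factorial : F)⁻¹ * g ((ad F L e ^ i) w)) * X ^ i,
      ?_, ?_⟩
    · intro s
      rw [hexp, map_sum, eval_finsetSum]
      refine Finset.sum_congr rfl fun i _ => ?_
      simp
      ring
    · rw [finsetSum_coeff, Finset.sum_eq_single 1]
      · simp
      · intro b _ hb
        rw [coeff_C_mul, coeff_X_pow, if_neg (Ne.symm hb), mul_zero]
      · simp

/-- Automorphisms reachable from the identity through one-parameter families. -/
inductive Reach {F L : Type*} [Field F] [LieRing L] [LieAlgebra F L] : (L ≃ₗ⁅F⁆ L) → Prop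
  | refl : Reach LieEquiv.refl
  | step (φ : L ≃ₗ⁅F⁆ L) (e : L) (Φ : F → (L ≃ₗ⁅F⁆ L)) (hΦ : OneParam e Φ) (s : F) :
      Reach φ → Reach (φ.trans (Φ s))

lemma Reach.trans {F L : Type*} [Field F] [LieRing L] [LieAlgebra F L] {φ ψ : L ≃ₗ⁅F⁆ L}
    (hφ : Reach φ) (hψ : Reach ψ) : Reach (φ.trans ψ) := by
  induction hψ with
  | refl => exact hφ
  | step ψ e Φ hΦ s _ ih => exact Reach.step _ e Φ hΦ s ih

/-- Functions that are polynomial along one-parameter families. -/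
def PolyLike {F L : Type*} [Field F] [LieRing L] [LieAlgebra F L] (f : L → F) : Prop :=
  ∀ (e : L) (Φ : F → (L ≃ₗ⁅F⁆ L)), OneParam e Φ → ∀ w, ∃ p : F[X], ∀ s, f (Φ s w) = p.eval s

lemma polyLike_prod {F L ι : Type*} [Field F] [LieRing L] [LieAlgebra F L] (t : Finset ι)
    (g : ι → Module.Dual F L) : PolyLike (F := F) (fun w : L => ∏ i ∈ t, g i w) := by
  intro e Φ hΦ w
  choose p hp _ using fun i => hΦ.2 (g i) w
  exact ⟨∏ i ∈ t, p i, fun s => by simp [eval_prod, hp]⟩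

lemma reach_two {F L : Type*} [Field F] [Infinite F] [LieRing L] [LieAlgebra F L]
    (f : L → F) (hf : PolyLike (F := F) f) (v : L) (hv : f v ≠ 0) (φ : L ≃ₗ⁅F⁆ L) (hφ : Reach φ) :
    ∀ g : Module.Dual F L, g (φ v) ≠ 0 →
      ∃ ψ : L ≃ₗ⁅F⁆ L, Reach ψ ∧ f (ψ v) ≠ 0 ∧ g (ψ v) ≠ 0 := by
  induction hφ with
  | refl => intro g hg; exact ⟨LieEquiv.refl, Reach.refl, hv, hg⟩
  | step φ e Φ hΦ s _ ih =>
    intro g hg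
    obtain ⟨ψ, hψ, h1, h2⟩ := ih (g ∘ₗ ((Φ s : L →ₗ⁅F⁆ L) : L →ₗ[F] L)) hg
    obtain ⟨p, hp⟩ := hf e Φ hΦ (ψ v)
    obtain ⟨q, hq, -⟩ := hΦ.2 g (ψ v)
    have hp0 : p ≠ 0 := by
      rintro rfl
      apply h1
      have := hp 0
      rw [hΦ.1] at this
      simpa using this
    have hq0 : q ≠ 0 := by
      rintro rfl
      apply h2
      have := hq s
      simpa using this
    obtain ⟨r, hr⟩ : ∃ r, (p * q).eval r ≠ 0 := by
      by_contra! h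
      exact mul_ne_zero hp0 hq0 (Polynomial.funext fun r => by simpa using h r)
    rw [eval_mul] at hr
    refine ⟨ψ.trans (Φ r), Reach.step _ e Φ hΦ r hψ, ?_, ?_⟩
    · change f (Φ r (ψ v)) ≠ 0
      rw [hp]; exact left_ne_zero_of_mul hr
    · change g (Φ r (ψ v)) ≠ 0
      rw [hq]; exact right_ne_zero_of_mul hr

section Killing

variable {F L : Type*} [Field F] [CharZero F] [IsAlgClosed F] [LieRing L] [LieAlgebra F L]
  [FiniteDimensional F L] [IsKilling F L] (H : LieSubalgebra F L) [H.IsCartanSubalgebra]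

lemma eq_top_of_rootSpace_le (S : LieSubalgebra F L)
    (hS : ∀ α : Weight F H L, α.IsNonZero → ∀ e ∈ rootSpace H α, e ∈ S) : S = ⊤ := by
  have hcor : ∀ h : H, (h : L) ∈ S := by
    intro h
    have hh : h ∈ (⨆ α : Weight F H L, ⨆ (_ : α.IsNonZero), corootSpace α : LieIdeal F H) := by
      rw [IsKilling.biSup_corootSpace_eq_top]; trivial
    have hle : (⨆ α : Weight F H L, ⨆ (_ : α.IsNonZero), corootSpace α : LieIdeal F H).toSubmodule
        ≤ S.toSubmodule.comap H.toSubmodule.subtype := by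
      rw [LieSubmodule.iSup_toSubmodule, iSup_le_iff]
      intro α
      rw [LieSubmodule.iSup_toSubmodule, iSup_le_iff]
      intro hα z hz
      rw [LieSubmodule.mem_toSubmodule, mem_corootSpace] at hz
      change (z : L) ∈ S.toSubmodule
      refine Submodule.span_le.2 ?_ hz
      rintro _ ⟨y, hy, w, hw, rfl⟩
      exact S.lie_mem (hS α hα y hy) (hS (-α) hα.neg w hw)
    exact hle hh
  rw [eq_top_iff]
  intro z _
  have hz : z ∈ H.toLieSubmodule ⊔ ⨆ α : Weight F H L, ⨆ (_ : α.IsNonZero), rootSpace H α := by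
    rw [cartan_sup_iSup_rootSpace_eq_top]; trivial
  have hle : (H.toLieSubmodule ⊔
      ⨆ α : Weight F H L, ⨆ (_ : α.IsNonZero), rootSpace H α).toSubmodule ≤ S.toSubmodule := by
    rw [LieSubmodule.sup_toSubmodule, sup_le_iff]
    refine ⟨fun y hy => hcor ⟨y, hy⟩, ?_⟩
    rw [LieSubmodule.iSup_toSubmodule, iSup_le_iff]
    intro α
    rw [LieSubmodule.iSup_toSubmodule, iSup_le_iff]
    intro hα z hz
    exact hS α hα z hz
  exact hle hz

/-- A nonzero functional does not vanish on the orbit of an element lying in no proper ideal. -/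
lemma exists_reach_ne_zero (v : L) (hv : ∀ I : LieIdeal F L, v ∈ I → I = ⊤)
    (g : Module.Dual F L) (hg : g ≠ 0) : ∃ φ : L ≃ₗ⁅F⁆ L, Reach φ ∧ g (φ v) ≠ 0 := by
  obtain ⟨x, hx⟩ := LieAlgebra.exists_isCartanSubalgebra_engel F L
  set H := LieSubalgebra.engel F x
  by_contra! hcon
  let W : Submodule F L :=
    { carrier := {w | ∀ f : Module.Dual F L, (∀ φ : L ≃ₗ⁅F⁆ L, Reach φ → f (φ v) = 0) → f w = 0}
      add_mem' := fun {a b} ha hb f hf => by rw [map_add, ha f hf, hb f hf, add_zero]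
      zero_mem' := fun f _ => map_zero f
      smul_mem' := fun c a ha f hf => by rw [map_smul, ha f hf, smul_zero] }
  let N : LieSubalgebra F L :=
    { carrier := {y | ∀ w ∈ W, ⁅y, w⁆ ∈ W}
      add_mem' := fun {a b} ha hb w hw => by rw [add_lie]; exact W.add_mem (ha w hw) (hb w hw)
      zero_mem' := fun w _ => by rw [zero_lie]; exact W.zero_mem
      smul_mem' := fun c a ha w hw => by rw [smul_lie]; exact W.smul_mem c (ha w hw)
      lie_mem' := fun {a b} ha hb w hw => by
        rw [lie_lie]
        exact W.sub_mem (ha _ (hb w hw)) (hb _ (ha w hw)) }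
  have hN : N = ⊤ := by
    apply eq_top_of_rootSpace_le H
    intro α hα e he w hw f hf
    have hα' : (α : H → F) ≠ 0 := hα
    obtain ⟨Φ, hΦ⟩ := exists_oneParam e (isNilpotent_ad_of_mem_rootSpace H hα' he)
    refine hw (f ∘ₗ (ad F L e)) fun φ hφ => ?_
    obtain ⟨p, hp, hp1⟩ := hΦ.2 f (φ v)
    have hp0 : p = 0 := Polynomial.funext fun r => by
      rw [← hp, eval_zero]
      exact hf _ (Reach.step φ e Φ hΦ r hφ)
    rw [hp0, coeff_zero] at hp1
    exact hp1.symm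
  let I : LieIdeal F L :=
    { W with
      lie_mem := fun {y w} hw => by
        have : y ∈ N := by rw [hN]; trivial
        exact this w hw }
  have hI : I = ⊤ := hv I fun f hf => hf LieEquiv.refl Reach.refl
  apply hg
  ext w
  have hw : w ∈ I := by rw [hI]; trivial
  exact hw g hcon

lemma exists_reach_forall {ι : Type*} (x : L) (hx : ∀ I : LieIdeal F L, x ∈ I → I = ⊤)
    (g : ι → Module.Dual F L) (hg : ∀ i, g i ≠ 0) (t : Finset ι) :
    ∃ φ : L ≃ₗ⁅F⁆ L, Reach φ ∧ ∀ i ∈ t, g i (φ x) ≠ 0 := by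
  classical
  induction t using Finset.induction_on with
  | empty => exact ⟨LieEquiv.refl, Reach.refl, by simp⟩
  | insert a t _ ih =>
    obtain ⟨φ, hφ, h⟩ := ih
    have hv : ∀ I : LieIdeal F L, φ x ∈ I → I = ⊤ := by
      intro I hI
      have h1 := hx (I.comap (φ : L →ₗ⁅F⁆ L)) (by simpa using hI)
      rw [eq_top_iff]
      intro z _
      have : φ.symm z ∈ I.comap (φ : L →ₗ⁅F⁆ L) := by rw [h1]; trivial
      simpa using this
    obtain ⟨ψ, hψ, hψg⟩ := exists_reach_ne_zero (φ x) hv (g a) (hg a)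
    obtain ⟨θ, hθ, h1, h2⟩ := reach_two (fun w : L => ∏ i ∈ t, g i w) (polyLike_prod t g) (φ x)
      (Finset.prod_ne_zero_iff.2 h) ψ hψ (g a) hψg
    refine ⟨φ.trans θ, hφ.trans hθ, fun i hi => ?_⟩
    rcases Finset.mem_insert.1 hi with rfl | hi
    · exact h2
    · exact Finset.prod_ne_zero_iff.1 h1 i hi

lemma component_mem {V ι : Type*} [AddCommGroup V] [Module F V] (p : Submodule F V)
    (T : Module.End F V) (hT : ∀ v ∈ p, T v ∈ p) (t : Finset ι) (μ : ι → F)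
    (hμ : Set.InjOn μ t) (v : ι → V) (hv : ∀ i ∈ t, T (v i) = μ i • v i)
    (hsum : ∑ i ∈ t, v i ∈ p) (i : ι) (hi : i ∈ t) : v i ∈ p := by
  classical
  have haev : ∀ (q : F[X]), ∀ j ∈ t, aeval T q (v j) = q.eval (μ j) • v j := by
    intro q j hj
    induction q using Polynomial.induction_on' with
    | add a b ha hb => simp [ha, hb, add_smul]
    | monomial n a =>
      have : ∀ n : ℕ, (T ^ n) (v j) = μ j ^ n • v j := by
        intro n
        induction n with
        | zero => simp
        | succ n ih => rw [pow_succ', Module.End.mul_apply, ih, map_smul, hv j hj, smul_smul, pow_succ]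
      simp [aeval_monomial, this, smul_smul, mul_comm]
  have h := Polynomial.aeval_apply_smul_mem_of_le_comap hsum (Lagrange.basis t μ i) T hT
  rw [map_sum, Finset.sum_eq_single i] at h
  · rwa [haev _ i hi, Lagrange.eval_basis_self hμ hi, one_smul] at h
  · intro j hj hji
    rw [haev _ j hj, Lagrange.eval_basis_of_ne hji.symm hj, zero_smul]
  · exact fun h => absurd hi h

lemma exists_separating : ∃ h : H, Function.Injective (fun α : Weight F H L => α h) := by
  classical
  obtain ⟨h, hh⟩ := Module.Dual.exists_forall_ne_zero_of_forall_exists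
    (fun ij : {ij : Weight F H L × Weight F H L // ij.1 ≠ ij.2} =>
      (Weight.toLinear F H L ij.1.1 - Weight.toLinear F H L ij.1.2 : Module.Dual F H)) (by
        rintro ⟨⟨α, β⟩, hne⟩
        by_contra! hcon
        apply hne
        ext z
        have := hcon z
        simpa [sub_eq_zero] using this)
  refine ⟨h, fun α β hαβ => ?_⟩
  by_contra hne
  exact hh ⟨(α, β), hne⟩ (by simpa [sub_eq_zero] using hαβ)

lemma lieSpan_eq_top_of_generic (x : L) (h : H)
    (hh : Function.Injective (fun α : Weight F H L => α h))
    (e : Weight F H L → L) (he : ∀ α : Weight F H L, e α ∈ rootSpace H (-α))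
    (hx : ∀ α : Weight F H L, α.IsNonZero → killingForm F L (e α) x ≠ 0) :
    LieSubalgebra.lieSpan F L {x, (h : L)} = ⊤ := by
  classical
  set S := LieSubalgebra.lieSpan F L {x, (h : L)}
  have hxS : x ∈ S := LieSubalgebra.subset_lieSpan (by simp)
  have hhS : (h : L) ∈ S := LieSubalgebra.subset_lieSpan (by simp)
  have hxtop : x ∈ (⨆ α : Weight F H L, (rootSpace H α).toSubmodule) := by
    rw [← LieSubmodule.iSup_toSubmodule, iSup_genWeightSpace_eq_top' F H L]; trivial
  obtain ⟨v, hv⟩ := (Submodule.mem_iSup_iff_exists_finsupp _ _).1 hxtop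
  obtain ⟨hv, hvs⟩ := hv
  have hvs' : ∑ α : Weight F H L, v α = x := by
    rw [← hvs, Finsupp.sum_fintype]
    simp
  have hvS : ∀ α, v α ∈ S := fun α =>
    component_mem S.toSubmodule (ad F L h) (fun w hw => S.lie_mem hhS hw) Finset.univ
      (fun α : Weight F H L => α h) hh.injOn v
      (fun α _ => IsKilling.lie_eq_smul_of_mem_rootSpace (hv α) h)
      (by rw [hvs']; exact hxS) α (Finset.mem_univ α)
  apply eq_top_of_rootSpace_le H
  intro α hα y hy
  have hne : v α ≠ 0 := by
    intro h0
    apply hx α hα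
    rw [← hvs', map_sum]
    refine Finset.sum_eq_zero fun β _ => ?_
    by_cases hβ : β = α
    · rw [hβ, h0, map_zero]
    · apply killingForm_apply_eq_zero_of_mem_rootSpace_of_add_ne_zero F L H (he α) (hv β)
      intro hc
      apply hβ
      ext z
      have := congrFun hc z
      simp only [Pi.add_apply, Pi.neg_apply, Pi.zero_apply] at this
      exact (neg_add_eq_zero.1 this).symm
  have hfr := IsKilling.finrank_rootSpace_eq_one α hα
  obtain ⟨c, hc⟩ := (finrank_eq_one_iff_of_nonzero' (⟨v α, hv α⟩ : rootSpace H α)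
    (fun h => hne (congrArg Subtype.val h))).1 hfr ⟨y, hy⟩
  have hc' : c • v α = y := congrArg Subtype.val hc
  rw [← hc']
  exact S.smul_mem c (hvS α)

theorem generated_of_killing (x : L) (hx : ∀ I : LieIdeal F L, x ∈ I → I = ⊤) :
    ∃ y : L, LieSubalgebra.lieSpan F L {x, y} = ⊤ := by
  classical
  obtain ⟨z, hz⟩ := LieAlgebra.exists_isCartanSubalgebra_engel F L
  set H := LieSubalgebra.engel F z
  have hex : ∀ α : Weight F H L, ∃ e ∈ rootSpace H (-α), e ≠ 0 := fun α => (-α).exists_ne_zero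
  choose e he hne using hex
  obtain ⟨φ, -, hφ⟩ := exists_reach_forall x hx (fun α => killingForm F L (e α))
    (fun α h0 => hne α (by
      have : e α ∈ LinearMap.ker (killingForm F L) := h0
      simpa using this)) Finset.univ
  obtain ⟨h, hh⟩ := exists_separating (F := F) H
  have htop := lieSpan_eq_top_of_generic H (φ x) h hh e he
    (fun α _ => hφ α (Finset.mem_univ α))
  refine ⟨φ.symm h, ?_⟩
  set S := LieSubalgebra.lieSpan F L {x, φ.symm (h : L)}
  have hle : LieSubalgebra.lieSpan F L {φ x, (h : L)} ≤ S.comap (φ.symm : L →ₗ⁅F⁆ L) := by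
    rw [LieSubalgebra.lieSpan_le]
    rintro w (rfl | rfl)
    · change φ.symm (φ x) ∈ S
      rw [LieEquiv.symm_apply_apply]
      exact LieSubalgebra.subset_lieSpan (by simp)
    · change φ.symm (h : L) ∈ S
      exact LieSubalgebra.subset_lieSpan (by simp)
  rw [htop] at hle
  rw [eq_top_iff]
  intro w _
  have : φ.symm (φ w) ∈ S := hle (show φ w ∈ ⊤ by trivial)
  rwa [LieEquiv.symm_apply_apply] at this

end Killing

section PiSimple

variable {F : Type} [Field F] {ι : Type} {g : ι → Type}
    [∀ k, LieRing (g k)] [∀ k, LieAlgebra F (g k)] [∀ k, LieAlgebra.IsSimple F (g k)]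

lemma pi_lie_apply (x y : ∀ k, g k) (k : ι) : ⁅x, y⁆ k = ⁅x k, y k⁆ := rfl

lemma pi_proj_surj (I : LieIdeal F (∀ k, g k)) (x : ∀ k, g k) (hx : x ∈ I) (k : ι)
    (hk : x k ≠ 0) (b : g k) : ∃ y ∈ I, y k = b := by
  classical
  let J : LieIdeal F (g k) :=
    { I.toSubmodule.map (LinearMap.proj k) with
      lie_mem := by
        rintro a _ ⟨y, hy, rfl⟩
        refine ⟨⁅Pi.single k a, y⁆, I.lie_mem hy, ?_⟩
        simp [pi_lie_apply] }
  have hJ : J = ⊤ := by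
    refine (LieAlgebra.IsSimple.eq_bot_or_eq_top J).resolve_left fun h => hk ?_
    have : x k ∈ J := ⟨x, hx, rfl⟩
    rw [h] at this
    simpa using this
  have : b ∈ J := by rw [hJ]; trivial
  obtain ⟨y, hy, hyb⟩ := this
  exact ⟨y, hy, hyb⟩

lemma exists_lie_ne_zero (F V : Type*) [Field F] [LieRing V] [LieAlgebra F V]
    [LieAlgebra.IsSimple F V] : ∃ a b : V, ⁅a, b⁆ ≠ 0 := by
  by_contra! h
  exact LieAlgebra.IsSimple.non_abelian F (L := V) ⟨h⟩

lemma pi_ideal_eq_top [Finite ι] (I : LieIdeal F (∀ k, g k)) (x : ∀ k, g k) (hx : x ∈ I)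
    (hk : ∀ k, x k ≠ 0) : I = ⊤ := by
  classical
  have := Fintype.ofFinite ι
  have hs : ∀ k (a : g k), Pi.single k a ∈ I := by
    intro k a
    have hbr : ∀ a b : g k, (Pi.single k ⁅a, b⁆ : ∀ k, g k) ∈ I := by
      intro a b
      obtain ⟨y, hy, rfl⟩ := pi_proj_surj I x hx k (hk k) b
      have : (Pi.single k ⁅a, y k⁆ : ∀ k, g k) = ⁅(Pi.single k a : ∀ k, g k), y⁆ := by
        ext j
        rw [pi_lie_apply]
        by_cases hj : j = k
        · subst hj; simp
        · simp [Pi.single_eq_of_ne hj]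
      rw [this]
      exact I.lie_mem hy
    let J : LieIdeal F (g k) :=
      { I.toSubmodule.comap (LinearMap.single F g k) with
        lie_mem := fun {a b} _ => hbr a b }
    have hJ : J = ⊤ := by
      refine (LieAlgebra.IsSimple.eq_bot_or_eq_top J).resolve_left fun h => ?_
      obtain ⟨a, b, hab⟩ := exists_lie_ne_zero F (g k)
      have : ⁅a, b⁆ ∈ J := hbr a b
      rw [h] at this
      exact hab (by simpa using this)
    have : a ∈ J := by rw [hJ]; trivial
    exact this
  rw [eq_top_iff]
  intro y _
  rw [← Finset.univ_sum_single y]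
  exact I.toSubmodule.sum_mem fun k _ => hs k (y k)

lemma pi_hasTrivialRadical : LieAlgebra.HasTrivialRadical F (∀ k, g k) := by
  rw [LieAlgebra.hasTrivialRadical_iff_no_abelian_ideals]
  intro I hI
  rw [eq_bot_iff]
  intro x hx
  rw [LieSubmodule.mem_bot]
  ext k
  by_contra hk
  obtain ⟨a, b, hab⟩ := exists_lie_ne_zero F (g k)
  obtain ⟨y, hy, rfl⟩ := pi_proj_surj I x hx k hk a
  obtain ⟨z, hz, rfl⟩ := pi_proj_surj I x hx k hk b
  apply hab
  have h1 : ⁅(⟨y, hy⟩ : I), (⟨z, hz⟩ : I)⁆ = 0 := hI.trivial _ _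
  have h2 : ⁅y, z⁆ = 0 := congrArg Subtype.val h1
  exact congrFun h2 k

end PiSimple

end OneAndAHalf

/-- For a finite direct product of finite-dimensional simple Lie algebras over an
algebraically closed field of characteristic 0, every element with all components nonzero can
be completed to a generating pair. -/
theorem pi_simple_generated_by_one_and_a_half
    (F : Type) [Field F] [IsAlgClosed F] [CharZero F]
    (ι : Type) [Finite ι] [Nonempty ι] (g : ι → Type)
    [∀ k, LieRing (g k)] [∀ k, LieAlgebra F (g k)]
    [∀ k, FiniteDimensional F (g k)] [∀ k, LieAlgebra.IsSimple F (g k)] :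
    ∀ x : ∀ k, g k, (∀ k, x k ≠ 0) →
      ∃ y : ∀ k, g k, LieSubalgebra.lieSpan F (∀ k, g k) {x, y} = ⊤ := by
  intro x hx
  have := pi_hasTrivialRadical (F := F) (g := g)
  exact generated_of_killing x fun I hI => pi_ideal_eq_top I x hI hx
end

section
/- Let p > 3 be a prime, F a field of characteristic p, and m ≥ 1. Let B_m = F[X_1, …, X_m]/(X_1^p, …, X_m^p), with x_i the image of X_i and x^τ the image of (X_1 ⋯ X_m)^{p−1}. Call an F-linear derivation δ of B_m homogeneous of degree −1 if δ(x_i) lies in F·1 (the scalars) for every i. Let δ_1, …, δ_k be derivations of B_m homogeneous of degree −1. Then the following are equivalent: (i) δ_1, …, δ_k are linearly dependent over F; (ii) the composite F-linear endomorphism δ_1^{p−1} ∘ δ_2^{p−1} ∘ ⋯ ∘ δ_k^{p−1} of B_m is zero; (iii) δ_1^{p−1} δ_2^{p−1} ⋯ δ_k^{p−1} (x^τ) = 0. -/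
open MvPolynomial

set_option synthInstance.maxHeartbeats 1000000
set_option maxHeartbeats 1000000

/-- The truncated polynomial algebra `B_m = F[X_1, …, X_m]/(X_1^p, …, X_m^p)`. -/
noncomputable abbrev TruncPoly (F : Type) [Field F] (p m : ℕ) : Type :=
  MvPolynomial (Fin m) F ⧸
    Ideal.span (Set.range fun i : Fin m => (X i : MvPolynomial (Fin m) F) ^ p)

/-- The image `x_i` in `B_m` of the variable `X_i`. -/
noncomputable def xVar (F : Type) [Field F] (p m : ℕ) (i : Fin m) : TruncPoly F p m :=
  Ideal.Quotient.mk _ (X i)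

/-- The image `x^τ` in `B_m` of the top-degree monomial `(X_1 ⋯ X_m)^(p-1)`. -/
noncomputable def xTau (F : Type) [Field F] (p m : ℕ) : TruncPoly F p m :=
  Ideal.Quotient.mk _ (∏ i : Fin m, (X i : MvPolynomial (Fin m) F) ^ (p - 1))

/-- A derivation of `B_m` is homogeneous of degree `-1` if it sends every `x_i` to a scalar. -/
def IsDegNegOne (F : Type) [Field F] (p m : ℕ)
    (δ : Derivation F (TruncPoly F p m) (TruncPoly F p m)) : Prop :=
  ∀ i : Fin m, ∃ c : F, δ (xVar F p m i) = algebraMap F (TruncPoly F p m) c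


namespace TruncAux

/-- Dependent `p`-nilpotent elements: the product of `(p-1)`-st powers vanishes. -/
lemma prod_pow_eq_zero {F S κ : Type*} [Field F] [CommRing S] [Algebra F S] [Fintype κ]
    (p : ℕ) (hp : 2 ≤ p) (y : κ → S) (hy : ∀ j, y j ^ p = 0) (g : κ → F)
    (hg : ∑ j, g j • y j = 0) (i : κ) (hi : g i ≠ 0) : ∏ j, y j ^ (p - 1) = 0 := by
  classical
  have h1 : ∀ j, j ≠ i → y j * ∏ l ∈ Finset.univ.erase i, y l ^ (p - 1) = 0 := by
    intro j hj
    rw [← Finset.mul_prod_erase (Finset.univ.erase i) _ (Finset.mem_erase.2 ⟨hj, Finset.mem_univ j⟩),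
      ← mul_assoc, ← pow_succ', Nat.sub_add_cancel (by omega), hy, zero_mul]
  have h2 : y i * ∏ l ∈ Finset.univ.erase i, y l ^ (p - 1) = 0 := by
    have h3 : (∑ j, g j • y j) * ∏ l ∈ Finset.univ.erase i, y l ^ (p - 1) = 0 := by
      rw [hg, zero_mul]
    rw [Finset.sum_mul, Finset.sum_eq_single i] at h3
    · rw [smul_mul_assoc] at h3
      exact (smul_eq_zero_iff_right hi).1 h3
    · intro j _ hj
      rw [smul_mul_assoc, h1 j hj, smul_zero]
    · simp
  rw [← Finset.mul_prod_erase Finset.univ _ (Finset.mem_univ i)]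
  obtain ⟨q, rfl⟩ : ∃ q, p = q + 2 := ⟨p - 2, by omega⟩
  have h4 : y i ^ (q + 2 - 1) = y i ^ q * y i := pow_succ _ _
  rw [h4, mul_assoc, h2, mul_zero]

/-- Change of variables only changes the top product by a scalar. -/
lemma exists_prod_pow_eq_smul {F S κ ι : Type*} [Field F] [CommRing S] [Algebra F S] [Fintype κ]
    [Fintype ι] (hc : Fintype.card κ = Fintype.card ι)
    (p : ℕ) (hp : 2 ≤ p) (y : κ → S) (hy : ∀ j, y j ^ p = 0) (z : ι → S) (a : ι → κ → F)
    (hz : ∀ i, z i = ∑ j, a i j • y j) :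
    ∃ r : F, ∏ i, z i ^ (p - 1) = r • ∏ j, y j ^ (p - 1) := by
  classical
  let P : MvPolynomial κ F := ∏ i, (∑ j, C (a i j) * X j) ^ (p - 1)
  have hP : P.IsHomogeneous (∑ i : ι, (1 * (p - 1))) := by
    refine IsHomogeneous.prod _ _ _ fun i _ => IsHomogeneous.pow ?_ _
    exact IsHomogeneous.sum _ _ _ fun j _ => isHomogeneous_C_mul_X _ _
  have hPz : aeval y P = ∏ i, z i ^ (p - 1) := by
    simp only [P, map_prod, map_pow, map_sum, map_mul, aeval_X, aeval_C, hz, Algebra.smul_def]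
  let τ : κ →₀ ℕ := Finsupp.equivFunOnFinite.symm fun _ => p - 1
  refine ⟨P.coeff τ, ?_⟩
  rw [← hPz, aeval_def, eval₂_eq']
  have key : ∀ d ∈ P.support, d ≠ τ → ∏ j, y j ^ d j = 0 := by
    intro d hd hne
    have hdeg : d.degree = ∑ i : ι, (1 * (p - 1)) := by
      by_contra h
      exact (mem_support_iff.1 hd) (hP.coeff_eq_zero h)
    have : ∃ j, p ≤ d j := by
      by_contra! h
      apply hne
      have hle : ∀ j ∈ Finset.univ, d j ≤ p - 1 := fun j _ => by have := h j; omega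
      have hs : ∑ j, d j = ∑ j : κ, (p - 1) := by
        rw [← Finsupp.degree_eq_sum, hdeg]; simp [hc]
      have := (Finset.sum_eq_sum_iff_of_le hle).1 hs
      ext j
      simpa [τ] using this j (Finset.mem_univ j)
    obtain ⟨j, hj⟩ := this
    refine Finset.prod_eq_zero (Finset.mem_univ j) ?_
    rw [← Nat.sub_add_cancel hj, pow_add, hy, mul_zero]
  rw [Finset.sum_eq_single τ, Algebra.smul_def]
  · simp [τ]
  · intro d hd hne
    rw [key d hd hne, mul_zero]
  · intro h
    rw [notMem_support_iff.1 h, map_zero, zero_mul]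

lemma pderiv_iterate_monomial {F σ : Type*} [CommRing F] (i : σ) (n : ℕ) (s : σ →₀ ℕ) (a : F) :
    (pderiv i)^[n] (monomial s a) =
      monomial (s - Finsupp.single i n) (a * ((s i).descFactorial n : F)) := by
  induction n with
  | zero => simp
  | succ n ih =>
    rw [Function.iterate_succ_apply', ih, pderiv_monomial, tsub_tsub, ← Finsupp.single_add,
      Nat.descFactorial_succ]
    congr 1
    simp only [Finsupp.tsub_apply, Finsupp.single_eq_same, Nat.cast_mul]
    ring

lemma pderiv_comm {F σ : Type*} [CommRing F] (i j : σ) (f : MvPolynomial σ F) :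
    pderiv i (pderiv j f) = pderiv j (pderiv i f) := by
  have : ⁅(pderiv i : Derivation F (MvPolynomial σ F) (MvPolynomial σ F)), pderiv j⁆ = (0 : Derivation F (MvPolynomial σ F) (MvPolynomial σ F)) := by
    classical
    apply MvPolynomial.derivation_ext
    intro l
    simp [Derivation.commutator_apply, pderiv_X, Pi.single_apply, apply_ite]
  have h := congrArg (fun D => D f) this
  simpa [Derivation.commutator_apply, sub_eq_zero] using h

lemma pderiv_iterate_p {F σ : Type*} [CommRing F] (p : ℕ) [CharP F p] (hp : p.Prime) (i : σ)
    (f : MvPolynomial σ F) : (pderiv i)^[p] f = 0 := by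
  induction f using MvPolynomial.induction_on' with
  | monomial s a =>
    rw [pderiv_iterate_monomial, Nat.descFactorial_eq_factorial_mul_choose]
    have : ((p.factorial : ℕ) : F) = 0 :=
      (CharP.cast_eq_zero_iff F p _).2 (Nat.dvd_factorial hp.pos le_rfl)
    simp [this]
  | add f g hf hg =>
    rw [iterate_map_add, hf, hg, add_zero]

section
variable (F : Type) [Field F] (p m : ℕ)

lemma mk_surj : Function.Surjective (Ideal.Quotient.mkₐ F
    (Ideal.span (Set.range fun i : Fin m => (X i : MvPolynomial (Fin m) F) ^ p))) :=
  Ideal.Quotient.mkₐ_surjective _ _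

lemma pderiv_mem [CharP F p] (i : Fin m) (f : MvPolynomial (Fin m) F)
    (hf : f ∈ Ideal.span (Set.range fun i : Fin m => (X i : MvPolynomial (Fin m) F) ^ p)) :
    pderiv i f ∈ Ideal.span (Set.range fun i : Fin m => (X i : MvPolynomial (Fin m) F) ^ p) := by
  induction hf using Submodule.span_induction with
  | mem x h =>
    obtain ⟨j, rfl⟩ := h
    simp [Derivation.leibniz_pow]
  | zero => simp
  | add x y _ _ hx hy => rw [map_add]; exact add_mem hx hy
  | smul a x hx h =>
    rw [smul_eq_mul, Derivation.leibniz]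
    exact add_mem (Ideal.mul_mem_left _ _ h)  (by rw [smul_eq_mul]; exact Ideal.mul_mem_right _ _ hx)

/-- The partial derivative on `B_m`. -/
noncomputable def D [CharP F p] (i : Fin m) :
    Derivation F (TruncPoly F p m) (TruncPoly F p m) :=
  Derivation.liftOfSurjective (mk_surj F p m) (d := pderiv i) (by
    intro x hx
    exact Ideal.Quotient.eq_zero_iff_mem.2
      (pderiv_mem F p m i x (Ideal.Quotient.eq_zero_iff_mem.1 hx)))

lemma D_mk [CharP F p] (i : Fin m) (f : MvPolynomial (Fin m) F) :
    D F p m i (Ideal.Quotient.mk _ f) = Ideal.Quotient.mk _ (pderiv i f) :=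
  Derivation.liftOfSurjective_apply (mk_surj F p m) (d := pderiv i) (by
    intro x hx
    exact Ideal.Quotient.eq_zero_iff_mem.2
      (pderiv_mem F p m i x (Ideal.Quotient.eq_zero_iff_mem.1 hx))) f

/-- The partial derivative as an endomorphism. -/
noncomputable def E [CharP F p] (i : Fin m) : Module.End F (TruncPoly F p m) :=
  (D F p m i).toLinearMap

lemma E_mk [CharP F p] (i : Fin m) (f : MvPolynomial (Fin m) F) :
    E F p m i (Ideal.Quotient.mk _ f) = Ideal.Quotient.mk _ (pderiv i f) :=
  D_mk F p m i f

lemma E_pow_mk [CharP F p] (i : Fin m) (n : ℕ) (f : MvPolynomial (Fin m) F) :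
    (E F p m i ^ n) (Ideal.Quotient.mk _ f) = Ideal.Quotient.mk _ ((pderiv i)^[n] f) := by
  induction n with
  | zero => simp
  | succ n ih => rw [pow_succ', Module.End.mul_apply, ih, E_mk, Function.iterate_succ_apply']

lemma E_comm [CharP F p] (i j : Fin m) : E F p m i * E F p m j = E F p m j * E F p m i := by
  refine LinearMap.ext fun f => ?_
  obtain ⟨f, rfl⟩ := Ideal.Quotient.mk_surjective f
  simp only [Module.End.mul_apply, E_mk, pderiv_comm]

lemma E_pow_p [CharP F p] (hp : p.Prime) (i : Fin m) : E F p m i ^ p = 0 := by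
  refine LinearMap.ext fun f => ?_
  obtain ⟨f, rfl⟩ := Ideal.Quotient.mk_surjective f
  rw [E_pow_mk, pderiv_iterate_p p hp, map_zero, LinearMap.zero_apply]

open scoped IsMulCommutative in
lemma exists_hom [CharP F p] (hp : p.Prime) :
    ∃ φ : TruncPoly F p m →ₐ[F] Module.End F (TruncPoly F p m),
      ∀ i, φ (xVar F p m i) = E F p m i := by
  let s : Set (Module.End F (TruncPoly F p m)) := Set.range (E F p m)
  have hs : IsMulCommutative (Algebra.adjoin F s) := by
    apply Algebra.isMulCommutative_adjoin
    rintro _ ⟨i, rfl⟩ _ ⟨j, rfl⟩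
    exact E_comm F p m i j
  let ψ : MvPolynomial (Fin m) F →ₐ[F] Module.End F (TruncPoly F p m) :=
    (Algebra.adjoin F s).val.comp
      (aeval fun i => (⟨E F p m i, Algebra.subset_adjoin ⟨i, rfl⟩⟩ : Algebra.adjoin F s))
  have hψ : ∀ i, ψ (X i) = E F p m i := fun i => by simp [ψ]
  have hI : ∀ a ∈ Ideal.span (Set.range fun i : Fin m => (X i : MvPolynomial (Fin m) F) ^ p),
      ψ a = 0 := by
    intro a ha
    induction ha using Submodule.span_induction with
    | mem x h =>
      obtain ⟨j, rfl⟩ := h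
      simp only [map_pow, hψ, E_pow_p F p m hp]
    | zero => simp
    | add x y _ _ hx hy => rw [map_add, hx, hy, add_zero]
    | smul a x hx h => rw [smul_eq_mul, map_mul, h, mul_zero]
  exact ⟨Ideal.Quotient.liftₐ _ ψ hI, fun i => hψ i⟩

lemma ideal_ne_top (hp : p ≠ 0) : Nontrivial (TruncPoly F p m) := by
  apply Ideal.Quotient.nontrivial_iff.2
  intro h
  have h1 : (1 : MvPolynomial (Fin m) F) ∈
    Ideal.span (Set.range fun i : Fin m => (X i : MvPolynomial (Fin m) F) ^ p) := by
      rw [h]; trivial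
  have h2 : Ideal.span (Set.range fun i : Fin m => (X i : MvPolynomial (Fin m) F) ^ p) ≤
      RingHom.ker (constantCoeff : MvPolynomial (Fin m) F →+* F) := by
    rw [Ideal.span_le]
    rintro _ ⟨i, rfl⟩
    simp [RingHom.mem_ker, hp]
  have := h2 h1
  simp [RingHom.mem_ker] at this

lemma top_apply [CharP F p] (hp : p.Prime)
    (φ : TruncPoly F p m →ₐ[F] Module.End F (TruncPoly F p m))
    (hφ : ∀ i, φ (xVar F p m i) = E F p m i) :
    φ (∏ i, xVar F p m i ^ (p - 1)) (xTau F p m) ≠ 0 := by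
  classical
  let f : Finset (Fin m) → (Fin m →₀ ℕ) := fun s =>
    Finsupp.equivFunOnFinite.symm fun i => if i ∈ s then 0 else p - 1
  have key : ∀ s : Finset (Fin m), φ (∏ i ∈ s, xVar F p m i ^ (p - 1)) (xTau F p m) =
      Ideal.Quotient.mk _ (monomial (f s) (((p - 1).factorial : F) ^ s.card)) := by
    intro s
    induction s using Finset.induction_on with
    | empty =>
      simp only [Finset.prod_empty, map_one, Module.End.one_apply, xTau, Finset.card_empty, pow_zero]
      congr 1
      rw [monomial_eq, Finsupp.prod_fintype _ _ (by simp)]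
      simp [f]
    | insert i s hi ih =>
      rw [Finset.prod_insert hi, map_mul, Module.End.mul_apply, ih, map_pow, hφ, E_pow_mk,
        pderiv_iterate_monomial, Finset.card_insert_of_notMem hi]
      have h1 : f s - Finsupp.single i (p - 1) = f (insert i s) := by
        ext j
        by_cases hj : j = i
        · subst hj; simp [f, hi]
        · simp [f, hj]
      have h2 : f s i = p - 1 := by simp [f, hi]
      rw [h1, h2, Nat.descFactorial_self, pow_succ]
  have hf : f Finset.univ = 0 := by ext; simp [f]
  rw [key, hf]
  have := ideal_ne_top F p m hp.ne_zero
  have hfac : ((p - 1).factorial : F) ≠ 0 := by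
    rw [Ne, CharP.cast_eq_zero_iff F p, hp.dvd_factorial]
    have := hp.pos; omega
  change algebraMap F (TruncPoly F p m) _ ≠ 0
  rw [Ne, FaithfulSMul.algebraMap_eq_zero_iff]
  exact pow_ne_zero _ hfac

lemma der_sum {ι : Type} (s : Finset ι)
    (d : ι → Derivation F (TruncPoly F p m) (TruncPoly F p m)) (x : TruncPoly F p m) :
    (∑ i ∈ s, d i) x = ∑ i ∈ s, d i x := by
  classical
  induction s using Finset.induction_on with
  | empty => simp
  | insert i s hi ih => rw [Finset.sum_insert hi, Finset.sum_insert hi, Derivation.add_apply, ih]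

lemma der_ext (d e : Derivation F (TruncPoly F p m) (TruncPoly F p m))
    (h : ∀ i, d (xVar F p m i) = e (xVar F p m i)) : d = e := by
  have : Algebra.adjoin F (Set.range (xVar F p m)) = ⊤ := by
    have h1 := congrArg (Subalgebra.map (Ideal.Quotient.mkₐ F
      (Ideal.span (Set.range fun i : Fin m => (X i : MvPolynomial (Fin m) F) ^ p))))
      (MvPolynomial.adjoin_range_X (R := F) (σ := Fin m))
    rw [AlgHom.map_adjoin, ← Set.range_comp, Algebra.map_top,
      AlgHom.range_eq_top _ |>.2 (mk_surj F p m)] at h1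
    exact h1
  refine Derivation.ext_of_adjoin_eq_top _ this ?_
  rintro _ ⟨i, rfl⟩
  exact h i

end

/-- extension of an independent family to a basis indexed by a sum. -/
lemma exists_basis {F V ι : Type} [Field F] [AddCommGroup V] [Module F V] (c : ι → V)
    (hc : LinearIndependent F c) :
    ∃ (κ : Type) (b : Module.Basis (ι ⊕ κ) F V), ∀ i, b (Sum.inl i) = c i := by
  refine ⟨_, Module.Basis.sumExtend hc, fun i => ?_⟩
  simp [Module.Basis.sumExtend]
  rfl

lemma exists_of_not_li {F V ι : Type} [Field F] [AddCommMonoid V] [Module F V] [Fintype ι]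
    (c : ι → V) (h : ¬ LinearIndependent F c) :
    ∃ g : ι → F, ∑ j, g j • c j = 0 ∧ ∃ i, g i ≠ 0 := by
  letI : AddCommGroup V := Module.addCommMonoidToAddCommGroup F
  exact Fintype.not_linearIndependent_iff.1 h

end TruncAux
open TruncAux in
/-- For derivations `δ_1, …, δ_k` of `B_m` homogeneous of degree `-1`, the
following are equivalent: (i) they are linearly dependent over `F`; (ii) the composite
endomorphism `δ_1^(p-1) ∘ ⋯ ∘ δ_k^(p-1)` is zero; (iii) that composite kills `x^τ`. -/
theorem derivations_linearDependent_iff_composite_eq_zero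
    (p : ℕ) (hp : p.Prime) (hp3 : 3 < p) (F : Type) [Field F] [CharP F p]
    (m : ℕ) (hm : 1 ≤ m) (k : ℕ)
    (δ : Fin k → Derivation F (TruncPoly F p m) (TruncPoly F p m))
    (hδ : ∀ j, IsDegNegOne F p m (δ j)) :
    (¬ LinearIndependent F δ ↔
        (List.ofFn fun j : Fin k =>
          ((δ j).toLinearMap : Module.End F (TruncPoly F p m)) ^ (p - 1)).prod = 0) ∧
      ((List.ofFn fun j : Fin k =>
          ((δ j).toLinearMap : Module.End F (TruncPoly F p m)) ^ (p - 1)).prod = 0 ↔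
        (List.ofFn fun j : Fin k =>
          ((δ j).toLinearMap : Module.End F (TruncPoly F p m)) ^ (p - 1)).prod
            (xTau F p m) = 0) := by
  classical
  obtain ⟨φ, hφ⟩ := exists_hom F p m hp
  have hnt := ideal_ne_top F p m hp.ne_zero
  haveI : Fact p.Prime := ⟨hp⟩
  haveI : CharP (TruncPoly F p m) p :=
    charP_of_injective_algebraMap (algebraMap F (TruncPoly F p m)).injective p
  choose c hc using hδ
  have hx : ∀ i, xVar F p m i ^ p = 0 := by
    intro i
    rw [xVar, ← map_pow]
    exact Ideal.Quotient.eq_zero_iff_mem.2 (Ideal.subset_span ⟨i, rfl⟩)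
  let L : (Fin m → F) →ₗ[F] TruncPoly F p m := Fintype.linearCombination F (xVar F p m)
  let LD := Fintype.linearCombination F (D F p m)
  have hL : ∀ v, L v = ∑ i, v i • xVar F p m i := fun v => Fintype.linearCombination_apply _ _ _
  have hLD : ∀ v, LD v = ∑ i, v i • D F p m i := fun v => Fintype.linearCombination_apply _ _ _
  have hLp : ∀ v, L v ^ p = 0 := by
    intro v
    rw [hL, sum_pow_char]
    exact Finset.sum_eq_zero fun i _ => by rw [smul_pow, hx, smul_zero]
  have hDx : ∀ i j, D F p m i (xVar F p m j) = if j = i then 1 else 0 := by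
    intro i j
    rw [xVar, D_mk, pderiv_X, Pi.single_apply]
    split_ifs <;> simp
  have hδL : ∀ j, δ j = LD (c j) := by
    intro j
    apply der_ext
    intro i
    rw [hc, hLD, der_sum]
    simp [hDx, Algebra.algebraMap_eq_smul_one]
  have hφL : ∀ j, φ (L (c j)) = (δ j).toLinearMap := by
    intro j
    rw [hδL, hL, hLD, map_sum]
    refine LinearMap.ext fun x => ?_
    rw [LinearMap.sum_apply]
    refine Eq.trans ?_ (der_sum F p m _ _ x).symm
    refine Finset.sum_congr rfl fun i _ => ?_
    rw [map_smul, hφ]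
    rfl
  have hprod : (List.ofFn fun j : Fin k =>
          ((δ j).toLinearMap : Module.End F (TruncPoly F p m)) ^ (p - 1)).prod =
      φ (∏ j, L (c j) ^ (p - 1)) := by
    rw [← List.prod_ofFn, map_list_prod, List.map_ofFn]
    congr 2
    funext j
    simp only [Function.comp, map_pow, hφL]
  rw [hprod]
  have h1 : ¬ LinearIndependent F δ → φ (∏ j, L (c j) ^ (p - 1)) = 0 := by
    intro h
    obtain ⟨g, hg, i, hi⟩ := exists_of_not_li δ h
    have hgc : ∑ j, g j • c j = 0 := by
      ext l
      have := congrArg (fun d => d (xVar F p m l)) hg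
      simp only [der_sum, Derivation.smul_apply, hc,
        Derivation.zero_apply] at this
      apply (algebraMap F (TruncPoly F p m)).injective
      rw [Pi.zero_apply, map_zero, Finset.sum_apply, map_sum]
      refine Eq.trans (Finset.sum_congr rfl fun j _ => ?_) this
      rw [Pi.smul_apply, smul_eq_mul, map_mul]
      exact (Algebra.smul_def _ _).symm
    rw [prod_pow_eq_zero p hp.two_le (fun j => L (c j)) (fun j => hLp _) g ?_ i hi, map_zero]
    rw [← map_zero L, ← hgc, map_sum]
    simp only [map_smul]
  have h2 : LinearIndependent F δ → φ (∏ j, L (c j) ^ (p - 1)) (xTau F p m) ≠ 0 := by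
    intro h h0
    have hcl : LinearIndependent F c := by
      apply LinearIndependent.of_comp LD
      have : LD ∘ c = δ := funext fun j => (hδL j).symm
      rw [this]; exact h
    obtain ⟨κ, b, hb⟩ := exists_basis c hcl
    haveI : Finite (Fin k ⊕ κ) := Module.Finite.finite_basis b
    haveI : Finite κ := Finite.of_injective (Sum.inr : κ → Fin k ⊕ κ) Sum.inr_injective
    haveI := Fintype.ofFinite κ
    have hcard : Fintype.card (Fin k ⊕ κ) = Fintype.card (Fin m) := by
      rw [← Module.finrank_eq_card_basis b]; simp
    obtain ⟨r, hr⟩ := exists_prod_pow_eq_smul hcard p hp.two_le (fun j => L (b j))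
      (fun j => hLp _) (xVar F p m) (fun i j => b.repr (Pi.single i 1) j) (by
        intro i
        have : xVar F p m i = L (Pi.single i 1) := by
          rw [hL]; simp [Pi.single_apply]
        rw [this]
        conv_lhs => rw [← b.sum_repr (Pi.single i 1)]
        rw [map_sum]
        simp only [map_smul])
    apply top_apply F p m hp φ hφ
    rw [hr, Fintype.prod_sum_type, mul_comm, map_smul, map_mul]
    simp only [hb]
    rw [LinearMap.smul_apply, Module.End.mul_apply, h0, map_zero, smul_zero]
  refine ⟨⟨h1, fun h hli => h2 hli (by rw [h]; rfl)⟩, fun h => by rw [h]; rfl, fun h => h1 fun hli => h2 hli h⟩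
end

section
/- Let p > 3 be a prime, F an algebraically closed field of characteristic p, and m ≥ 1. Let B_m = F[X_1, …, X_m]/(X_1^p, …, X_m^p) be the truncated polynomial algebra. Then the Lie algebra W(m,1) = Der_F(B_m) of all F-linear derivations of B_m, with bracket the commutator ⁅δ,η⁆ = δ∘η − η∘δ, is a simple Lie algebra: it is not abelian and has no ideals other than 0 and itself. -/
open MvPolynomial

set_option synthInstance.maxHeartbeats 1000000
set_option maxHeartbeats 1000000

/-- Simplicity, for an abstract quotient of the polynomial ring with partial derivatives. -/
theorem witt_simple_aux {F A : Type} [Field F] [CommRing A] [Algebra F A] [Nontrivial A] {m : ℕ}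
    (hm : 1 ≤ m) (h2 : (2 : F) ≠ 0) (q : MvPolynomial (Fin m) F →ₐ[F] A)
    (hq : Function.Surjective q) (d : Fin m → Derivation F A A)
    (hd : ∀ i g, d i (q g) = q (pderiv i g))
    (hk : ∀ a : A, (∀ i, d i a = 0) → ∃ c : F, a = algebraMap F A c) :
    LieAlgebra.IsSimple F (Derivation F A A) := by
  classical
  have hext : ∀ D E : Derivation F A A, (∀ j, D (q (X j)) = E (q (X j))) → D = E := by
    intro D E h
    ext a
    obtain ⟨g, rfl⟩ := hq a
    induction g using MvPolynomial.induction_on with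
    | C c =>
      rw [← MvPolynomial.algebraMap_eq, AlgHom.commutes]
      simp
    | add f g hf hg => simp [hf, hg]
    | mul_X f i hf => rw [map_mul, D.leibniz, E.leibniz, hf, h]
  have hdx : ∀ i j, d i (q (X j)) = if j = i then 1 else 0 := by
    intro i j
    rw [hd]
    by_cases h : j = i
    · subst h; simp
    · simp [h]
  have hbr : ∀ k j (f : A), ⁅d k, f • d j⁆ = (d k f) • d j := by
    intro k j f
    apply hext
    intro l
    simp only [Derivation.commutator_apply, Derivation.smul_apply, hdx, smul_eq_mul,
      Derivation.leibniz]
    split_ifs <;> simp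
  refine ⟨?_, ?_⟩
  · intro I
    by_cases hI : I = ⊥
    · exact Or.inl hI
    right
    -- descend to an element with constant coefficients
    have desc : ∀ N : ℕ, ∀ D ∈ I, D ≠ 0 →
        (∀ j, ∃ g, q g = D (q (X j)) ∧ ∀ s, coeff s g ≠ 0 → s.degree < N) →
        ∃ D ∈ I, D ≠ 0 ∧ ∀ i j, d i (D (q (X j))) = 0 := by
      intro N
      induction N with
      | zero =>
        intro D _ hD h
        exfalso
        apply hD
        apply hext
        intro j
        obtain ⟨g, hg, hs⟩ := h j
        have : g = 0 := by
          ext s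
          by_contra hc
          exact absurd (hs s hc) (by simp)
        rw [← hg, this]; simp
      | succ N ih =>
        intro D hDI hD h
        by_cases hall : ∀ i j, d i (D (q (X j))) = 0
        · exact ⟨D, hDI, hD, hall⟩
        push Not at hall
        obtain ⟨i, j, hij⟩ := hall
        have key : ∀ l, ⁅d i, D⁆ (q (X l)) = d i (D (q (X l))) := by
          intro l
          rw [Derivation.commutator_apply, hdx]
          split_ifs <;> simp
        refine ih ⁅d i, D⁆ (lie_mem_right F _ I _ _ hDI) ?_ ?_
        · intro h0
          apply hij
          rw [← key, h0]; simp
        · intro l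
          obtain ⟨g, hg, hs⟩ := h l
          refine ⟨pderiv i g, ?_, ?_⟩
          · rw [key, ← hg, hd]
          · intro s hsc
            rw [coeff_pderiv] at hsc
            have := hs (s + Finsupp.single i 1) (fun h0 => hsc (by simp [h0]))
            simp at this
            omega
    have hex : ∃ D ∈ I, D ≠ 0 := by
      by_contra hcon
      push Not at hcon
      exact hI ((LieSubmodule.eq_bot_iff I).2 hcon)
    obtain ⟨D0, hD0I, hD0⟩ := hex
    choose g hg using fun j => hq (D0 (q (X j)))
    obtain ⟨D, hDI, hD, hconst⟩ := desc ((Finset.univ.sup fun j => (g j).totalDegree) + 1) D0 hD0I hD0 (by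
      intro j
      refine ⟨g j, hg j, ?_⟩
      intro s hs
      have h1 : s.degree ≤ (g j).totalDegree := le_totalDegree (mem_support_iff.2 hs)
      have h3 : (g j).totalDegree ≤ Finset.univ.sup fun j => (g j).totalDegree :=
        Finset.le_sup (f := fun j => (g j).totalDegree) (Finset.mem_univ j)
      omega)
    choose c hc using fun j => hk (D (q (X j))) (fun i => hconst i j)
    have : ∃ j, c j ≠ 0 := by
      by_contra hcon
      push Not at hcon
      apply hD
      apply hext
      intro j
      simp [hc, hcon]
    obtain ⟨j, hj⟩ := this
    have hdI : ∀ k, d k ∈ I := by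
      intro k
      have h1 : ⁅D, (q (X j)) • d k⁆ = c j • d k := by
        apply hext
        intro l
        simp only [Derivation.commutator_apply, Derivation.smul_apply, hdx, smul_eq_mul,
          Derivation.leibniz, hc, Derivation.map_algebraMap]
        rw [Algebra.smul_def]
        split_ifs <;> simp
      have h3 : c j • d k ∈ I := h1 ▸ lie_mem_left F _ I _ _ hDI
      have := I.smul_mem (c j)⁻¹ h3
      rwa [smul_smul, inv_mul_cancel₀ hj, one_smul] at this
    have hdf : ∀ k j f, d k f • d j ∈ I := fun k j f => hbr k j f ▸ lie_mem_left F _ I _ _ (hdI k)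
    have hcancel : ∀ (c : F) (E : Derivation F A A), c ≠ 0 → c • E ∈ I → E ∈ I := by
      intro c E hc h
      have := I.smul_mem c⁻¹ h
      rwa [smul_smul, inv_mul_cancel₀ hc, one_smul] at this
    have hxd : ∀ j, q (X j) • d j ∈ I := by
      intro j
      apply hcancel 2 _ h2
      have := hdf j j (q (X j) * q (X j))
      rw [Derivation.leibniz, hdx] at this
      convert this using 1
      rw [← smul_assoc]
      congr 1
      rw [two_smul]
      simp
    have hEul : ∀ (s : Fin m →₀ ℕ) (r : F) j,
        q (X j) * d j (q (monomial s r)) = (s j : F) • q (monomial s r) := by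
      intro s r j
      rw [hd, ← map_mul, X_mul_pderiv_monomial, map_nsmul, Nat.cast_smul_eq_nsmul]
    have hmon : ∀ (s : Fin m →₀ ℕ) (r : F) j, q (monomial s r) • d j ∈ I := by
      intro s r j
      set f := q (monomial s r) with hf
      by_cases h1 : (s j : F) = 1
      · apply hcancel 2 _ h2
        have := hdf j j (q (X j) * f)
        rw [Derivation.leibniz, hdx, smul_eq_mul, hEul, h1] at this
        convert this using 1
        rw [← smul_assoc, two_smul]
        simp [← hf]
      · apply hcancel ((s j : F) - 1) _ (sub_ne_zero.2 h1)
        have h3 : ⁅q (X j) • d j, f • d j⁆ = ((s j : F) - 1) • (f • d j) := by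
          apply hext
          intro l
          have := hEul s r j
          rw [← hf] at this
          simp only [Derivation.commutator_apply, Derivation.smul_apply, hdx, smul_eq_mul,
            Derivation.leibniz]
          split_ifs
          · simp [sub_smul, this]
          · simp
        rw [← h3]
        exact lie_mem_left F _ I _ _ (hxd j)
    have hall : ∀ (g : MvPolynomial (Fin m) F) j, q g • d j ∈ I := by
      intro g j
      induction g using MvPolynomial.monomial_add_induction_on with
      | C a => exact hmon 0 a j
      | monomial_add a b f _ _ ih =>
        rw [map_add, add_smul]
        exact I.add_mem (hmon _ _ _) ih
    rw [eq_top_iff]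
    intro E _
    have hE : E = ∑ j, E (q (X j)) • d j := by
      apply hext
      intro l
      have hs : (∑ j, E (q (X j)) • d j) (q (X l)) = ∑ j, (E (q (X j)) • d j) (q (X l)) :=
        map_sum ((Pi.evalAddMonoidHom (fun _ : A => A) (q (X l))).comp
          (Derivation.coeFnAddMonoidHom (R := F) (A := A) (M := A))) _ _
      rw [hs]
      simp [hdx]
    rw [hE]
    refine sum_mem fun j _ => ?_
    obtain ⟨g, hg⟩ := hq (E (q (X j)))
    rw [← hg]
    exact hall g j
  · intro hab
    let i : Fin m := ⟨0, hm⟩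
    have h1 := hbr i i (q (X i))
    rw [hab.trivial, hdx] at h1
    have h3 := congrArg (fun D : Derivation F A A => D (q (X i))) h1
    simp [hdx] at h3

/-- Membership in the truncation ideal. -/
theorem witt_mem_iff {F : Type} [Field F] (p m : ℕ) (g : MvPolynomial (Fin m) F) :
    g ∈ Ideal.span (Set.range fun i : Fin m => (X i : MvPolynomial (Fin m) F) ^ p) ↔
      ∀ s ∈ g.support, ∃ i, p ≤ s i := by
  have h := @mem_ideal_span_monomial_image (Fin m) F _ g
    (Set.range fun i : Fin m => Finsupp.single i p)
  rw [← Set.range_comp] at h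
  simp only [Function.comp_def, ← X_pow_eq_monomial] at h
  rw [h]
  simp

theorem witt_pderiv_mem {F : Type} [Field F] (p m : ℕ) [CharP F p] (i : Fin m)
    (g : MvPolynomial (Fin m) F)
    (hg : g ∈ Ideal.span (Set.range fun i : Fin m => (X i : MvPolynomial (Fin m) F) ^ p)) :
    pderiv i g ∈ Ideal.span (Set.range fun i : Fin m => (X i : MvPolynomial (Fin m) F) ^ p) := by
  induction hg using Submodule.span_induction with
  | mem x hx =>
    obtain ⟨j, rfl⟩ := hx
    simp [pderiv_pow, CharP.cast_eq_zero]
  | zero => simp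
  | add x y _ _ hx hy => rw [map_add]; exact add_mem hx hy
  | smul a x hx hdx =>
    rw [smul_eq_mul, Derivation.leibniz, smul_eq_mul, smul_eq_mul]
    exact add_mem (Ideal.mul_mem_left _ _ hdx) (Ideal.mul_mem_right _ _ hx)

theorem witt_const {F : Type} [Field F] (p m : ℕ) [CharP F p]
    (g : MvPolynomial (Fin m) F)
    (hg : ∀ i, pderiv i g ∈
      Ideal.span (Set.range fun i : Fin m => (X i : MvPolynomial (Fin m) F) ^ p)) :
    g - C (coeff 0 g) ∈
      Ideal.span (Set.range fun i : Fin m => (X i : MvPolynomial (Fin m) F) ^ p) := by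
  classical
  rw [witt_mem_iff]
  intro s hs
  by_contra hcon
  push Not at hcon
  rw [mem_support_iff, coeff_sub, coeff_C] at hs
  have hs0 : s ≠ 0 := by
    rintro rfl
    simp at hs
  rw [if_neg (Ne.symm hs0), sub_zero] at hs
  obtain ⟨i, hi⟩ := Finsupp.ne_iff.1 hs0
  simp only [Finsupp.coe_zero, Pi.zero_apply] at hi
  have hle : s - Finsupp.single i 1 + Finsupp.single i 1 = s :=
    Finsupp.sub_add_single_one_cancel hi
  have hne : coeff (s - Finsupp.single i 1) (pderiv i g) ≠ 0 := by
    rw [coeff_pderiv, hle]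
    have h1 : ((s i : ℕ) : F) ≠ 0 := by
      intro h0
      rw [CharP.cast_eq_zero_iff F p] at h0
      exact absurd (Nat.le_of_dvd (Nat.pos_of_ne_zero hi) h0) (not_le.2 (hcon i))
    have h3 : (((s - Finsupp.single i 1 : Fin m →₀ ℕ) i : ℕ) : F) + 1 = (s i : F) := by
      have := congrArg (fun t : Fin m →₀ ℕ => ((t i : ℕ) : F)) hle
      simpa only [Finsupp.add_apply, Finsupp.single_eq_same, Nat.cast_add, Nat.cast_one] using this
    exact mul_ne_zero hs (by rw [h3]; exact h1)
  obtain ⟨k, hk⟩ := (witt_mem_iff p m _).1 (hg i) _ (mem_support_iff.2 hne)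
  have h4 : (s - Finsupp.single i 1 : Fin m →₀ ℕ) k ≤ s k := by simp
  have := hcon k
  omega

/-- The Witt algebra `W(m,1) = Der_F(B_m)`, with the commutator bracket, is a
simple Lie algebra over an algebraically closed field of characteristic `p > 3`. -/
theorem wittAlgebra_isSimple
    (p : ℕ) (hp : p.Prime) (hp3 : 3 < p)
    (F : Type) [Field F] [IsAlgClosed F] [CharP F p] (m : ℕ) (hm : 1 ≤ m) :
    LieAlgebra.IsSimple F (Derivation F (TruncPoly F p m) (TruncPoly F p m)) := by
  let J : Ideal (MvPolynomial (Fin m) F) :=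
    Ideal.span (Set.range fun i : Fin m => (X i : MvPolynomial (Fin m) F) ^ p)
  have hnt : Nontrivial (TruncPoly F p m) := by
    apply Ideal.Quotient.nontrivial_iff.2
    rw [Ideal.ne_top_iff_one, witt_mem_iff]
    intro h
    obtain ⟨i, hi⟩ := h 0 (by simp)
    simp at hi
    omega
  have h2 : (2 : F) ≠ 0 := by
    intro h
    have h' : ((2 : ℕ) : F) = 0 := by exact_mod_cast h
    rw [CharP.cast_eq_zero_iff F p] at h'
    have := Nat.le_of_dvd (by norm_num) h'
    omega
  have hsurj : Function.Surjective (Ideal.Quotient.mkₐ F J) := Ideal.Quotient.mkₐ_surjective F J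
  have hz : ∀ i, ∀ x, Ideal.Quotient.mkₐ F J x = 0 →
      Ideal.Quotient.mkₐ F J (pderiv i x) = 0 := by
    intro i x hx
    exact Ideal.Quotient.eq_zero_iff_mem.2
      (witt_pderiv_mem p m i x (Ideal.Quotient.eq_zero_iff_mem.1 hx))
  have hd : ∀ i g, Derivation.liftOfSurjective hsurj (hz i) (Ideal.Quotient.mkₐ F J g) =
      Ideal.Quotient.mkₐ F J (pderiv i g) :=
    fun i g => Derivation.liftOfSurjective_apply hsurj (hz i) g
  refine witt_simple_aux hm h2 (Ideal.Quotient.mkₐ F J) hsurj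
    (fun i => Derivation.liftOfSurjective hsurj (hz i)) hd ?_
  intro a ha
  obtain ⟨g, rfl⟩ := hsurj a
  refine ⟨coeff 0 g, ?_⟩
  have hmem := witt_const p m g (fun i => Ideal.Quotient.eq_zero_iff_mem.1
    ((hd i g).symm.trans (ha i)))
  have h3 : Ideal.Quotient.mkₐ F J g = Ideal.Quotient.mkₐ F J (C (coeff 0 g)) :=
    Ideal.Quotient.eq.2 hmem
  rw [h3]
  rfl
end

section
/- Let p > 3 be a prime, F an algebraically closed field of characteristic p, and m ≥ 1. Let B_m = F[X_1, …, X_m]/(X_1^p, …, X_m^p). Then the Witt algebra W(m,1) = Der_F(B_m) is generated by 2 elements: there exist derivations x, y ∈ Der_F(B_m) such that the smallest Lie subalgebra of Der_F(B_m) containing x and y is Der_F(B_m) itself. -/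
open MvPolynomial

set_option synthInstance.maxHeartbeats 1000000
set_option maxHeartbeats 1000000

/-- Vandermonde-type extraction of eigenvectors from an invariant subspace. -/
theorem mem_of_sum_eigen {F V ι : Type*} [Field F] [AddCommGroup V] [Module F V] [DecidableEq ι]
    (L : Submodule F V) (T : V →ₗ[F] V) (hT : ∀ v ∈ L, T v ∈ L) (μ : ι → F)
    (s : Finset ι) (hμ : Set.InjOn μ s) :
    ∀ v : ι → V, (∀ i ∈ s, T (v i) = μ i • v i) → ∑ i ∈ s, v i ∈ L → ∀ i ∈ s, v i ∈ L := by
  induction s using Finset.induction_on with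
  | empty => intro v _ _ i hi; simp at hi
  | insert j s hj ih =>
    intro v hv hsum
    have h1 : ∑ i ∈ s, (μ i - μ j) • v i ∈ L := by
      have h2 := L.sub_mem (hT _ hsum) (L.smul_mem (μ j) hsum)
      convert h2 using 1
      rw [map_sum, Finset.smul_sum, ← Finset.sum_sub_distrib, Finset.sum_insert hj,
        hv j (Finset.mem_insert_self _ _), sub_self, zero_add]
      refine Finset.sum_congr rfl fun i hi => ?_
      rw [hv i (Finset.mem_insert_of_mem hi), sub_smul]
    have h3 : ∀ i ∈ s, v i ∈ L := by
      intro i hi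
      have h4 := ih (hμ.mono (by simp)) (fun i => (μ i - μ j) • v i) (by
        intro i hi
        simp only [map_smul]
        rw [hv i (Finset.mem_insert_of_mem hi), smul_comm]) h1 i hi
      have hne : μ i - μ j ≠ 0 := by
        intro h
        have := hμ (by simp [hi]) (by simp) (sub_eq_zero.1 h)
        exact hj (this ▸ hi)
      have := L.smul_mem (μ i - μ j)⁻¹ h4
      simpa [smul_smul, inv_mul_cancel₀ hne] using this
    intro i hi
    rcases Finset.mem_insert.1 hi with rfl | hi
    · rw [Finset.sum_insert hj] at hsum
      exact (L.add_mem_iff_left (L.sum_mem h3)).1 hsum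
    · exact h3 i hi

/-- A derivation acting diagonally on generators acts diagonally on monomials. -/
theorem deriv_prod_eigen {F B ι : Type*} [Field F] [CommRing B] [Algebra F B] [DecidableEq ι]
    (D : Derivation F B B) (x : ι → B) (c : ι → F) (a : ι → ℕ) (s : Finset ι)
    (h : ∀ i ∈ s, D (x i) = c i • x i) :
    D (∏ i ∈ s, x i ^ a i) = (∑ i ∈ s, (a i : F) * c i) • ∏ i ∈ s, x i ^ a i := by
  induction s using Finset.induction_on with
  | empty => simp
  | insert j s hj ih =>
    rw [Finset.prod_insert hj, Finset.sum_insert hj, Derivation.leibniz,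
      ih fun i hi => h i (Finset.mem_insert_of_mem hi), Derivation.leibniz_pow,
      h j (Finset.mem_insert_self _ _)]
    have : (a j) • x j ^ (a j - 1) • c j • x j = ((a j : F) * c j) • x j ^ a j := by
      rcases Nat.eq_zero_or_pos (a j) with h0 | h0
      · simp [h0]
      · rw [smul_comm (x j ^ (a j - 1)) (c j), smul_eq_mul, ← pow_succ, Nat.sub_add_cancel h0,
          mul_smul, Nat.cast_smul_eq_nsmul]
    rw [this]
    simp only [smul_eq_mul, add_smul, mul_smul_comm]
    rw [mul_comm (∏ i ∈ s, x i ^ a i)]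
    ring

theorem deriv_sum_apply {F B ι : Type*} [Field F] [CommRing B] [Algebra F B]
    (s : Finset ι) (D : ι → Derivation F B B) (b : B) : (∑ i ∈ s, D i) b = ∑ i ∈ s, D i b := by
  classical
  induction s using Finset.induction_on with
  | empty => simp
  | insert j s hj ih => rw [Finset.sum_insert hj, Finset.sum_insert hj, Derivation.add_apply, ih]

theorem exists_weights (p : ℕ) (hp : p.Prime) (hp3 : 3 < p)
    (F : Type) [Field F] [IsAlgClosed F] [CharP F p] (m : ℕ) (hm : 1 ≤ m) :
    ∃ l : Fin m → F, Function.Injective l ∧ ∀ i j, l i - l j ≠ ∑ k, l k := by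
  haveI : Fact p.Prime := ⟨hp⟩
  letI : Algebra (ZMod p) F := ZMod.algebra F p
  have hr : (m : Cardinal) ≤ Module.rank (ZMod p) F := by
    by_contra hlt
    push Not at hlt
    have : Module.Finite (ZMod p) F :=
      Module.rank_lt_aleph0_iff.1 (hlt.trans (Cardinal.natCast_lt_aleph0))
    have : Finite F := Module.finite_of_finite (ZMod p)
    exact not_finite F
  obtain ⟨l, hl⟩ := exists_linearIndependent_of_le_rank hr
  refine ⟨l, hl.injective, fun i j h => ?_⟩
  rw [Fintype.linearIndependent_iff] at hl
  have := hl (fun k => 1 - (if k = i then 1 else 0) + (if k = j then 1 else 0)) (by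
    simp [add_smul, sub_smul, Finset.sum_add_distrib, ite_smul, Finset.sum_sub_distrib, ← h]) j
  by_cases hij : j = i
  · subst hij; simp at this
  · simp only [hij, if_false, if_true] at this
    have h2 : ((2 : ℕ) : ZMod p) = 0 := by push_cast; linear_combination this
    rw [ZMod.natCast_eq_zero_iff] at h2
    have := Nat.le_of_dvd (by norm_num) h2
    omega

theorem witt_abstract (p : ℕ) (hp : p.Prime) (hp3 : 3 < p)
    (F : Type) [Field F] [IsAlgClosed F] [CharP F p] (m : ℕ) (hm : 1 ≤ m)
    (B : Type) [CommRing B] [Algebra F B] (x : Fin m → B) (hx : ∀ i, x i ^ p = 0)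
    (hs : Function.Surjective (aeval x : MvPolynomial (Fin m) F →ₐ[F] B))
    (d : Fin m → Derivation F B B) (hd : ∀ i j, d i (x j) = if i = j then 1 else 0) :
    ∃ X Y : Derivation F B B, LieSubalgebra.lieSpan F (Derivation F B B) {X, Y} = ⊤ := by
  obtain ⟨l, hinj, hl⟩ := exists_weights p hp hp3 F m hm
  have hext : ∀ D E : Derivation F B B, (∀ i, D (x i) = E (x i)) → D = E := by
    intro D E h
    refine Derivation.ext_of_adjoin_eq_top (Set.range x) ?_ ?_
    · rw [Algebra.adjoin_range_eq_range_aeval]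
      exact (AlgHom.range_eq_top _).2 hs
    · rintro _ ⟨i, rfl⟩; exact h i
  have hcomm : ∀ i j, ⁅d i, d j⁆ = 0 := by
    intro i j
    apply hext
    intro k
    rw [Derivation.commutator_apply, hd, hd]
    split_ifs <;> simp
  -- brackets with multiples
  have hbr : ∀ (i j) (f : B), ⁅d j, f • d i⁆ = d j f • d i := by
    intro i j f
    ext b
    have := congrArg (fun D : Derivation F B B => D b) (hcomm j i)
    simp only [Derivation.commutator_apply, Derivation.zero_apply] at this
    simp only [Derivation.commutator_apply, Derivation.smul_apply, Derivation.leibniz, smul_eq_mul]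
    linear_combination f * this
  let H : Derivation F B B := ∑ i, (l i • x i) • d i
  have hH : ∀ i, H (x i) = l i • x i := by
    intro i
    simp only [H]
    rw [deriv_sum_apply]
    simp [hd]
  let M : (Fin m → ℕ) → B := fun a => ∏ i, x i ^ a i
  have hHM : ∀ a, H (M a) = (∑ i, (a i : F) * l i) • M a := fun a =>
    deriv_prod_eigen H x l a Finset.univ fun i _ => hH i
  have hHd : ∀ i, ⁅H, d i⁆ = (- l i) • d i := by
    intro i
    apply hext
    intro k
    rw [Derivation.commutator_apply, hH, Derivation.smul_apply, Derivation.map_smul, hd]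
    split_ifs with h
    · subst h; simp
    · simp
  have hHf : ∀ i (f : B) (c : F), H f = c • f → ⁅H, f • d i⁆ = (c - l i) • (f • d i) := by
    intro i f c hf
    have h1 : ⁅H, f • d i⁆ = H f • d i + f • ⁅H, d i⁆ := by
      ext b
      simp only [Derivation.commutator_apply, Derivation.smul_apply, Derivation.leibniz,
        smul_eq_mul, Derivation.add_apply]
      ring
    rw [h1, hf, hHd, sub_smul, smul_comm f (-l i), neg_smul, smul_assoc]
    abel
  let top : B := M fun _ => p - 1
  have hcast : ((p - 1 : ℕ) : F) = -1 := by
    rw [Nat.cast_sub hp.one_lt.le, CharP.cast_eq_zero]; simp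
  have hHtop : H top = (- ∑ i, l i) • top := by
    rw [hHM]
    simp only [hcast]
    congr 1
    simp
  let v : Fin m ⊕ Fin m → Derivation F B B := Sum.elim d fun i => top • d i
  let μ : Fin m ⊕ Fin m → F := Sum.elim (fun i => - l i) fun i => - ∑ k, l k - l i
  refine ⟨H, ∑ i, v i, ?_⟩
  set L := LieSubalgebra.lieSpan F (Derivation F B B) {H, ∑ i, v i} with hL
  have hHL : H ∈ L := LieSubalgebra.subset_lieSpan (by simp)
  have hvL : ∑ i, v i ∈ L := LieSubalgebra.subset_lieSpan (by simp)
  have hμ : Function.Injective μ := by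
    rintro (i | i) (j | j) h <;> simp only [μ, Sum.elim_inl, Sum.elim_inr] at h
    · rw [hinj (neg_injective h)]
    · exact absurd (by linear_combination -h) (hl i j)
    · exact absurd (by linear_combination h) (hl j i)
    · rw [hinj (sub_right_injective h)]
  have hv : ∀ i, v i ∈ L := by
    intro i
    refine mem_of_sum_eigen L.toSubmodule (LieAlgebra.ad F (Derivation F B B) H : _ →ₗ[F] _)
      (fun w hw => L.lie_mem hHL hw) μ Finset.univ hμ.injOn v ?_ hvL i (Finset.mem_univ _)
    rintro (i | i) _
    · exact hHd i
    · exact hHf i top _ hHtop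
  have hdL : ∀ i, d i ∈ L := fun i => hv (Sum.inl i)
  have htL : ∀ i, top • d i ∈ L := fun i => hv (Sum.inr i)
  -- derivative of monomials
  have hdM : ∀ (a : Fin m → ℕ) j,
      d j (M (Function.update a j (a j + 1))) = ((a j + 1 : ℕ) : F) • M a := by
    intro a j
    have e : ∀ n, M (Function.update a j n) =
        x j ^ n * ∏ i ∈ Finset.univ.erase j, x i ^ a i := by
      intro n
      simp only [M]
      rw [← Finset.mul_prod_erase _ _ (Finset.mem_univ j), Function.update_self]
      congr 1
      refine Finset.prod_congr rfl fun i hi => ?_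
      rw [Function.update_of_ne (Finset.ne_of_mem_erase hi)]
    have e2 := e (a j)
    rw [Function.update_eq_self] at e2
    have h0 : d j (∏ i ∈ Finset.univ.erase j, x i ^ a i) = 0 := by
      rw [deriv_prod_eigen (d j) x 0 a _ (fun i hi => by
        rw [hd, if_neg (Finset.ne_of_mem_erase hi).symm]; simp)]
      simp
    rw [e, e2, Derivation.leibniz, h0, Derivation.leibniz_pow, hd, if_pos rfl,
      Nat.cast_smul_eq_nsmul]
    simp [mul_comm]
    ring
  have hML : ∀ k (n : ℕ) (a : Fin m → ℕ), (∀ i, a i ≤ p - 1) → ∑ i, (p - 1 - a i) = n →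
      M a • d k ∈ L := by
    intro k n
    induction n with
    | zero =>
      intro a ha hn
      have : a = fun _ => p - 1 := by
        funext i
        have := (Finset.sum_eq_zero_iff.1 hn) i (Finset.mem_univ _)
        have := ha i
        omega
      rw [this]
      exact htL k
    | succ n ih =>
      intro a ha hn
      obtain ⟨j, hj⟩ : ∃ j, p - 1 - a j ≠ 0 := by
        by_contra hcon
        push Not at hcon
        simp [hcon] at hn
      have h1 := ih (Function.update a j (a j + 1)) (by
        intro i
        by_cases hi : i = j
        · subst hi; rw [Function.update_self]; omega
        · rw [Function.update_of_ne hi]; exact ha i) (by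
        rw [← Finset.add_sum_erase _ _ (Finset.mem_univ j)] at hn ⊢
        rw [Function.update_self]
        rw [Finset.sum_congr rfl (fun i hi => by
          rw [Function.update_of_ne (Finset.ne_of_mem_erase hi)])]
        omega)
      have h2 := L.lie_mem (hdL j) h1
      rw [hbr, hdM, smul_assoc] at h2
      have hne : ((a j + 1 : ℕ) : F) ≠ 0 := by
        rw [Ne, CharP.cast_eq_zero_iff F p]
        intro h
        have := Nat.le_of_dvd (Nat.succ_pos _) h
        omega
      have h3 := L.smul_mem ((a j + 1 : ℕ) : F)⁻¹ h2
      rwa [smul_smul, inv_mul_cancel₀ hne, one_smul] at h3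
  have hML' : ∀ k a, M a • d k ∈ L := by
    intro k a
    by_cases h : ∀ i, a i ≤ p - 1
    · exact hML k _ a h rfl
    · push Not at h
      obtain ⟨i, hi⟩ := h
      have : M a = 0 := by
        refine Finset.prod_eq_zero (Finset.mem_univ i) ?_
        exact pow_eq_zero_of_le (by omega) (hx i)
      rw [this, zero_smul]
      exact L.zero_mem
  have hfL : ∀ k (f : B), f • d k ∈ L := by
    intro k f
    obtain ⟨q, rfl⟩ := hs f
    induction q using MvPolynomial.induction_on' with
    | monomial u c =>
      rw [aeval_monomial, Finsupp.prod_fintype _ _ (by simp), ← Algebra.smul_def, smul_assoc]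
      exact L.smul_mem c (hML' k u)
    | add q r hq hr =>
      rw [map_add, add_smul]
      exact L.add_mem hq hr
  rw [eq_top_iff]
  intro D _
  have : D = ∑ i, D (x i) • d i := by
    apply hext
    intro k
    rw [deriv_sum_apply]
    simp [hd]
  rw [this]
  exact sum_mem fun i _ => hfL i _

/-- The Witt algebra `W(m,1) = Der_F(B_m)` over an algebraically closed field of
characteristic `p > 3` is generated by 2 elements. -/
theorem wittAlgebra_generated_by_two_elements
    (p : ℕ) (hp : p.Prime) (hp3 : 3 < p)
    (F : Type) [Field F] [IsAlgClosed F] [CharP F p] (m : ℕ) (hm : 1 ≤ m) :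
    ∃ x y : Derivation F (TruncPoly F p m) (TruncPoly F p m),
      LieSubalgebra.lieSpan F (Derivation F (TruncPoly F p m) (TruncPoly F p m)) {x, y} = ⊤ := by
  set I : Ideal (MvPolynomial (Fin m) F) :=
    Ideal.span (Set.range fun i : Fin m => (X i : MvPolynomial (Fin m) F) ^ p) with hI
  have hsurj : Function.Surjective (Ideal.Quotient.mkₐ F I) := Ideal.Quotient.mkₐ_surjective F I
  have hker : ∀ i : Fin m, ∀ f, Ideal.Quotient.mkₐ F I f = 0 →
      Ideal.Quotient.mkₐ F I (pderiv (R := F) i f) = 0 := by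
    intro i f hf
    rw [Ideal.Quotient.mkₐ_eq_mk, Ideal.Quotient.eq_zero_iff_mem] at hf ⊢
    refine Submodule.span_induction (p := fun f _ => pderiv i f ∈ I) ?_ ?_ ?_ ?_ hf
    · rintro _ ⟨j, rfl⟩
      have hc : ((p : ℕ) : MvPolynomial (Fin m) F) = 0 := CharP.cast_eq_zero _ p
      simp [Derivation.leibniz_pow, hc]
    · simp
    · intro a b _ _ ha hb
      rw [map_add]; exact I.add_mem ha hb
    · intro a b hb hb'
      rw [smul_eq_mul, Derivation.leibniz]
      exact I.add_mem (I.mul_mem_left _ hb') (I.mul_mem_right _ hb)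
  refine witt_abstract p hp hp3 F m hm (TruncPoly F p m) (fun i => Ideal.Quotient.mkₐ F I (X i))
    ?_ ?_ (fun i => Derivation.liftOfSurjective hsurj (hker i)) ?_
  · intro i
    rw [← map_pow, Ideal.Quotient.mkₐ_eq_mk, Ideal.Quotient.eq_zero_iff_mem]
    exact Ideal.subset_span ⟨i, rfl⟩
  · have : (aeval (fun i => Ideal.Quotient.mkₐ F I (X i)) :
        MvPolynomial (Fin m) F →ₐ[F] TruncPoly F p m) = Ideal.Quotient.mkₐ F I := by
      ext i; simp
    rw [this]
    exact hsurj
  · intro i j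
    rw [Derivation.liftOfSurjective_apply, pderiv_X]
    by_cases h : i = j
    · subst h; simp
    · simp [h, Pi.single_apply, Ne.symm h]
end

section
/- Let p > 3 be a prime, F an algebraically closed field of characteristic p, and m ≥ 1. Let B_m = F[X_1, …, X_m]/(X_1^p, …, X_m^p), with x_i the image of X_i and x^τ the image of (X_1 ⋯ X_m)^{p−1}, and let W = Der_F(B_m) be the Witt algebra. Let x ∈ W be a homogeneous derivation of maximal degree, i.e., x = x^τ · d for some derivation d ∈ W with d(x_i) ∈ F·1 for every i (here x^τ · d denotes the derivation b ↦ x^τ · d(b)). Let y ∈ W be arbitrary and let L be the smallest Lie subalgebra of W containing x and y. Then the derived subalgebra [L,L], the F-linear span of all brackets ⁅a,b⁆ with a, b ∈ L, has dimension at most p^m over F. -/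
open MvPolynomial

set_option synthInstance.maxHeartbeats 1000000
set_option maxHeartbeats 1000000

section semicont
variable {F W : Type} [Field F]

/-- Polynomial families of vectors. -/
def PolyFam (F W : Type) [Field F] [AddCommGroup W] [Module F W] : Submodule F (F → W) :=
  Submodule.span F {f | ∃ (i : ℕ) (a : W), f = fun t => t ^ i • a}

lemma PolyFam.mono [AddCommGroup W] [Module F W] (i : ℕ) (a : W) :
    (fun t : F => t ^ i • a) ∈ PolyFam F W := Submodule.subset_span ⟨i, a, rfl⟩

lemma PolyFam.const [AddCommGroup W] [Module F W] (a : W) :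
    (fun _ : F => a) ∈ PolyFam F W := by
  simpa using PolyFam.mono (F := F) 0 a

lemma PolyFam.line [AddCommGroup W] [Module F W] (a b : W) :
    (fun t : F => a + t • b) ∈ PolyFam F W := by
  have := Submodule.add_mem _ (PolyFam.const (F := F) a) (PolyFam.mono (F := F) 1 b)
  convert this using 1
  funext t
  simp

lemma PolyFam.bilin {W₁ W₂ : Type} [AddCommGroup W] [Module F W] [AddCommGroup W₁] [Module F W₁]
    [AddCommGroup W₂] [Module F W₂] (β : W →ₗ[F] W₁ →ₗ[F] W₂) {f : F → W} {g : F → W₁}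
    (hf : f ∈ PolyFam F W) (hg : g ∈ PolyFam F W₁) :
    (fun t => β (f t) (g t)) ∈ PolyFam F W₂ := by
  induction hf using Submodule.span_induction with
  | mem f hf =>
    obtain ⟨i, a, rfl⟩ := hf
    induction hg using Submodule.span_induction with
    | mem g hg =>
      obtain ⟨j, b, rfl⟩ := hg
      have := PolyFam.mono (F := F) (i + j) (β a b)
      convert this using 2 with t
      simp [pow_add, mul_smul, smul_comm (t ^ i)]
    | zero =>
      convert Submodule.zero_mem (PolyFam F W₂) using 1
      funext t
      simp
    | add g g' _ _ h h' =>
      convert Submodule.add_mem _ h h' using 1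
      funext t
      simp
    | smul c g _ h =>
      convert Submodule.smul_mem _ c h using 1
      funext t
      simp
  | zero =>
    convert Submodule.zero_mem (PolyFam F W₂) using 1
    funext t
    simp
  | add f f' _ _ h h' =>
    convert Submodule.add_mem _ h h' using 1
    funext t
    simp
  | smul c g _ h =>
    convert Submodule.smul_mem _ c h using 1
    funext t
    simp

lemma PolyFam.poly [AddCommGroup W] [Module F W] (l : W →ₗ[F] F) {f : F → W}
    (hf : f ∈ PolyFam F W) : ∃ q : Polynomial F, ∀ t, l (f t) = q.eval t := by
  induction hf using Submodule.span_induction with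
  | mem f hf =>
    obtain ⟨i, a, rfl⟩ := hf
    exact ⟨Polynomial.C (l a) * Polynomial.X ^ i, fun t => by simp only [map_smul, smul_eq_mul, Polynomial.eval_mul, Polynomial.eval_C, Polynomial.eval_pow, Polynomial.eval_X]; ring⟩
  | zero => exact ⟨0, fun t => by simp⟩
  | add g g' _ _ h h' =>
    obtain ⟨q, hq⟩ := h
    obtain ⟨q', hq'⟩ := h'
    exact ⟨q + q', fun t => by simp [hq, hq']⟩
  | smul c g _ h =>
    obtain ⟨q, hq⟩ := h
    exact ⟨Polynomial.C c * q, fun t => by simp [hq]⟩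

lemma rank_semicont [Infinite F] [AddCommGroup W] [Module F W] (N : ℕ)
    (M : F → Submodule F W) (q : Polynomial F) (hq : q ≠ 0)
    (hM : ∀ t, q.eval t ≠ 0 → Module.rank F (M t) ≤ (N : Cardinal))
    (t₀ : F) (hs : ∀ z ∈ M t₀, ∃ f ∈ PolyFam F W, f t₀ = z ∧ ∀ t, f t ∈ M t) :
    Module.rank F (M t₀) ≤ (N : Cardinal) := by
  by_contra hcon
  have h1 : ((N + 1 : ℕ) : Cardinal) ≤ Module.rank F (M t₀) := by
    rw [not_le] at hcon
    have := Order.succ_le_of_lt hcon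
    rw [Cardinal.succ_natCast] at this; exact_mod_cast this
  obtain ⟨v, hv⟩ := Module.le_rank_iff.1 h1
  choose f hfP hf0 hfM using fun i => hs (v i) (v i).2
  have hv' : LinearIndependent F (fun i => f i t₀) := by
    have := hv.map' (M t₀).subtype (Submodule.ker_subtype _)
    have e : (fun i => f i t₀) = (M t₀).subtype ∘ v := funext fun i => hf0 i
    rw [e]
    exact this
  obtain ⟨g, hg⟩ := LinearMap.exists_leftInverse_of_injective
    (Finsupp.linearCombination F (fun i => f i t₀)) (LinearMap.ker_eq_bot.2 hv')
  choose Q hQ using fun i j => PolyFam.poly ((Finsupp.lapply j).comp g) (hfP i)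
  let A : Matrix (Fin (N + 1)) (Fin (N + 1)) (Polynomial F) := Matrix.of Q
  have hA : ∀ t, (A.det).eval t = (Matrix.of fun i j => (g (f i t)) j).det := by
    intro t
    rw [← Polynomial.coe_evalRingHom, RingHom.map_det]
    congr 1
    ext i j
    simp [A, ← hQ]
  have hA0 : A.det ≠ 0 := by
    intro h
    have := hA t₀
    rw [h] at this
    have h2 : (Matrix.of fun i j => (g (f i t₀)) j) = (1 : Matrix (Fin (N+1)) (Fin (N+1)) F) := by
      ext i j
      have := LinearMap.congr_fun hg (Finsupp.single i 1)
      simp at this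
      simp [this, Finsupp.single_apply, Matrix.one_apply]
    rw [h2] at this
    simp at this
  obtain ⟨t, ht⟩ := Polynomial.exists_eval_ne_zero_of_natDegree_lt_card (q * A.det)
    (mul_ne_zero hq hA0) (lt_of_lt_of_le Cardinal.natCast_lt_aleph0 (Cardinal.infinite_iff.1 inferInstance))
  rw [Polynomial.eval_mul] at ht
  have ht1 := left_ne_zero_of_mul ht
  have ht2 := right_ne_zero_of_mul ht
  rw [hA] at ht2
  have hind : LinearIndependent F (fun i => f i t) := by
    rw [Fintype.linearIndependent_iff]
    intro c hc
    have hrow := Matrix.linearIndependent_rows_of_det_ne_zero ht2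
    rw [Fintype.linearIndependent_iff] at hrow
    apply hrow c
    ext j
    have := congrArg (fun z => g z j) hc
    simpa [Finsupp.finsetSum_apply] using this
  have hind' : LinearIndependent F (fun i => (⟨f i t, hfM i t⟩ : M t)) :=
    LinearIndependent.of_comp (M t).subtype hind
  have h3 := Module.le_rank_iff.2 ⟨_, hind'⟩
  have h4 := h3.trans (hM t ht1)
  norm_cast at h4
  omega

lemma lie_rank_semicont [Infinite F] [LieRing W] [LieAlgebra F W] (N : ℕ) (x y₀ y : W)
    (q : Polynomial F) (hq : q ≠ 0)
    (hM : ∀ t, q.eval t ≠ 0 → Module.rank F (Submodule.span F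
        {z : W | ∃ a ∈ LieSubalgebra.lieSpan F W {x, y₀ + t • (y - y₀)},
          ∃ b ∈ LieSubalgebra.lieSpan F W {x, y₀ + t • (y - y₀)}, ⁅a, b⁆ = z}) ≤ (N : Cardinal)) :
    Module.rank F (Submodule.span F
        {z : W | ∃ a ∈ LieSubalgebra.lieSpan F W {x, y},
          ∃ b ∈ LieSubalgebra.lieSpan F W {x, y}, ⁅a, b⁆ = z}) ≤ (N : Cardinal) := by
  let M : F → Submodule F W := fun t => Submodule.span F
        {z : W | ∃ a ∈ LieSubalgebra.lieSpan F W {x, y₀ + t • (y - y₀)},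
          ∃ b ∈ LieSubalgebra.lieSpan F W {x, y₀ + t • (y - y₀)}, ⁅a, b⁆ = z}
  have hy : y₀ + (1 : F) • (y - y₀) = y := by simp
  have bil : ∀ f ∈ PolyFam F W, ∀ g ∈ PolyFam F W, (fun t => ⁅f t, g t⁆) ∈ PolyFam F W := by
    intro f hf g hg
    exact PolyFam.bilin (LieModule.toEnd F W W : W →ₗ[F] W →ₗ[F] W) hf hg
  have sec : ∀ a ∈ LieSubalgebra.lieSpan F W {x, y}, ∃ f ∈ PolyFam F W, f 1 = a ∧
      ∀ t, f t ∈ LieSubalgebra.lieSpan F W {x, y₀ + t • (y - y₀)} := by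
    intro a ha
    induction ha using LieSubalgebra.lieSpan_induction with
    | mem a ha =>
      rcases ha with rfl | rfl
      · exact ⟨_, PolyFam.const a, rfl, fun t => LieSubalgebra.subset_lieSpan (by simp)⟩
      · exact ⟨_, PolyFam.line y₀ (a - y₀), hy, fun t => LieSubalgebra.subset_lieSpan (by simp)⟩
    | zero => exact ⟨0, Submodule.zero_mem _, rfl, fun t => LieSubalgebra.zero_mem _⟩
    | add a b _ _ h h' =>
      obtain ⟨f, hf, rfl, hf'⟩ := h
      obtain ⟨g, hg, rfl, hg'⟩ := h'
      exact ⟨f + g, Submodule.add_mem _ hf hg, rfl, fun t => add_mem (hf' t) (hg' t)⟩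
    | smul c a _ h =>
      obtain ⟨f, hf, rfl, hf'⟩ := h
      exact ⟨c • f, Submodule.smul_mem _ c hf, rfl, fun t => LieSubalgebra.smul_mem _ c (hf' t)⟩
    | lie a b _ _ h h' =>
      obtain ⟨f, hf, rfl, hf'⟩ := h
      obtain ⟨g, hg, rfl, hg'⟩ := h'
      exact ⟨_, bil f hf g hg, rfl, fun t => LieSubalgebra.lie_mem _ (hf' t) (hg' t)⟩
  have := rank_semicont N M q hq hM 1 (by
    intro z hz
    simp only [M, hy] at hz
    induction hz using Submodule.span_induction with
    | mem z hz =>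
      obtain ⟨a, ha, b, hb, rfl⟩ := hz
      obtain ⟨f, hf, rfl, hf'⟩ := sec a ha
      obtain ⟨g, hg, rfl, hg'⟩ := sec b hb
      exact ⟨_, bil f hf g hg, rfl, fun t => Submodule.subset_span ⟨_, hf' t, _, hg' t, rfl⟩⟩
    | zero => exact ⟨0, Submodule.zero_mem _, rfl, fun t => Submodule.zero_mem _⟩
    | add a b _ _ h h' =>
      obtain ⟨f, hf, rfl, hf'⟩ := h
      obtain ⟨g, hg, rfl, hg'⟩ := h'
      exact ⟨f + g, Submodule.add_mem _ hf hg, rfl, fun t => add_mem (hf' t) (hg' t)⟩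
    | smul c a _ h =>
      obtain ⟨f, hf, rfl, hf'⟩ := h
      exact ⟨c • f, Submodule.smul_mem _ c hf, rfl, fun t => Submodule.smul_mem _ c (hf' t)⟩)
  have e : M 1 = Submodule.span F
        {z : W | ∃ a ∈ LieSubalgebra.lieSpan F W {x, y},
          ∃ b ∈ LieSubalgebra.lieSpan F W {x, y}, ⁅a, b⁆ = z} := by
    simp only [M, hy]
  rw [← e]
  exact this

end semicont

section abstractB
variable {F B : Type} [Field F] [CommRing B] [Algebra F B]

/-- The endomorphism underlying a derivation. -/
abbrev dEnd (y : Derivation F B B) : Module.End F B := (y : B →ₗ[F] B)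

lemma exists_deriv_pow_char [Nontrivial B] (p : ℕ) [Fact p.Prime] [CharP F p]
    (y : Derivation F B B) : ∃ D : Derivation F B B, dEnd D = dEnd y ^ p := by
  have : CharP (Module.End F (Module.End F B)) p :=
    charP_of_injective_algebraMap (algebraMap F (Module.End F (Module.End F B))).injective p
  have key : ∀ (k : ℕ) (a : B), ((LinearMap.mulLeft F (dEnd y) - LinearMap.mulRight F (dEnd y) :
      Module.End F (Module.End F B)) ^ k)
      (LinearMap.mulLeft F a : Module.End F B) = (LinearMap.mulLeft F ((dEnd y ^ k) a) : Module.End F B) := by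
    intro k
    induction k with
    | zero => intro a; rfl
    | succ k ih =>
      intro a
      have h1 : (LinearMap.mulLeft F (dEnd y) - LinearMap.mulRight F (dEnd y))
          (LinearMap.mulLeft F a : Module.End F B) = (LinearMap.mulLeft F (y a) : Module.End F B) := by
        ext b
        simp [mul_comm]
      rw [pow_succ, pow_succ, Module.End.mul_apply, h1, ih, Module.End.mul_apply]
      rfl
  have hleib : ∀ a b : B, (dEnd y ^ p) (a * b) = a * (dEnd y ^ p) b + b * (dEnd y ^ p) a := by
    intro a b
    have h := key p a
    have hc : (LinearMap.mulLeft F (dEnd y) - LinearMap.mulRight F (dEnd y) :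
        Module.End F (Module.End F B)) ^ p = LinearMap.mulLeft F (dEnd y) ^ p -
          LinearMap.mulRight F (dEnd y) ^ p :=
      sub_pow_char_of_commute (R := Module.End F (Module.End F B)) (p := p)
        (x := LinearMap.mulLeft F (dEnd y)) (y := LinearMap.mulRight F (dEnd y))
        (LinearMap.commute_mulLeft_right (R := F) (dEnd y) (dEnd y))
    rw [hc, LinearMap.pow_mulLeft, LinearMap.pow_mulRight] at h
    have := LinearMap.congr_fun h b
    simp only [LinearMap.sub_apply, LinearMap.mulLeft_apply, LinearMap.mulRight_apply,
      Module.End.mul_apply] at this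
    rw [mul_comm b, ← this]
    ring
  exact ⟨Derivation.mk' (dEnd y ^ p) (by intro a b; simpa using hleib a b), by ext; rfl⟩

lemma exists_deriv_pow_char_pow [Nontrivial B] (p : ℕ) [Fact p.Prime] [CharP F p]
    (y : Derivation F B B) (i : ℕ) : ∃ D : Derivation F B B, dEnd D = dEnd y ^ (p ^ i) := by
  induction i with
  | zero => exact ⟨y, by simp⟩
  | succ i ih =>
    obtain ⟨D, hD⟩ := ih
    obtain ⟨D', hD'⟩ := exists_deriv_pow_char p D
    exact ⟨D', by rw [hD', hD, pow_succ, pow_mul]⟩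

variable (u : B) (ε : B →ₐ[F] F) (hu : ∀ b, b * u = ε b • u)
  (hker : ∀ b, ε b = 0 → IsNilpotent b)

/-- The cyclic module generated by `u` under `y`. -/
def cyc (u : B) (y : Derivation F B B) : Submodule F B :=
  Submodule.span F (Set.range fun k : ℕ => (dEnd y ^ k) u)

lemma cyc_pow_mem (y : Derivation F B B) (k : ℕ) : (dEnd y ^ k) u ∈ cyc u y :=
  Submodule.subset_span ⟨k, rfl⟩

lemma cyc_stable (y : Derivation F B B) {b : B} (hb : b ∈ cyc u y) : y b ∈ cyc u y := by
  induction hb using Submodule.span_induction with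
  | mem b hb =>
    obtain ⟨k, rfl⟩ := hb
    have := cyc_pow_mem u y (k + 1)
    rwa [pow_succ', Module.End.mul_apply] at this
  | zero => simp
  | add a b _ _ h h' => simpa using add_mem h h'
  | smul c a _ h => simpa using Submodule.smul_mem _ c h

include hu in
lemma cyc_mul (y : Derivation F B B) (b c : B) (hc : c ∈ cyc u y) : b * c ∈ cyc u y := by
  induction hc using Submodule.span_induction with
  | mem c hc =>
    obtain ⟨k, rfl⟩ := hc
    dsimp only
    induction k generalizing b with
    | zero =>
      have : b * u ∈ cyc u y := by
        rw [hu]; exact Submodule.smul_mem _ _ (cyc_pow_mem u y 0)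
      simpa using this
    | succ k ih =>
      have h1 := cyc_stable u y (ih b)
      have h2 := ih (y b)
      have : b * (dEnd y ^ (k + 1)) u = y (b * (dEnd y ^ k) u) - y b * (dEnd y ^ k) u := by
        rw [pow_succ', Module.End.mul_apply, Derivation.leibniz]
        simp [mul_comm]
      rw [this]
      exact sub_mem h1 h2
  | zero => simp
  | add a b _ _ h h' => rw [mul_add]; exact add_mem h h'
  | smul r a _ h => rw [mul_smul_comm]; exact Submodule.smul_mem _ r h

include hker in
lemma isUnit_of_eps (b : B) (hb : ε b ≠ 0) : IsUnit b := by
  have h1 : IsNilpotent (b - algebraMap F B (ε b)) := hker _ (by simp)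
  have h2 : IsUnit (algebraMap F B (ε b)) := (IsUnit.mk0 _ hb).map _
  have := h1.isUnit_add_right_of_commute h2 (Commute.all _ _)
  simpa using this

include hu hker in
lemma cyc_top (y : Derivation F B B) (n : ℕ) (hn : ε ((dEnd y ^ n) u) ≠ 0) : cyc u y = ⊤ := by
  rw [eq_top_iff]
  intro b _
  obtain ⟨w, hw⟩ := (isUnit_of_eps ε hker _ hn).exists_left_inv
  have := cyc_mul u ε hu y (b * w) _ (cyc_pow_mem u y n)
  rwa [mul_assoc, hw, mul_one] at this

/-- A polynomial annihilating `y` bounds the dimension of a cyclic space. -/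
lemma finrank_le_of_annihil (y : Derivation F B B) (htop : cyc u y = ⊤) (q : Polynomial F)
    (hq : q ≠ 0) (hqy : Polynomial.aeval (dEnd y) q = 0) : Module.finrank F B ≤ q.natDegree := by
  let Φ : Polynomial.degreeLT F q.natDegree →ₗ[F] B :=
    ((LinearMap.applyₗ u).comp (Polynomial.aeval (dEnd y)).toLinearMap).comp
      (Polynomial.degreeLT F q.natDegree).subtype
  have hΦ : Function.Surjective Φ := by
    have h1 : ∀ b ∈ cyc u y, ∃ g : Polynomial F, Polynomial.aeval (dEnd y) g u = b := by
      intro b hb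
      induction hb using Submodule.span_induction with
      | mem b hb =>
        obtain ⟨k, rfl⟩ := hb
        exact ⟨Polynomial.X ^ k, by simp⟩
      | zero => exact ⟨0, by simp⟩
      | add a b _ _ h h' =>
        obtain ⟨g, rfl⟩ := h
        obtain ⟨g', rfl⟩ := h'
        exact ⟨g + g', by simp⟩
      | smul c a _ h =>
        obtain ⟨g, rfl⟩ := h
        exact ⟨c • g, by simp⟩
    intro b
    obtain ⟨g, rfl⟩ := h1 b (htop ▸ Submodule.mem_top)
    refine ⟨⟨g % q, ?_⟩, ?_⟩
    · rw [Polynomial.mem_degreeLT, ← Polynomial.degree_eq_natDegree hq]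
      exact EuclideanDomain.mod_lt g hq
    · show Polynomial.aeval (dEnd y) (g % q) u = _
      conv_rhs => rw [← EuclideanDomain.div_add_mod g q]
      simp [hqy]
  have h3 : Module.finrank F (Polynomial.degreeLT F q.natDegree) = q.natDegree := by
    rw [LinearEquiv.finrank_eq (Polynomial.degreeLTEquiv F q.natDegree)]; simp
  have : Module.Finite F (Polynomial.degreeLT F q.natDegree) :=
    Module.Finite.equiv (Polynomial.degreeLTEquiv F q.natDegree).symm
  rw [← h3]
  exact LinearMap.finrank_le_finrank_of_surjective (f := Φ) hΦ

include hu hker in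
lemma exists_commuting (p m : ℕ) [Fact p.Prime] [CharP F p] (xs : Fin m → B)
    (hxs : Algebra.adjoin F (Set.range xs) = ⊤) (hdim : Module.finrank F B = p ^ m)
    (d y : Derivation F B B) (n : ℕ) (hn : ε ((dEnd y ^ n) u) ≠ 0) :
    ∃ D : Derivation F B B, ⁅y, D⁆ = 0 ∧ u • d = u • D := by
  have : Nontrivial B := ε.toRingHom.domain_nontrivial
  have htop := cyc_top u ε hu hker y n hn
  choose P hP using exists_deriv_pow_char_pow p y
  have huD : ∀ D D' : Derivation F B B, (∀ j, ε (D (xs j)) = ε (D' (xs j))) → u • D = u • D' := by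
    intro D D' h
    apply Derivation.ext_of_adjoin_eq_top _ hxs
    rintro _ ⟨j, rfl⟩
    simp only [Derivation.smul_apply, smul_eq_mul]
    rw [mul_comm, hu, mul_comm, hu, h]
  have hcomm : ∀ i, ⁅y, P i⁆ = 0 := by
    intro i
    ext b
    have h1 : ∀ c, P i c = (dEnd y ^ (p ^ i)) c := fun c => LinearMap.congr_fun (hP i) c
    have h2 : (dEnd y * dEnd y ^ (p ^ i)) b = (dEnd y ^ (p ^ i) * dEnd y) b := by
      rw [← pow_succ, ← pow_succ']
    rw [Derivation.commutator_apply, h1, h1]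
    simp only [Module.End.mul_apply] at h2
    simpa [sub_eq_zero] using h2
  let S : (Fin m → F) →ₗ[F] Derivation F B B := Fintype.linearCombination F (fun i : Fin m => P i)
  have hS : ∀ c, S c = ∑ i, c i • P i := fun c => rfl
  have hScomm : ∀ c, ⁅y, S c⁆ = 0 := by
    intro c
    rw [hS, lie_sum]
    exact Finset.sum_eq_zero fun i _ => (lie_smul (c i) y (P i)).trans (by rw [hcomm, smul_zero])
  let ev : (Fin m → F) →ₗ[F] (Fin m → F) :=
    { toFun := fun c j => ε (S c (xs j))
      map_add' := by intro a b; ext j; simp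
      map_smul' := by intro a b; ext j; simp }
  have hinj : Function.Injective ev := by
    rw [← LinearMap.ker_eq_bot, LinearMap.ker_eq_bot']
    intro c hc
    have h0 : u • S c = 0 := by
      have := huD (S c) 0 (fun j => by
        have : ε (S c (xs j)) = 0 := congrFun hc j
        simpa using this)
      simpa using this
    have hk : ∀ k, (dEnd y ^ k) u • S c = 0 := by
      intro k
      induction k with
      | zero => simpa using h0
      | succ k ih =>
        ext b
        have e1 : (dEnd y ^ k) u * S c b = 0 := DFunLike.congr_fun ih b
        have e2 : (dEnd y ^ k) u * S c (y b) = 0 := DFunLike.congr_fun ih (y b)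
        have e3 : y (S c b) - S c (y b) = 0 := by
          rw [← Derivation.commutator_apply, hScomm]; rfl
        have e4 := congrArg y e1
        rw [Derivation.leibniz, map_zero, sub_eq_zero.1 e3, smul_eq_mul, e2, zero_add,
          smul_eq_mul, mul_comm] at e4
        rw [pow_succ', Module.End.mul_apply]
        exact e4
    have hSc : S c = 0 := by
      have hun := isUnit_of_eps ε hker _ hn
      ext b
      have : (dEnd y ^ n) u * S c b = 0 := DFunLike.congr_fun (hk n) b
      simpa using (hun.mul_right_eq_zero).1 this
    by_contra hne
    obtain ⟨i₀, hi₀⟩ := Function.ne_iff.1 hne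
    let q : Polynomial F := ∑ i : Fin m, Polynomial.monomial (p ^ (i : ℕ)) (c i)
    have hp1 : 1 < p := (Fact.out : p.Prime).one_lt
    have hq : q ≠ 0 := by
      intro h
      have := congrArg (fun f => Polynomial.coeff f (p ^ (i₀ : ℕ))) h
      simp only [q, Polynomial.finsetSum_coeff, Polynomial.coeff_monomial, Polynomial.coeff_zero] at this
      rw [Finset.sum_eq_single i₀] at this
      · simp at this; exact hi₀ this
      · intro b _ hb
        rw [if_neg]
        intro h
        exact hb (Fin.ext (Nat.pow_right_injective hp1 h))
      · simp
    have hqy : Polynomial.aeval (dEnd y) q = 0 := by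
      have h1 : Polynomial.aeval (dEnd y) q = dEnd (S c) := by
        simp only [q, map_sum, Polynomial.aeval_monomial, hS]
        ext b
        simp only [LinearMap.sum_apply, Derivation.coeFn_coe]
        rw [← Derivation.coeFnAddMonoidHom_apply, map_sum, Finset.sum_apply]
        refine Finset.sum_congr rfl fun i _ => ?_
        simp [← hP, Module.algebraMap_end_apply]
      rw [h1, hSc]
      rfl
    have hdeg : q.natDegree < p ^ m := by
      apply lt_of_le_of_lt (b := p ^ (m - 1))
      · apply Polynomial.natDegree_sum_le_of_forall_le
        intro i _
        exact (Polynomial.natDegree_monomial_le _).trans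
          (Nat.pow_le_pow_right hp1.le (by have := i.2; omega))
      · exact Nat.pow_lt_pow_right hp1 (by have := i₀.2; omega)
    have := finrank_le_of_annihil u y htop q hq hqy
    omega
  obtain ⟨c, hc⟩ := (LinearMap.injective_iff_surjective.1 hinj) (fun j => ε (d (xs j)))
  exact ⟨S c, hScomm c, (huD _ _ fun j => congrFun hc j).symm⟩

include hu hker in
lemma caseA (p m : ℕ) [Fact p.Prime] [CharP F p] (xs : Fin m → B)
    (hxs : Algebra.adjoin F (Set.range xs) = ⊤) (hdim : Module.finrank F B = p ^ m)
    (d y : Derivation F B B) (n : ℕ) (hn : ε ((dEnd y ^ n) u) ≠ 0) :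
    Module.rank F (Submodule.span F
        {z : Derivation F B B | ∃ a ∈ LieSubalgebra.lieSpan F _ {u • d, y},
          ∃ b ∈ LieSubalgebra.lieSpan F _ {u • d, y}, ⁅a, b⁆ = z}) ≤ ((p ^ m : ℕ) : Cardinal) := by
  have : Module.Finite F B := Module.finite_of_finrank_pos (by
    rw [hdim]; exact pow_pos (Fact.out : p.Prime).pos _)
  obtain ⟨D, hD, hdD⟩ := exists_commuting u ε hu hker p m xs hxs hdim d y n hn
  rw [hdD]
  have hDy : ∀ b, y (D b) = D (y b) := by
    intro b
    have : ⁅y, D⁆ b = 0 := by rw [hD]; rfl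
    rwa [Derivation.commutator_apply, sub_eq_zero] at this
  let R : B →ₗ[F] Derivation F B B :=
    { toFun := fun b => b • D
      map_add' := fun a b => add_smul a b D
      map_smul' := fun c b => by simp [smul_assoc] }
  have hbr : ∀ (s s' : F) (b b' : B), ⁅s • y + b • D, s' • y + b' • D⁆ =
      (s • y b' - s' • y b + b * D b' - b' * D b) • D := by
    intro s s' b b'
    ext c
    simp only [Derivation.commutator_apply, Derivation.add_apply, Derivation.smul_apply, map_add,
      Derivation.leibniz, smul_eq_mul, hDy, Algebra.smul_def]
    simp only [Derivation.map_algebraMap]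
    ring
  let L' : LieSubalgebra F (Derivation F B B) :=
    { carrier := {z | ∃ (s : F) (b : B), z = s • y + b • D}
      add_mem' := by
        rintro _ _ ⟨s, b, rfl⟩ ⟨s', b', rfl⟩
        exact ⟨s + s', b + b', by rw [add_smul, add_smul]; abel⟩
      zero_mem' := ⟨0, 0, by simp⟩
      smul_mem' := by
        rintro c _ ⟨s, b, rfl⟩
        exact ⟨c * s, c • b, by rw [smul_add, mul_smul, smul_assoc]⟩
      lie_mem' := by
        rintro _ _ ⟨s, b, rfl⟩ ⟨s', b', rfl⟩
        exact ⟨0, _, by rw [hbr, zero_smul, zero_add]⟩ }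
  have hL : LieSubalgebra.lieSpan F _ {u • D, y} ≤ L' := by
    rw [LieSubalgebra.lieSpan_le]
    rintro z (rfl | rfl)
    · exact ⟨0, u, by simp⟩
    · exact ⟨1, 0, by simp⟩
  have hle : Submodule.span F
        {z : Derivation F B B | ∃ a ∈ LieSubalgebra.lieSpan F _ {u • D, y},
          ∃ b ∈ LieSubalgebra.lieSpan F _ {u • D, y}, ⁅a, b⁆ = z} ≤ LinearMap.range R := by
    rw [Submodule.span_le]
    rintro _ ⟨a, ha, b, hb, rfl⟩
    obtain ⟨s, b, rfl⟩ := hL ha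
    obtain ⟨s', b', rfl⟩ := hL hb
    exact ⟨_, (hbr s s' b b').symm⟩
  refine (Submodule.rank_mono hle).trans ((rank_range_le R).trans ?_)
  rw [← hdim, Module.finrank_eq_rank]

end abstractB

section regularElement
variable {F B : Type} [Field F] [CommRing B] [Algebra F B]

/-- Partial products of top powers of the generators. -/
def pprod (p m : ℕ) (xs : Fin m → B) (i : ℕ) : B := ∏ j : Fin m with j.1 < i, xs j ^ (p - 1)

lemma pprod_succ (p m : ℕ) (xs : Fin m → B) (i : Fin m) :
    pprod p m xs (i + 1) = pprod p m xs i * xs i ^ (p - 1) := by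
  unfold pprod
  have : (Finset.univ.filter fun j : Fin m => j.1 < i + 1) =
      insert i (Finset.univ.filter fun j : Fin m => j.1 < i) := by
    ext j
    simp [Fin.ext_iff]
    omega
  rw [this, Finset.prod_insert (by simp), mul_comm]

lemma regular_exists (p m : ℕ) [Fact p.Prime] [CharP F p] (xs : Fin m → B)
    (hxp : ∀ i, xs i ^ p = 0) (ε : B →ₐ[F] F)
    (hu : ∀ b, b * pprod p m xs m = ε b • pprod p m xs m)
    (y : Derivation F B B) (hy : ∀ i : Fin m, y (xs i) = pprod p m xs i) :
    ∃ n, ε ((dEnd y ^ n) (pprod p m xs m)) ≠ 0 := by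
  set u := pprod p m xs m with hudef
  have hmul := cyc_mul u ε hu y
  have hstab : ∀ b ∈ cyc u y, y b ∈ cyc u y := fun b hb => cyc_stable u y hb
  have key : ∀ i, i ≤ m → ∀ g : B, pprod p m xs i ∣ y g → pprod p m xs i * g ∈ cyc u y →
      g ∈ cyc u y := by
    intro i
    induction i with
    | zero =>
      intro _ g _ h
      simpa [pprod] using h
    | succ i ih =>
      intro hi g hg h
      specialize ih (by omega)
      let I : Fin m := ⟨i, hi⟩
      have hs : pprod p m xs (i + 1) = pprod p m xs i * xs I ^ (p - 1) := pprod_succ p m xs I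
      obtain ⟨c, hc⟩ := hg
      have hyk : ∀ k : ℕ, y (xs I ^ k * g) =
          pprod p m xs i * ((k : F) • (xs I ^ (k - 1) * g)) + xs I ^ k * pprod p m xs (i + 1) * c := by
        intro k
        rw [Derivation.leibniz, Derivation.leibniz_pow, hy, hc]
        simp only [smul_eq_mul, nsmul_eq_mul]
        rw [Algebra.smul_def, map_natCast]
        have : pprod p m xs (I : ℕ) = pprod p m xs i := rfl
        rw [this]
        ring
      have hdvd : ∀ k : ℕ, pprod p m xs i ∣ y (xs I ^ k * g) := by
        intro k
        rw [hyk, hs]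
        exact dvd_add (dvd_mul_right _ _) ⟨xs I ^ k * xs I ^ (p - 1) * c, by ring⟩
      have hz : ∀ k, 1 ≤ k → xs I ^ k * pprod p m xs (i + 1) = 0 := by
        intro k hk
        have hp := (Fact.out : p.Prime).one_lt
        have : xs I ^ k * xs I ^ (p - 1) = 0 := by
          rw [← pow_add, show k + (p - 1) = p + (k - 1) by omega, pow_add, hxp, zero_mul]
        rw [hs, mul_left_comm, this, mul_zero]
      have hdown : ∀ r, r ≤ p - 1 → xs I ^ (p - 1 - r) * g ∈ cyc u y := by
        intro r
        induction r with
        | zero =>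
          intro _
          apply ih _ (hdvd _)
          rw [hs] at h
          simpa [mul_assoc] using h
        | succ r ihr =>
          intro hr
          have h1 := hstab _ (ihr (by omega))
          rw [hyk, hz _ (by omega), zero_mul, add_zero, mul_smul_comm] at h1
          have hne : ((p - 1 - r : ℕ) : F) ≠ 0 := by
            rw [Ne, CharP.cast_eq_zero_iff F p]
            intro hdv
            have := Nat.le_of_dvd (by omega) hdv
            have hp := (Fact.out : p.Prime).one_lt
            omega
          apply ih _ (hdvd _)
          rw [show p - 1 - (r + 1) = p - 1 - r - 1 by omega]
          have h2 := Submodule.smul_mem _ ((p - 1 - r : ℕ) : F)⁻¹ h1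
          rwa [inv_smul_smul₀ hne] at h2
      simpa using hdown (p - 1) le_rfl
  have h1 : (1 : B) ∈ cyc u y := by
    apply key m le_rfl
    · simp
    · rw [mul_one]; exact cyc_pow_mem u y 0
  by_contra hcon
  push Not at hcon
  have : cyc u y ≤ LinearMap.ker ε.toLinearMap := by
    unfold cyc
    rw [Submodule.span_le]
    rintro _ ⟨n, rfl⟩
    exact hcon n
  have h2 := this h1
  simp at h2

end regularElement

section concrete
variable (F : Type) [Field F] (p m : ℕ)

/-- The defining ideal. -/
noncomputable abbrev tIdeal : Ideal (MvPolynomial (Fin m) F) :=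
  Ideal.span (Set.range fun i : Fin m => (X i : MvPolynomial (Fin m) F) ^ p)

/-- Augmentation. -/
noncomputable def tEps (hp : p ≠ 0) : TruncPoly F p m →ₐ[F] F :=
  Ideal.Quotient.liftₐ (tIdeal F p m) (MvPolynomial.aeval (fun _ => (0 : F))) (by
    intro a ha
    have : tIdeal F p m ≤ RingHom.ker (MvPolynomial.aeval (R := F) (fun _ : Fin m => (0 : F))) := by
      rw [Ideal.span_le]
      rintro _ ⟨i, rfl⟩
      simp [RingHom.mem_ker, hp]
    exact this ha)

lemma tEps_xVar (hp : p ≠ 0) (i : Fin m) : tEps F p m hp (xVar F p m i) = 0 := by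
  have : tEps F p m hp (xVar F p m i) = MvPolynomial.aeval (fun _ => (0 : F)) (X i : MvPolynomial (Fin m) F) := rfl
  rw [this]; simp

lemma adjoin_xVar : Algebra.adjoin F (Set.range (xVar F p m)) = ⊤ := by
  have h : (Set.range (xVar F p m)) =
      (Ideal.Quotient.mkₐ F (tIdeal F p m)) '' (Set.range (X : Fin m → MvPolynomial (Fin m) F)) := by
    rw [← Set.range_comp]; rfl
  rw [h, ← AlgHom.map_adjoin, MvPolynomial.adjoin_range_X, Algebra.map_top, AlgHom.range_eq_top]
  exact Ideal.Quotient.mkₐ_surjective F _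

lemma sub_eps_mem (hp : p ≠ 0) (b : TruncPoly F p m) :
    b - algebraMap F _ (tEps F p m hp b) ∈ Ideal.span (Set.range (xVar F p m)) := by
  have hb : b ∈ Algebra.adjoin F (Set.range (xVar F p m)) := by rw [adjoin_xVar]; trivial
  induction hb using Algebra.adjoin_induction with
  | mem b hb =>
    obtain ⟨i, rfl⟩ := hb
    rw [tEps_xVar, map_zero, sub_zero]
    exact Ideal.subset_span ⟨i, rfl⟩
  | algebraMap r => simp
  | add a b _ _ h h' =>
    have := add_mem h h'
    convert this using 1
    rw [map_add, map_add]; ring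
  | mul a b _ _ h h' =>
    have := add_mem (Ideal.mul_mem_left _ a h') (Ideal.mul_mem_right (algebraMap F _ (tEps F p m hp b)) _ h)
    convert this using 1
    rw [map_mul, map_mul]; ring

lemma xVar_pow (i : Fin m) : xVar F p m i ^ p = 0 := by
  have : xVar F p m i ^ p = Ideal.Quotient.mk (tIdeal F p m) (X i ^ p) := by
    rw [map_pow]; rfl
  rw [this, Ideal.Quotient.eq_zero_iff_mem]
  exact Ideal.subset_span ⟨i, rfl⟩

lemma xTau_eq : xTau F p m = pprod p m (xVar F p m) m := by
  have : (Finset.univ.filter fun j : Fin m => j.1 < m) = Finset.univ := by ext j; simp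
  unfold xTau pprod
  rw [this, map_prod]
  exact Finset.prod_congr rfl fun i _ => by rw [map_pow]; rfl

lemma tHker (hp : p ≠ 0) (b : TruncPoly F p m) (hb : tEps F p m hp b = 0) : IsNilpotent b := by
  have h := sub_eps_mem F p m hp b
  rw [hb, map_zero, sub_zero] at h
  have hle : Ideal.span (Set.range (xVar F p m)) ≤ nilradical (TruncPoly F p m) := by
    rw [Ideal.span_le]
    rintro _ ⟨i, rfl⟩
    exact ⟨p, xVar_pow F p m i⟩
  exact hle h

lemma tHu (hp : p ≠ 0) (b : TruncPoly F p m) :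
    b * xTau F p m = tEps F p m hp b • xTau F p m := by
  have h := sub_eps_mem F p m hp b
  have hx : ∀ i, xVar F p m i * xTau F p m = 0 := by
    intro i
    have h1 : xTau F p m = ∏ j : Fin m, xVar F p m j ^ (p - 1) := by
      unfold xTau
      rw [map_prod]
      exact Finset.prod_congr rfl fun i _ => by rw [map_pow]; rfl
    rw [h1, ← Finset.mul_prod_erase Finset.univ _ (Finset.mem_univ i), ← mul_assoc, ← pow_succ',
      Nat.sub_add_cancel (Nat.one_le_iff_ne_zero.2 hp), xVar_pow, zero_mul]
  have hz : ∀ c ∈ Ideal.span (Set.range (xVar F p m)), c * xTau F p m = 0 := by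
    intro c hc
    induction hc using Submodule.span_induction with
    | mem c hc =>
      obtain ⟨i, rfl⟩ := hc
      exact hx i
    | zero => rw [zero_mul]
    | add a b _ _ h h' => rw [add_mul, h, h', add_zero]
    | smul r a _ h => rw [smul_eq_mul, mul_assoc, h, mul_zero]
  have := hz _ h
  rw [sub_mul, sub_eq_zero] at this
  rw [this]
  exact (Algebra.smul_def (tEps F p m hp b) (xTau F p m)).symm

lemma mem_tIdeal (f : MvPolynomial (Fin m) F) : f ∈ tIdeal F p m ↔
    ∀ a : Fin m → Fin p, coeff (Finsupp.equivFunOnFinite.symm fun i => (a i : ℕ)) f = 0 := by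
  have h : (Set.range fun i : Fin m => (X i : MvPolynomial (Fin m) F) ^ p) =
      (fun s => monomial s (1 : F)) '' (Set.range fun i : Fin m => Finsupp.single i p) := by
    rw [← Set.range_comp]
    congr 1
    funext i
    exact X_pow_eq_monomial
  unfold tIdeal
  rw [h, mem_ideal_span_monomial_image]
  constructor
  · intro hf a
    by_contra hne
    obtain ⟨_, ⟨i, rfl⟩, hle⟩ := hf _ (mem_support_iff.2 hne)
    have := hle i
    simp at this
    have := (a i).2
    omega
  · intro hf s hs
    by_contra hcon
    push Not at hcon
    have hlt : ∀ i, s i < p := by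
      intro i
      by_contra hge
      exact hcon _ ⟨i, rfl⟩ (by simpa using hge)
    apply mem_support_iff.1 hs
    rw [← hf fun i => ⟨s i, hlt i⟩]
    congr 1
    ext i
    simp

lemma tDim : Module.finrank F (TruncPoly F p m) = p ^ m := by
  let e : (Fin m → Fin p) → (Fin m →₀ ℕ) := fun a => Finsupp.equivFunOnFinite.symm fun i => (a i : ℕ)
  have he : Function.Injective e := by
    intro a b hab
    have := Finsupp.equivFunOnFinite.symm.injective hab
    funext i
    exact Fin.ext (congrFun this i)
  let C : MvPolynomial (Fin m) F →ₗ[F] ((Fin m → Fin p) → F) :=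
    LinearMap.pi fun a => lcoeff F (e a)
  have hC : Function.Surjective C := by
    intro v
    refine ⟨∑ a, monomial (e a) (v a), ?_⟩
    funext b
    show coeff (e b) (∑ a, monomial (e a) (v a)) = v b
    rw [coeff_sum, Finset.sum_eq_single b]
    · simp
    · intro a _ hab
      rw [coeff_monomial, if_neg fun h => hab (he h)]
    · simp
  let π : MvPolynomial (Fin m) F →ₗ[F] TruncPoly F p m :=
    (Ideal.Quotient.mkₐ F (tIdeal F p m)).toLinearMap
  have hπ : Function.Surjective π := Ideal.Quotient.mkₐ_surjective F _
  have hk : LinearMap.ker C = LinearMap.ker π := by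
    ext f
    have h1 : f ∈ LinearMap.ker π ↔ f ∈ tIdeal F p m := Ideal.Quotient.eq_zero_iff_mem
    rw [h1, mem_tIdeal, LinearMap.mem_ker]
    exact funext_iff
  have E := (C.quotKerEquivOfSurjective hC).symm.trans
    ((Submodule.quotEquivOfEq _ _ hk).trans (π.quotKerEquivOfSurjective hπ))
  rw [← E.finrank_eq]
  simp

lemma exists_regular [CharP F p] : ∃ y : Derivation F (TruncPoly F p m) (TruncPoly F p m),
    ∀ i : Fin m, y (xVar F p m i) = pprod p m (xVar F p m) i := by
  let D : Derivation F (MvPolynomial (Fin m) F) (MvPolynomial (Fin m) F) :=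
    MvPolynomial.mkDerivation F fun i => pprod p m X i
  let π := Ideal.Quotient.mkₐ F (tIdeal F p m)
  have hπ : Function.Surjective π := Ideal.Quotient.mkₐ_surjective F _
  have hk : ∀ f, π f = 0 ↔ f ∈ tIdeal F p m := fun f => Ideal.Quotient.eq_zero_iff_mem
  have hD : ∀ f, π f = 0 → π (D f) = 0 := by
    intro f hf
    rw [hk] at hf ⊢
    induction hf using Submodule.span_induction with
    | mem c hc =>
      obtain ⟨i, rfl⟩ := hc
      simp [Derivation.leibniz_pow, nsmul_eq_mul]
    | zero => simp
    | add a b _ _ h h' => rw [map_add]; exact add_mem h h'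
    | smul r a ha h =>
      rw [smul_eq_mul, Derivation.leibniz]
      exact add_mem (Ideal.mul_mem_left _ _ h) (Ideal.mul_mem_right _ _ ha)
  refine ⟨Derivation.liftOfSurjective hπ hD, fun i => ?_⟩
  have h1 : xVar F p m i = π (X i) := rfl
  rw [h1, Derivation.liftOfSurjective_apply]
  simp only [D, mkDerivation_X, pprod, map_prod, map_pow]
  rfl

end concrete

/-- If `x = x^τ · d` is a homogeneous derivation of maximal degree in the Witt
algebra `W(m,1) = Der_F(B_m)` and `y` is arbitrary, then the derived subalgebra of the Lie
subalgebra generated by `x` and `y` has dimension at most `p^m`. -/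
theorem derived_of_two_generated_le
    (p : ℕ) (hp : p.Prime) (hp3 : 3 < p)
    (F : Type) [Field F] [IsAlgClosed F] [CharP F p] (m : ℕ) (hm : 1 ≤ m)
    (d : Derivation F (TruncPoly F p m) (TruncPoly F p m)) (hd : IsDegNegOne F p m d)
    (x : Derivation F (TruncPoly F p m) (TruncPoly F p m)) (hx : x = xTau F p m • d)
    (y : Derivation F (TruncPoly F p m) (TruncPoly F p m))
    (L : LieSubalgebra F (Derivation F (TruncPoly F p m) (TruncPoly F p m)))
    (hL : L = LieSubalgebra.lieSpan F _ {x, y}) :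
    Module.rank F
      (Submodule.span F
        {z : Derivation F (TruncPoly F p m) (TruncPoly F p m) |
          ∃ a ∈ L, ∃ b ∈ L, ⁅a, b⁆ = z}) ≤ ((p ^ m : ℕ) : Cardinal) := by
  subst hx hL
  have : Fact p.Prime := ⟨hp⟩
  have hp0 := hp.ne_zero
  obtain ⟨y₀, hy₀⟩ := exists_regular F p m
  have hu := tHu F p m hp0
  have hu' := hu
  rw [xTau_eq] at hu'
  obtain ⟨n, hn⟩ := regular_exists p m (xVar F p m) (xVar_pow F p m) (tEps F p m hp0) hu' y₀ hy₀
  rw [← xTau_eq] at hn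
  have hP : ∀ k : ℕ, (fun t : F => (dEnd (y₀ + t • (y - y₀)) ^ k) (xTau F p m)) ∈
      PolyFam F (TruncPoly F p m) := by
    intro k
    induction k with
    | zero => exact PolyFam.const _
    | succ k ih =>
      have hb := PolyFam.bilin (LinearMap.id : Module.End F (TruncPoly F p m) →ₗ[F] _)
        (PolyFam.line (F := F) (dEnd y₀) (dEnd (y - y₀))) ih
      convert hb using 1
      funext t
      rw [pow_succ']
      rfl
  obtain ⟨q, hq⟩ := PolyFam.poly (tEps F p m hp0).toLinearMap (hP n)
  have hq0 : q ≠ 0 := by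
    rintro rfl
    have := hq 0
    simp only [zero_smul, add_zero, Polynomial.eval_zero] at this
    exact hn this
  have : Infinite F := IsAlgClosed.instInfinite
  refine lie_rank_semicont (p ^ m) _ y₀ y q hq0 ?_
  intro t ht
  rw [← hq] at ht
  exact caseA (xTau F p m) (tEps F p m hp0) hu (tHker F p m hp0) p m (xVar F p m)
    (adjoin_xVar F p m) (tDim F p m) d _ n ht
end

section
/- Let p > 3 be a prime, F an algebraically closed field of characteristic p, and m ≥ 1. Let B_m = F[X_1, …, X_m]/(X_1^p, …, X_m^p) and W(m,1) = Der_F(B_m) the Witt algebra. Then W(m,1) is generated by one and a half elements — that is, for every nonzero x ∈ W(m,1) there exists y ∈ W(m,1) such that the smallest Lie subalgebra containing x and y is W(m,1) — if and only if m = 1. -/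
open MvPolynomial

set_option synthInstance.maxHeartbeats 1000000
set_option maxHeartbeats 1000000

namespace WittAux

section PF
variable {F : Type*} [Field F]

/-- polynomial functions from `F` to a vector space -/
def PF (F V : Type*) [Field F] [AddCommGroup V] [Module F V] : Submodule F (F → V) :=
  Submodule.span F {g | ∃ (n : ℕ) (v : V), g = fun s => s ^ n • v}

variable {V W U : Type*} [AddCommGroup V] [Module F V] [AddCommGroup W] [Module F W]
  [AddCommGroup U] [Module F U]

lemma PF.mono (n : ℕ) (v : V) : (fun s : F => s ^ n • v) ∈ PF F V :=
  Submodule.subset_span ⟨n, v, rfl⟩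

lemma PF.const (v : V) : (fun _ : F => v) ∈ PF F V := by
  simpa using PF.mono (F := F) 0 v

lemma PF.lin (l : V →ₗ[F] W) {g : F → V} (hg : g ∈ PF F V) : (fun s => l (g s)) ∈ PF F W := by
  induction hg using Submodule.span_induction with
  | mem x h =>
    obtain ⟨n, v, rfl⟩ := h
    simpa using PF.mono (F := F) n (l v)
  | zero => simp only [Pi.zero_apply, map_zero, LinearMap.zero_apply]; exact (PF F W).zero_mem
  | add x y _ _ hx hy => simp only [Pi.add_apply, map_add, LinearMap.add_apply]; exact (PF F W).add_mem hx hy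
  | smul a x _ hx => simp only [Pi.smul_apply, map_smul, LinearMap.smul_apply]; exact (PF F W).smul_mem a hx

lemma PF.bilin (l : V →ₗ[F] W →ₗ[F] U) {g : F → V} {h : F → W} (hg : g ∈ PF F V)
    (hh : h ∈ PF F W) : (fun s => l (g s) (h s)) ∈ PF F U := by
  induction hg using Submodule.span_induction with
  | mem x hx =>
    obtain ⟨n, v, rfl⟩ := hx
    induction hh using Submodule.span_induction with
    | mem x h =>
      obtain ⟨k, w, rfl⟩ := h
      simpa [smul_smul, pow_add] using PF.mono (F := F) (k + n) (l v w)
    | zero => simp only [Pi.zero_apply, map_zero, LinearMap.zero_apply]; exact (PF F U).zero_mem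
    | add x y _ _ hx hy => simp only [Pi.add_apply, map_add, LinearMap.add_apply]; exact (PF F U).add_mem hx hy
    | smul a x _ hx =>
      simp only [Pi.smul_apply, (l _).map_smul a]; exact (PF F U).smul_mem a hx
  | zero => simp only [Pi.zero_apply, map_zero, LinearMap.zero_apply]; exact (PF F U).zero_mem
  | add x y _ _ hx hy => simp only [Pi.add_apply, map_add, LinearMap.add_apply]; exact (PF F U).add_mem hx hy
  | smul a x _ hx => simp only [Pi.smul_apply, map_smul, LinearMap.smul_apply]; exact (PF F U).smul_mem a hx

lemma PF.poly {g : F → F} (hg : g ∈ PF F F) : ∃ q : Polynomial F, ∀ s, g s = q.eval s := by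
  induction hg using Submodule.span_induction with
  | mem x h =>
    obtain ⟨n, v, rfl⟩ := h
    exact ⟨Polynomial.X ^ n * Polynomial.C v, fun s => by simp; ring⟩
  | zero => exact ⟨0, by simp⟩
  | add x y _ _ hx hy =>
    obtain ⟨q, hq⟩ := hx
    obtain ⟨r, hr⟩ := hy
    exact ⟨q + r, by simp [hq, hr]⟩
  | smul a x _ hx =>
    obtain ⟨q, hq⟩ := hx
    exact ⟨a • q, by simp [hq]⟩

lemma PF.eq_zero [Infinite F] {g : F → V} (hg : g ∈ PF F V) (d : Polynomial F) (hd : d ≠ 0)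
    (h : ∀ s, d.eval s ≠ 0 → g s = 0) (s : F) : g s = 0 := by
  rw [← Module.forall_dual_apply_eq_zero_iff F]
  intro l
  obtain ⟨q, hq⟩ := PF.poly (PF.lin l hg)
  have : d * q = 0 := by
    apply Polynomial.funext
    intro t
    by_cases ht : d.eval t = 0
    · simp [ht]
    · simp [← hq, h t ht]
  have hq0 : q = 0 := by simpa [hd] using this
  simp [hq, hq0]

end PF

section Der
variable {F : Type*} [Field F] {B : Type*} [CommRing B] [Algebra F B]

lemma exists_pow_der [Nontrivial B] (p : ℕ) (hp : p.Prime) [CharP F p] (y : Derivation F B B) (n : ℕ) :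
    ∃ D : Derivation F B B, ∀ a, D a = y^[p ^ n] a := by
  have : Fact p.Prime := ⟨hp⟩
  set Y : Module.End F B := (y : B →ₗ[F] B) with hY
  have hYi : ∀ k a, (Y ^ k) a = y^[k] a := by
    intro k a
    rw [Module.End.pow_apply]; rfl
  let A : Module.End F (Module.End F B) := LinearMap.mulLeft F Y
  let C : Module.End F (Module.End F B) := LinearMap.mulRight F Y
  have hc : Commute A C := LinearMap.commute_mulLeft_right Y Y
  have : CharP (Module.End F (Module.End F B)) p :=
    charP_of_injective_algebraMap (algebraMap F (Module.End F (Module.End F B))).injective p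
  have h1 : (A - C) ^ p ^ n = A ^ p ^ n - C ^ p ^ n := by
    have := sub_pow_char_pow_of_commute (R := Module.End F (Module.End F B)) p n hc
    convert this using 2
  have h2 : ∀ k a, ((A - C) ^ k) (LinearMap.mulLeft F a) = LinearMap.mulLeft F (y^[k] a) := by
    intro k
    induction k with
    | zero => intro a; simp
    | succ k ih =>
      intro a
      rw [pow_succ, Module.End.mul_apply]
      have : (A - C) (LinearMap.mulLeft F a) = LinearMap.mulLeft F (y a) := by
        ext b
        simp [A, C, hY, mul_comm]
      rw [this, ih]; rfl
  refine ⟨Derivation.mk' (Y ^ p ^ n) ?_, ?_⟩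
  · intro a b
    have h3 := LinearMap.congr_fun (h2 (p ^ n) a) b
    rw [h1] at h3
    simp only [A, C, LinearMap.pow_mulLeft, LinearMap.pow_mulRight, LinearMap.sub_apply,
      LinearMap.mulLeft_apply, LinearMap.mulRight_apply, Module.End.mul_apply] at h3
    simp only [smul_eq_mul]
    rw [hYi _ a, mul_comm b, ← h3]
    ring
  · intro a; simp [hYi]

/-- application as bilinear map -/
def appl (F B : Type*) [Field F] [CommRing B] [Algebra F B] :
    Derivation F B B →ₗ[F] B →ₗ[F] B :=
  LinearMap.mk₂ F (fun D a => D a) (by simp) (by simp) (by simp) (by simp)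

/-- bracket as bilinear map -/
def brk (F B : Type*) [Field F] [CommRing B] [Algebra F B] :
    Derivation F B B →ₗ[F] Derivation F B B →ₗ[F] Derivation F B B :=
  LinearMap.mk₂ F (fun D a => ⁅D, a⁆) (by simp) (by simp) (by simp) (by simp)

lemma lie_smul' (D E : Derivation F B B) (c : F) : ⁅D, c • E⁆ = c • ⁅D, E⁆ := by
  ext a
  simp [Derivation.commutator_apply, smul_sub]

lemma lie_smul_smul (D : Derivation F B B) (b c : B) : 
    ∃ e : B, ⁅b • D, c • D⁆ = e • D := by
  refine ⟨b * D c - c * D b, ?_⟩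
  ext a
  simp [Derivation.commutator_apply]
  ring

lemma lie_smul_comm (D y : Derivation F B B) (h : ⁅y, D⁆ = 0) (c : B) : 
    ∃ e : B, ⁅y, c • D⁆ = e • D := by
  refine ⟨y c, ?_⟩
  ext a
  have := DFunLike.congr_fun h a
  simp [Derivation.commutator_apply] at this ⊢
  rw [sub_eq_zero] at this
  rw [this]
  ring

end Der

section Main
variable {F : Type*} [Field F] {B : Type*} [CommRing B] [Algebra F B]

theorem not_gen [IsAlgClosed F] [Nontrivial B] (p : ℕ) (hp : p.Prime) [CharP F p] (m : ℕ) (hm : 2 ≤ m)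
    (ξ : Fin m → B) (hadj : Algebra.adjoin F (Set.range ξ) = ⊤)
    (hder : ∀ v : Fin m → B, ∃ D : Derivation F B B, ∀ i, D (ξ i) = v i)
    (ε : B →ₐ[F] F) (hε : ∀ i, ε (ξ i) = 0) (f : B) (hf0 : f ≠ 0) (hf : ∀ b, f * b = ε b • f) :
    ∃ x : Derivation F B B, x ≠ 0 ∧ ∀ y, LieSubalgebra.lieSpan F _ {x, y} ≠ ⊤ := by
  have hext : ∀ D D' : Derivation F B B, (∀ i, D (ξ i) = D' (ξ i)) → D = D' := by
    intro D D' h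
    apply Derivation.ext_of_adjoin_eq_top _ hadj
    rintro _ ⟨i, rfl⟩
    exact h i
  have : Infinite F := IsAlgClosed.instInfinite
  let i0 : Fin m := ⟨0, by omega⟩
  let i1 : Fin m := ⟨1, by omega⟩
  have h01 : i0 ≠ i1 := by simp [i0, i1]
  obtain ⟨x, hx⟩ := hder (fun i => if i = i0 then f else 0)
  refine ⟨x, ?_, ?_⟩
  · rintro rfl
    apply hf0
    simpa using (hx i0).symm
  intro y htop
  -- regular element
  obtain ⟨z, hz⟩ : ∃ z : Derivation F B B,
      (Matrix.of fun (k i : Fin m) => ε (z^[p ^ (k : ℕ)] (ξ i))).det ≠ 0 := by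
    have hpm : 1 < p ^ m - 1 := by
      have : p ^ 2 ≤ p ^ m := Nat.pow_le_pow_right hp.pos hm
      have := hp.two_le
      have : 2 ^ 2 ≤ p ^ 2 := Nat.pow_le_pow_left this 2
      omega
    have : NeZero ((p ^ m - 1 : ℕ) : F) := ⟨by
      rw [Nat.cast_sub (Nat.one_le_pow _ _ hp.pos)]
      simp [CharP.cast_eq_zero F p, show m ≠ 0 by omega]⟩
    have : NeZero (p ^ m - 1) := ⟨by omega⟩
    obtain ⟨θ, hθ⟩ := HasEnoughRootsOfUnity.exists_primitiveRoot F (p ^ m - 1)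
    obtain ⟨z, hz⟩ := hder (fun i => θ ^ (i : ℕ) • (1 + ξ i))
    refine ⟨z, ?_⟩
    have hzi : ∀ n i, z^[n + 1] (ξ i) = (θ ^ (i : ℕ)) ^ (n + 1) • (1 + ξ i) := by
      intro n i
      induction n with
      | zero => simp [hz]
      | succ n ih =>
        rw [Function.iterate_succ_apply', ih]
        simp [hz, smul_smul, pow_succ]
    have : (Matrix.of fun (k i : Fin m) => ε (z^[p ^ (k : ℕ)] (ξ i))) =
        Matrix.vandermonde (fun k : Fin m => θ ^ p ^ (k : ℕ)) := by
      ext k i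
      obtain ⟨n, hn⟩ : ∃ n, p ^ (k : ℕ) = n + 1 := 
        ⟨p ^ (k : ℕ) - 1, by have := Nat.one_le_pow (k : ℕ) p hp.pos; omega⟩
      simp only [Matrix.of_apply, Matrix.vandermonde_apply, hn, hzi]
      simp [hε, ← pow_mul, mul_comm]
    rw [this, Matrix.det_vandermonde_ne_zero_iff]
    intro k l hkl
    have hlt : ∀ k : Fin m, p ^ (k : ℕ) < p ^ m - 1 := by
      intro k
      have h1 : p ^ ((k : ℕ) + 1) ≤ p ^ m := Nat.pow_le_pow_right hp.pos k.2
      rw [pow_succ] at h1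
      have h2 := hp.two_le
      have h3 := Nat.one_le_pow (k : ℕ) p hp.pos
      by_cases hk : (k : ℕ) = 0
      · simp [hk]; omega
      · have h4 : p ^ 1 ≤ p ^ (k : ℕ) := Nat.pow_le_pow_right hp.pos (by omega)
        have h5 : p ^ (k : ℕ) * 2 ≤ p ^ (k : ℕ) * p := Nat.mul_le_mul_left _ h2
        rw [pow_one] at h4
        omega
    have := hθ.pow_inj (hlt k) (hlt l) hkl
    exact Fin.ext (Nat.pow_right_injective hp.two_le this)
  let ys : F → Derivation F B B := fun s => y + s • (z - y)
  have hys0 : ys 0 = y := by simp [ys]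
  have hys1 : ys 1 = z := by simp [ys]
  have hysP : ys ∈ PF F (Derivation F B B) := by
    have := (PF F _).add_mem (PF.const (F := F) y) (PF.mono (F := F) 1 (z - y))
    simpa [ys, Pi.add_def] using this
  have hit : ∀ n a, (fun s => (ys s)^[n] a) ∈ PF F B := by
    intro n a
    induction n with
    | zero => simpa using PF.const a
    | succ n ih =>
      simp only [Function.iterate_succ_apply']
      exact PF.bilin (appl F B) hysP ih
  have hent : ∀ k i : Fin m, ∃ q : Polynomial F, ∀ s,
      ε ((ys s)^[p ^ (k : ℕ)] (ξ i)) = q.eval s := fun k i =>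
    PF.poly (PF.lin ε.toLinearMap (hit _ _))
  choose q hq using hent
  let d : Polynomial F := (Matrix.of q).det
  have hd : ∀ s, d.eval s =
      (Matrix.of fun (k i : Fin m) => ε ((ys s)^[p ^ (k : ℕ)] (ξ i))).det := by
    intro s
    have := RingHom.map_det (Polynomial.evalRingHom s) (Matrix.of q)
    simp only [Polynomial.coe_evalRingHom] at this
    rw [this]
    congr 1
    ext k i
    simp [hq]
  have hd0 : d ≠ 0 := by
    intro h
    apply hz
    have := hd 1
    rw [h, hys1] at this
    simpa using this.symm
  have hgood : ∀ s, ∃ D : Derivation F B B, d.eval s ≠ 0 → ⁅ys s, D⁆ = 0 ∧ f • D = x := by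
    intro s
    by_cases hs : d.eval s = 0
    · exact ⟨0, fun h => absurd hs h⟩
    rw [hd] at hs
    have hu := (Matrix.isUnit_iff_isUnit_det _).2 (isUnit_iff_ne_zero.2 hs)
    obtain ⟨c, hc⟩ := (Matrix.vecMul_surjective_iff_isUnit.2 hu) (Pi.single i0 1)
    choose E hE using fun k : Fin m => exists_pow_der p hp (ys s) k
    refine ⟨∑ k, c k • E k, fun _ => ⟨?_, ?_⟩⟩
    · rw [lie_sum]
      apply Finset.sum_eq_zero
      intro k _
      rw [lie_smul']
      have : ⁅ys s, E k⁆ = 0 := by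
        ext a
        rw [Derivation.commutator_apply, hE, hE, ← Function.iterate_succ_apply (ys s),
          ← Function.iterate_succ_apply' (ys s)]
        simp
      rw [this, smul_zero]
    · apply hext
      intro i
      have := congr_fun hc i
      simp only [Matrix.vecMul, dotProduct, Matrix.of_apply] at this
      rw [Derivation.smul_apply, smul_eq_mul, hf, hx]
      have h2 : ε ((∑ k, c k • E k) (ξ i)) = (Pi.single i0 1 : Fin m → F) i := by
        rw [← this]
        have : (∑ k, c k • E k) (ξ i) = ∑ k, c k • (E k (ξ i)) := by
          change appl F B (∑ k, c k • E k) (ξ i) = ∑ k, c k • (appl F B (E k) (ξ i))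
          simp
        rw [this]
        simp [hE]
      rw [h2]
      by_cases hi : i = i0
      · subst hi; simp
      · simp [hi]
  choose D hD using hgood
  let S : (F → Derivation F B B) → Prop := fun g =>
    g ∈ PF F (Derivation F B B) ∧ ∀ s, d.eval s ≠ 0 → ∃ b : B, g s = b • D s
  have Sadd : ∀ g h, S g → S h → S (g + h) := by
    rintro g h ⟨h1, h2⟩ ⟨h3, h4⟩
    refine ⟨(PF F _).add_mem h1 h3, fun s hs => ?_⟩
    obtain ⟨b, hb⟩ := h2 s hs
    obtain ⟨c, hc⟩ := h4 s hs
    exact ⟨b + c, by simp [hb, hc, add_smul]⟩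
  have Ssmul : ∀ (a : F) g, S g → S (a • g) := by
    rintro a g ⟨h1, h2⟩
    refine ⟨(PF F _).smul_mem a h1, fun s hs => ?_⟩
    obtain ⟨b, hb⟩ := h2 s hs
    exact ⟨a • b, by simp [hb, smul_assoc]⟩
  have Slie : ∀ g h, S g → S h → S (fun s => ⁅g s, h s⁆) := by
    rintro g h ⟨h1, h2⟩ ⟨h3, h4⟩
    refine ⟨PF.bilin (brk F B) h1 h3, fun s hs => ?_⟩
    obtain ⟨b, hb⟩ := h2 s hs
    obtain ⟨c, hc⟩ := h4 s hs
    beta_reduce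
    rw [hb, hc]
    exact lie_smul_smul _ _ _
  have Sy : ∀ g, S g → S (fun s => ⁅ys s, g s⁆) := by
    rintro g ⟨h1, h2⟩
    refine ⟨PF.bilin (brk F B) hysP h1, fun s hs => ?_⟩
    obtain ⟨b, hb⟩ := h2 s hs
    beta_reduce
    rw [hb]
    exact lie_smul_comm _ _ (hD s hs).1 _
  have key : ∀ (c c' : F) g g', S g → S g' →
      ∃ h, S h ∧ ⁅c • y + g 0, c' • y + g' 0⁆ = h 0 := by
    intro c c' g g' hg hg'
    refine ⟨_, Sadd _ _ (Sadd _ _ (Ssmul c _ (Sy _ hg')) (Ssmul (-c') _ (Sy _ hg)))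
      (Slie _ _ hg hg'), ?_⟩
    simp only [Pi.add_apply, Pi.smul_apply, hys0]
    simp only [add_lie, lie_add, smul_lie, lie_smul', lie_self, smul_zero, neg_smul]
    rw [← lie_skew y (g 0), smul_neg]
    simp
    abel
  let T : LieSubalgebra F (Derivation F B B) :=
    { carrier := {w | ∃ (c : F) (g : F → Derivation F B B), S g ∧ w = c • y + g 0}
      zero_mem' := ⟨0, 0, ⟨(PF F _).zero_mem, fun s _ => ⟨0, by simp⟩⟩, by simp⟩
      add_mem' := by
        rintro _ _ ⟨c, g, hg, rfl⟩ ⟨c', g', hg', rfl⟩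
        exact ⟨c + c', _, Sadd _ _ hg hg', by simp [add_smul]; abel⟩
      smul_mem' := by
        rintro a _ ⟨c, g, hg, rfl⟩
        exact ⟨a * c, _, Ssmul a _ hg, by simp [mul_smul]⟩
      lie_mem' := by
        rintro _ _ ⟨c, g, hg, rfl⟩ ⟨c', g', hg', rfl⟩
        obtain ⟨h, hh, e⟩ := key c c' g g' hg hg'
        exact ⟨0, h, hh, by simpa using e⟩ }
  have hT : ∀ w, w ∈ T := by
    have : LieSubalgebra.lieSpan F (Derivation F B B) {x, y} ≤ T := by
      rw [LieSubalgebra.lieSpan_le]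
      intro w hw
      rcases hw with rfl | hw
      · exact ⟨0, fun _ => w, ⟨PF.const w, fun s hs => ⟨f, (hD s hs).2.symm⟩⟩, by simp⟩
      · rw [Set.mem_singleton_iff] at hw
        subst hw
        exact ⟨1, 0, ⟨(PF F _).zero_mem, fun s _ => ⟨0, by simp⟩⟩, by simp⟩
    intro w
    apply this
    rw [htop]
    trivial
  have hT2 : ∀ w w' : Derivation F B B, ∃ g, S g ∧ ⁅w, w'⁆ = g 0 := by
    intro w w'
    obtain ⟨c, g, hg, e⟩ := hT w
    obtain ⟨c', g', hg', e'⟩ := hT w'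
    rw [e, e']
    exact key c c' g g' hg hg'
  have hpart : ∀ j : Fin m, ∃ g, S g ∧ ∀ i, g 0 (ξ i) = if i = j then 1 else 0 := by
    intro j
    obtain ⟨w, hw⟩ := hder (fun i => if i = j then 1 else 0)
    obtain ⟨w', hw'⟩ := hder (fun i => if i = j then ξ i else 0)
    obtain ⟨g, hg, e⟩ := hT2 w w'
    refine ⟨g, hg, fun i => ?_⟩
    rw [← e, Derivation.commutator_apply, hw, hw']
    by_cases hi : i = j
    · simp [hi, hw]
    · simp [hi]
  obtain ⟨g, hg, hg1⟩ := hpart i0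
  obtain ⟨h, hh, hh1⟩ := hpart i1
  have hP : (fun s => g s (ξ i0) * h s (ξ i1) - g s (ξ i1) * h s (ξ i0)) ∈ PF F B := by
    have ev : ∀ (g : F → Derivation F B B) (i : Fin m), S g → (fun s => g s (ξ i)) ∈ PF F B :=
      fun g i hg => PF.lin ((appl F B).flip (ξ i)) hg.1
    exact (PF F B).sub_mem
      (PF.bilin (LinearMap.mul F B) (ev g i0 hg) (ev h i1 hh))
      (PF.bilin (LinearMap.mul F B) (ev g i1 hg) (ev h i0 hh))
  have := PF.eq_zero hP d hd0 (by
    intro s hs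
    obtain ⟨b, hb⟩ := hg.2 s hs
    obtain ⟨c, hc⟩ := hh.2 s hs
    simp [hb, hc]
    ring) 0
  simp [hg1, hh1, h01, h01.symm] at this

end Main
end WittAux

namespace WittAux
section One
variable {F : Type*} [Field F] {L : Type*} [LieRing L] [LieAlgebra F L]

lemma mem_mul (E : Polynomial F →ₗ[F] L) (K : Submodule F L) (N : ℕ)
    (h : ∀ n, N ≤ n → E (Polynomial.X ^ n) ∈ K) (q : Polynomial F) :
    E (Polynomial.X ^ N * q) ∈ K := by
  induction q using Polynomial.induction_on' with
  | add q r hq hr => rw [mul_add, map_add]; exact K.add_mem hq hr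
  | monomial n a =>
    rw [← Polynomial.C_mul_X_pow_eq_monomial, ← mul_assoc, mul_comm _ (Polynomial.C a), mul_assoc,
      ← pow_add, ← Polynomial.smul_eq_C_mul, map_smul]
    exact K.smul_mem _ (h _ (by omega))

lemma memA (p : ℕ) (hp : p.Prime) [CharP F p] (E : Polynomial F →ₗ[F] L)
    (hbr : ∀ q r, ⁅E q, E r⁆ = E (q * r.derivative - r * q.derivative))
    (h0 : ∀ n, p ≤ n → E (Polynomial.X ^ n) = 0) (K : LieSubalgebra F L)
    (b : Polynomial F) (hb0 : b.coeff 0 ≠ 0) (hb : E b ∈ K)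
    (ht : E (Polynomial.X ^ (p - 1)) ∈ K) (n : ℕ) : E (Polynomial.X ^ n) ∈ K := by
  have hp1 := hp.one_lt
  have main : ∀ k n, p - 1 - k ≤ n → E (Polynomial.X ^ n) ∈ K := by
    intro k
    induction k with
    | zero =>
      intro n hn
      by_cases h : n = p - 1
      · rw [h]; exact ht
      · rw [h0 n (by omega)]; exact K.zero_mem
    | succ k ih =>
      intro j hj
      by_cases h : p - 1 - k ≤ j
      · exact ih j h
      have hj' : j + 1 = p - 1 - k := by omega
      have h1 := K.lie_mem hb (ih (j + 1) hj'.ge)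
      rw [hbr] at h1
      have h2 : b * (Polynomial.X ^ (j + 1)).derivative - Polynomial.X ^ (j + 1) * b.derivative =
          ((j + 1 : F) * b.coeff 0) • Polynomial.X ^ j +
          Polynomial.X ^ (j + 1) * (Polynomial.C (j + 1 : F) * b.divX - b.derivative) := by
        have hbc := Polynomial.divX_mul_X_add b
        rw [Polynomial.derivative_X_pow, Polynomial.smul_eq_C_mul]
        simp only [Nat.add_sub_cancel, Polynomial.C_mul, Nat.cast_add, Nat.cast_one]
        linear_combination (-(Polynomial.C (j + 1 : F)) * Polynomial.X ^ j) * hbc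
      rw [h2, map_add] at h1
      have h3 : E (Polynomial.X ^ (j + 1) * (Polynomial.C (j + 1 : F) * b.divX - b.derivative)) ∈ K :=
        mem_mul E K.toSubmodule (j + 1) (fun n hn => ih n (by omega)) _
      have h4 := K.sub_mem h1 h3
      rw [add_sub_cancel_right, map_smul] at h4
      have hne : ((j + 1 : F) * b.coeff 0) ≠ 0 := by
        apply mul_ne_zero _ hb0
        intro h5
        have : ((j + 1 : ℕ) : F) = 0 := by push_cast; exact h5
        rw [CharP.cast_eq_zero_iff F p] at this
        have := Nat.le_of_dvd (by omega) this
        omega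
      exact (K.toSubmodule.smul_mem_iff hne).1 h4
  exact main (p - 1) n (by omega)

lemma memC (p : ℕ) [CharP F p] (E : Polynomial F →ₗ[F] L)
    (hbr : ∀ q r, ⁅E q, E r⁆ = E (q * r.derivative - r * q.derivative))
    (K : LieSubalgebra F L) (h1 : E 1 ∈ K) (n : ℕ) (hn : n < p) (q : Polynomial F)
    (hq0 : q ≠ 0) (hqn : q.natDegree = n) (hq : E q ∈ K) : ∀ j ≤ n, E (Polynomial.X ^ j) ∈ K := by
  induction n generalizing q with
  | zero =>
    intro j hj
    obtain rfl : j = 0 := by omega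
    simpa using h1
  | succ n ih =>
    have hc : q.derivative.coeff n ≠ 0 := by
      rw [Polynomial.coeff_derivative]
      apply mul_ne_zero
      · rw [← hqn]; simpa using hq0
      · intro h5
        have : ((n + 1 : ℕ) : F) = 0 := by push_cast; exact h5
        rw [CharP.cast_eq_zero_iff F p] at this
        have := Nat.le_of_dvd (by omega) this
        omega
    have hd : E q.derivative ∈ K := by
      have := K.lie_mem h1 hq
      rw [hbr] at this
      simpa using this
    have ih' := ih (by omega) q.derivative (by intro h; simp [h] at hc) (by
      apply le_antisymm
      · have := Polynomial.natDegree_derivative_le q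
        omega
      · exact Polynomial.le_natDegree_of_ne_zero hc) hd
    intro j hj
    by_cases hjn : j ≤ n
    · exact ih' j hjn
    obtain rfl : j = n + 1 := by omega
    rw [Polynomial.as_sum_range' q (n + 2) (by omega), Finset.sum_range_succ, map_add] at hq
    have h3 : E (∑ i ∈ Finset.range (n + 1), Polynomial.monomial i (q.coeff i)) ∈ K := by
      rw [map_sum]
      apply K.toSubmodule.sum_mem
      intro i hi
      rw [← Polynomial.C_mul_X_pow_eq_monomial, ← Polynomial.smul_eq_C_mul, map_smul]
      exact K.smul_mem _ (ih' i (by simp at hi; omega))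
    have h4 := K.sub_mem hq h3
    rw [add_sub_cancel_left, ← Polynomial.C_mul_X_pow_eq_monomial, ← Polynomial.smul_eq_C_mul,
      map_smul] at h4
    refine (K.toSubmodule.smul_mem_iff ?_).1 h4
    rw [← hqn]; simpa using hq0

lemma br_mono (E : Polynomial F →ₗ[F] L)
    (hbr : ∀ q r, ⁅E q, E r⁆ = E (q * r.derivative - r * q.derivative)) (i j : ℕ) :
    ⁅E (Polynomial.X ^ i), E (Polynomial.X ^ j)⁆ = ((j : F) - i) • E (Polynomial.X ^ (i + j - 1)) := by
  rw [hbr, ← map_smul]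
  congr 1
  rw [Polynomial.smul_eq_C_mul]
  rcases i with _ | i <;> rcases j with _ | j
  · simp
  · simp
  · simp; ring
  · simp only [Polynomial.derivative_X_pow, Nat.add_sub_cancel,
      show i + 1 + (j + 1) - 1 = i + j + 1 by omega]
    simp only [Polynomial.C_sub]
    ring

theorem gen_one (p : ℕ) (hp : p.Prime) (hp3 : 3 < p) [CharP F p] (E : Polynomial F →ₗ[F] L)
    (hbr : ∀ q r, ⁅E q, E r⁆ = E (q * r.derivative - r * q.derivative))
    (h0 : ∀ n, p ≤ n → E (Polynomial.X ^ n) = 0) (hs : Function.Surjective E)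
    (x : L) (hx : x ≠ 0) : ∃ y, LieSubalgebra.lieSpan F L {x, y} = ⊤ := by
  have htop : ∀ K : LieSubalgebra F L, (∀ n, E (Polynomial.X ^ n) ∈ K) → K = ⊤ := by
    intro K hK
    rw [eq_top_iff]
    rintro w -
    obtain ⟨q, rfl⟩ := hs w
    have := mem_mul E K.toSubmodule 0 (fun n _ => hK n) q
    simpa using this
  obtain ⟨b, hbd, rfl⟩ : ∃ b : Polynomial F, b.natDegree < p ∧ E b = x := by
    obtain ⟨b, rfl⟩ := hs x
    have hm : (Polynomial.X ^ p : Polynomial F).Monic := Polynomial.monic_X_pow p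
    refine ⟨b %ₘ Polynomial.X ^ p, ?_, ?_⟩
    · have := Polynomial.natDegree_modByMonic_lt b hm (by
        intro h
        have := congrArg Polynomial.natDegree h
        simp at this
        omega)
      simpa using this
    · conv_rhs => rw [← Polynomial.modByMonic_add_div b (Polynomial.X ^ p), map_add]
      have := mem_mul E ⊥ p (fun n hn => by simp [h0 n hn]) (b /ₘ Polynomial.X ^ p)
      rw [Submodule.mem_bot] at this
      rw [this, add_zero]
  have hb0 : b ≠ 0 := by rintro rfl; simp at hx
  by_cases hc0 : b.coeff 0 ≠ 0
  · refine ⟨E (Polynomial.X ^ (p - 1)), htop _ ?_⟩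
    exact memA p hp E hbr h0 _ b hc0 (LieSubalgebra.subset_lieSpan (by simp))
      (LieSubalgebra.subset_lieSpan (by simp))
  push Not at hc0
  by_cases h3 : 3 ≤ b.natDegree
  · refine ⟨E 1, htop _ ?_⟩
    set K := LieSubalgebra.lieSpan F L {E b, E 1}
    have h1 : E 1 ∈ K := LieSubalgebra.subset_lieSpan (by simp)
    have hb : E b ∈ K := LieSubalgebra.subset_lieSpan (by simp)
    have hlow := memC p E hbr K h1 _ hbd b hb0 rfl hb
    have hup : ∀ k, E (Polynomial.X ^ (k + 3)) ∈ K := by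
      intro k
      induction k with
      | zero => exact hlow 3 h3
      | succ k ih =>
        by_cases hk : p ≤ k + 4
        · rw [h0 _ (by omega)]; exact K.zero_mem
        have h5 := K.lie_mem (hlow 2 (by omega)) ih
        rw [br_mono E hbr] at h5
        refine (K.toSubmodule.smul_mem_iff ?_).1
          (show _ • E (Polynomial.X ^ (k + 1 + 3)) ∈ K from by
            convert h5 using 4; omega)
        intro h6
        have : ((k + 1 : ℕ) : F) = 0 := by rw [← h6]; push_cast; ring
        rw [CharP.cast_eq_zero_iff F p] at this
        have := Nat.le_of_dvd (by omega) this
        omega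
    intro n
    by_cases hn : n ≤ 3
    · exact hlow n (by omega)
    · obtain ⟨k, rfl⟩ : ∃ k, n = k + 3 := ⟨n - 3, by omega⟩
      exact hup k
  -- degree at most two, zero constant term
  have hbe : E b = b.coeff 1 • E Polynomial.X + b.coeff 2 • E (Polynomial.X ^ 2) := by
    conv_lhs => rw [Polynomial.as_sum_range' b 3 (by omega)]
    have hmono : ∀ (n : ℕ) (a : F), Polynomial.monomial n a = a • Polynomial.X ^ n := by
      intro n a
      rw [← Polynomial.C_mul_X_pow_eq_monomial, Polynomial.smul_eq_C_mul]
    simp only [Finset.sum_range_succ, Finset.sum_range_zero, hc0, hmono, map_add, map_smul,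
      map_zero, zero_smul, zero_add, pow_one]
  have hne : b.coeff 1 ≠ 0 ∨ b.coeff 2 ≠ 0 := by
    by_contra! h
    rw [h.1, h.2] at hbe
    simp at hbe
    exact hx hbe
  have hcast : ∀ n : ℕ, 0 < n → n < p → (n : F) ≠ 0 := by
    intro n hn hnp h
    rw [CharP.cast_eq_zero_iff F p] at h
    have := Nat.le_of_dvd hn h
    omega
  have two : (2 : F) ≠ 0 := by simpa using hcast 2 (by omega) (by omega)
  have three : (3 : F) ≠ 0 := by simpa using hcast 3 (by omega) (by omega)
  have hpF : (p : F) = 0 := CharP.cast_eq_zero F p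
  have hpm : ((p - 1 : ℕ) : F) = -1 := by rw [Nat.cast_sub (by omega), hpF]; simp
  generalize b.coeff 1 = b1 at *
  generalize b.coeff 2 = b2 at *
  have hbm := br_mono E hbr
  have e10 := hbm 1 0
  have e20 := hbm 2 0
  have e1t := hbm 1 (p - 1)
  have e2t := hbm 2 (p - 1)
  have e12 := hbm 1 2
  have et1 := hbm (p - 1) 1
  have et2 := hbm (p - 1) 2
  rw [show 1 + (p - 1) - 1 = p - 1 by omega, hpm] at e1t
  rw [show p - 1 + 1 - 1 = p - 1 by omega, hpm] at et1
  rw [show 2 + (p - 1) - 1 = p by omega, h0 p le_rfl, smul_zero] at e2t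
  rw [show p - 1 + 2 - 1 = p by omega, h0 p le_rfl, smul_zero] at et2
  norm_num at e10 e20 e12 e1t et1
  refine ⟨E 1 + E (Polynomial.X ^ (p - 1)), htop _ ?_⟩
  set K := LieSubalgebra.lieSpan F L {E b, E 1 + E (Polynomial.X ^ (p - 1))}
  have hy : E 1 + E (Polynomial.X ^ (p - 1)) ∈ K := LieSubalgebra.subset_lieSpan (by simp)
  have hb : E b ∈ K := LieSubalgebra.subset_lieSpan (by simp)
  rw [hbe] at hb
  set a0 := E 1
  set a1 := E Polynomial.X
  set a2 := E (Polynomial.X ^ 2)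
  set t := E (Polynomial.X ^ (p - 1))
  suffices h : t ∈ K ∧ a0 ∈ K from memA p hp E hbr h0 K 1 (by simp) h.2 h.1
  suffices h : t ∈ K from ⟨h, by simpa using K.sub_mem hy h⟩
  have hw : (2 * b2) • a1 + b1 • t ∈ K := by
    have := K.smul_mem (-1 : F) (K.add_mem (K.lie_mem hb hy) (K.smul_mem b1 hy))
    convert this using 1
    simp only [add_lie, lie_add, smul_lie, e10, e20, e1t, e2t]
    module
  by_cases hb1 : b1 = 0
  · have hb2 : b2 ≠ 0 := by simpa [hb1] using hne
    rw [hb1, zero_smul, add_zero] at hw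
    have ha1 : a1 ∈ K := (K.toSubmodule.smul_mem_iff (mul_ne_zero two hb2)).1 hw
    have := K.smul_mem (-1 : F) (K.add_mem hy (K.lie_mem ha1 hy))
    convert this using 1
    simp only [lie_add, e10, e1t]
    module
  · have h5 := K.lie_mem hw hb
    have e11 : ⁅a1, a1⁆ = 0 := lie_self a1
    have h6 : (3 * b1 ^ 2) • t ∈ K := by
      have := K.sub_mem (K.add_mem h5 (K.smul_mem b1 hw)) (K.smul_mem (2 * b2) hb)
      convert this using 1
      simp only [add_lie, lie_add, smul_lie, lie_smul, e11, e12, et1, et2]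
      module
    exact (K.toSubmodule.smul_mem_iff (mul_ne_zero three (pow_ne_zero 2 hb1))).1 h6

end One
end WittAux
namespace WittAux
section OneDer
variable {F : Type*} [Field F] {B : Type*} [CommRing B] [Algebra F B]

theorem gen_one_der (p : ℕ) (hp : p.Prime) (hp3 : 3 < p) [CharP F p]
    (ξ : B) (hadj : Algebra.adjoin F {ξ} = ⊤) (hξ : ξ ^ p = 0)
    (D : Derivation F B B) (hD : D ξ = 1) (x : Derivation F B B) (hx : x ≠ 0) :
    ∃ y, LieSubalgebra.lieSpan F (Derivation F B B) {x, y} = ⊤ := by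
  have hext : ∀ D D' : Derivation F B B, D ξ = D' ξ → D = D' := by
    intro D D' h
    apply Derivation.ext_of_adjoin_eq_top _ hadj
    rintro _ rfl
    exact h
  let E : Polynomial F →ₗ[F] Derivation F B B :=
    { toFun := fun q => (Polynomial.aeval ξ q) • D
      map_add' := by intro q r; rw [map_add, add_smul]
      map_smul' := by intro a q; ext b; simp }
  have hEa : ∀ q, E q = (Polynomial.aeval ξ q) • D := fun q => rfl
  refine gen_one p hp hp3 E ?_ ?_ ?_ x hx
  · intro q r
    apply hext
    simp only [hEa, Derivation.commutator_apply, Derivation.smul_apply, hD, smul_eq_mul, mul_one,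
      map_sub, map_mul]
    rw [Derivation.map_aeval, Derivation.map_aeval, hD]
    simp
  · intro n hn
    rw [hEa]
    obtain ⟨k, rfl⟩ := Nat.exists_eq_add_of_le hn
    simp [pow_add, hξ]
  · intro w
    have : w ξ ∈ Algebra.adjoin F {ξ} := by rw [hadj]; trivial
    rw [Algebra.adjoin_singleton_eq_range_aeval] at this
    obtain ⟨q, hq⟩ := this
    refine ⟨q, hext _ _ ?_⟩
    have hq' : Polynomial.aeval ξ q = w ξ := hq
    simp [hEa, hD, hq']

end OneDer

section Concrete
variable (F : Type) [Field F] (p m : ℕ)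

/-- defining ideal -/
noncomputable abbrev idl : Ideal (MvPolynomial (Fin m) F) :=
    Ideal.span (Set.range fun i : Fin m => (X i : MvPolynomial (Fin m) F) ^ p)

/-- the variables -/
noncomputable def xi (i : Fin m) : TruncPoly F p m := Ideal.Quotient.mk (idl F p m) (X i)

lemma xi_pow (i : Fin m) : xi F p m i ^ p = 0 := by
  unfold xi
  rw [← map_pow]
  exact Ideal.Quotient.eq_zero_iff_mem.2 (Ideal.subset_span ⟨i, rfl⟩)

lemma adj : Algebra.adjoin F (Set.range (xi F p m)) = ⊤ := by
  have h1 := MvPolynomial.adjoin_range_X (σ := Fin m) (R := F)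
  have h2 := congrArg (Subalgebra.map (Ideal.Quotient.mkₐ F (idl F p m))) h1
  rw [AlgHom.map_adjoin, ← Set.range_comp, Algebra.map_top] at h2
  have h3 : (Ideal.Quotient.mkₐ F (idl F p m)).range = ⊤ :=
    (AlgHom.range_eq_top _).2 (Ideal.Quotient.mkₐ_surjective F _)
  rw [h3] at h2
  exact h2

lemma exists_der [CharP F p] (v : Fin m → TruncPoly F p m) :
    ∃ D : Derivation F (TruncPoly F p m) (TruncPoly F p m), ∀ i, D (xi F p m i) = v i := by
  choose w hw using fun i => Ideal.Quotient.mk_surjective (I := idl F p m) (v i)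
  let d : Derivation F (MvPolynomial (Fin m) F) (MvPolynomial (Fin m) F) := mkDerivation F w
  have hd : ∀ a, Ideal.Quotient.mkₐ F (idl F p m) a = 0 →
      Ideal.Quotient.mkₐ F (idl F p m) (d a) = 0 := by
    intro a ha
    have ha' : a ∈ idl F p m := Ideal.Quotient.eq_zero_iff_mem.1 ha
    refine Ideal.Quotient.eq_zero_iff_mem.2 ?_
    clear ha
    unfold idl at ha'
    induction ha' using Submodule.span_induction with
    | mem x h =>
      obtain ⟨i, rfl⟩ := h
      simp [Derivation.leibniz_pow]
    | zero => simp
    | add x y _ _ hx hy => rw [map_add]; exact (idl F p m).add_mem hx hy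
    | smul a x hx' hx =>
      rw [smul_eq_mul, Derivation.leibniz]
      refine (idl F p m).add_mem ((idl F p m).mul_mem_left _ hx) ?_
      rw [smul_eq_mul]
      exact (idl F p m).mul_mem_right _ hx'
  refine ⟨Derivation.liftOfSurjective (f := Ideal.Quotient.mkₐ F (idl F p m))
    (Ideal.Quotient.mkₐ_surjective F _) hd, fun i => ?_⟩
  have := Derivation.liftOfSurjective_apply (f := Ideal.Quotient.mkₐ F (idl F p m))
    (Ideal.Quotient.mkₐ_surjective F _) hd (X i)
  refine this.trans ?_
  rw [show d (X i) = w i from mkDerivation_X _ _ _]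
  exact hw i

/-- augmentation -/
noncomputable def aug (hp : p ≠ 0) : TruncPoly F p m →ₐ[F] F :=
  Ideal.Quotient.liftₐ (idl F p m) (aeval (fun _ => (0 : F))) (by
    intro a ha
    have : idl F p m ≤ RingHom.ker (aeval (fun _ => (0 : F)) : MvPolynomial (Fin m) F →ₐ[F] F) := by
      unfold idl
      rw [Ideal.span_le]
      rintro _ ⟨i, rfl⟩
      simp [hp]
    exact this ha)

lemma aug_xi (hp : p ≠ 0) (i : Fin m) : aug F p m hp (xi F p m i) = 0 := by
  have : aug F p m hp (xi F p m i) = aeval (fun _ => (0 : F)) (X i : MvPolynomial (Fin m) F) := rfl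
  rw [this]; simp

lemma exists_socle (hp : p ≠ 0) : ∃ f : TruncPoly F p m, f ≠ 0 ∧
    ∀ b, f * b = aug F p m hp b • f := by
  refine ⟨Ideal.Quotient.mk (idl F p m)
    (monomial (Finsupp.equivFunOnFinite.symm (fun _ => p - 1)) 1), ?_, ?_⟩
  · intro h
    have h1 := Ideal.Quotient.eq_zero_iff_mem.1 h
    have h2 : idl F p m = Ideal.span ((fun s => monomial s (1 : F)) ''
        (Set.range fun i : Fin m => Finsupp.single i p)) := by
      unfold idl
      congr 1
      rw [← Set.range_comp]
      congr 1
      ext1 i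
      simp [X_pow_eq_monomial]
    rw [h2, mem_ideal_span_monomial_image] at h1
    obtain ⟨_, ⟨i, rfl⟩, hi⟩ := h1 (Finsupp.equivFunOnFinite.symm (fun _ => p - 1)) (by
      classical
      simp [support_monomial])
    have := hi i
    simp at this
    omega
  · intro b
    have hb : b ∈ Algebra.adjoin F (Set.range (xi F p m)) := by rw [adj]; trivial
    induction hb using Algebra.adjoin_induction with
    | mem x hx =>
      obtain ⟨i, rfl⟩ := hx
      rw [aug_xi, zero_smul]
      unfold xi
      rw [← map_mul]
      refine Ideal.Quotient.eq_zero_iff_mem.2 ?_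
      rw [show (X i : MvPolynomial (Fin m) F) = monomial (Finsupp.single i 1) 1 from rfl,
        monomial_mul]
      have : (Finsupp.equivFunOnFinite.symm (fun _ => p - 1) : Fin m →₀ ℕ) + Finsupp.single i 1 =
          ((Finsupp.equivFunOnFinite.symm (fun _ => p - 1) : Fin m →₀ ℕ) -
            Finsupp.single i (p - 1)) + Finsupp.single i p := by
        ext j
        by_cases hj : i = j
        · subst hj; simp; omega
        · simp [hj]
      rw [this, ← mul_one (1 : F), ← mul_one (1 : F), ← monomial_mul]
      apply Ideal.mul_mem_left
      refine Ideal.subset_span ⟨i, ?_⟩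
      simp [X_pow_eq_monomial]
    | algebraMap r =>
      rw [AlgHom.commutes, mul_comm, ← Algebra.smul_def]
      rfl
    | add x y _ _ hx hy => rw [mul_add, hx, hy, map_add, add_smul]
    | mul x y _ _ hx hy =>
      rw [← mul_assoc, hx, smul_mul_assoc, hy, map_mul, smul_smul]

end Concrete
end WittAux

/-- The Witt algebra `W(m,1) = Der_F(B_m)` over an algebraically closed field of
characteristic `p > 3` is generated by one and a half elements if and only if `m = 1`. -/
theorem wittAlgebra_one_and_a_half_iff_m_eq_one
    (p : ℕ) (hp : p.Prime) (hp3 : 3 < p)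
    (F : Type) [Field F] [IsAlgClosed F] [CharP F p] (m : ℕ) (hm : 1 ≤ m) :
    (∀ x : Derivation F (TruncPoly F p m) (TruncPoly F p m), x ≠ 0 →
        ∃ y : Derivation F (TruncPoly F p m) (TruncPoly F p m),
          LieSubalgebra.lieSpan F (Derivation F (TruncPoly F p m) (TruncPoly F p m)) {x, y}
            = ⊤) ↔
      m = 1 := by
  constructor
  · intro h
    by_contra hne
    obtain ⟨f, hf0, hf⟩ := WittAux.exists_socle F p m hp.ne_zero
    have : Nontrivial (TruncPoly F p m) := ⟨f, 0, hf0⟩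
    obtain ⟨x, hx, hxy⟩ := WittAux.not_gen p hp m (by omega) (WittAux.xi F p m)
      (WittAux.adj F p m) (WittAux.exists_der F p m) (WittAux.aug F p m hp.ne_zero)
      (WittAux.aug_xi F p m hp.ne_zero) f hf0 hf
    obtain ⟨y, hy⟩ := h x hx
    exact hxy y hy
  · rintro rfl x hx
    obtain ⟨D, hD⟩ := WittAux.exists_der F p 1 (fun _ => 1)
    refine WittAux.gen_one_der p hp hp3 (WittAux.xi F p 1 0) ?_ (WittAux.xi_pow F p 1 0) D (hD 0)
      x hx
    have h1 : Set.range (WittAux.xi F p 1) = {WittAux.xi F p 1 0} := Set.range_unique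
    rw [← h1]
    exact WittAux.adj F p 1
end
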